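/- arXiv:1212.1392 — 2 statements merged into one kernel-verified Lean document; each statement's English description precedes it below -/
import Mathlib

section
/- Let p be a prime with p ≡ 1 (mod 4) and 2^{p−1} ≡ 1 (mod p^2), let q1 be a prime factor of p − 2 such that q1^{p−1} ≢ 1 (mod p^2), and let n be a composite number such that K = ℚ(√(4q1^2 − p^n)) ≠ ℚ(√(−1)). Then p splits in the imaginary quadratic field K, and for any prime ideal ℘ of the ring of integers of K lying over p, the order of the ideal class of ℘ in the ideal class group of K is exactly n. -/
theorem exists_int_coeffs_small_sums {ι : Type*} [Fintype ι] [Nonempty ι] (u : ι → ℕ → ℝ)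
    {G : ℝ} (hG : 0 < G) {E : ℕ} (hE : 3 ≤ E) {x n : ℕ}
    (hu : ∀ j m, |u j m| ≤ G / (E : ℝ) ^ m) (hcard : n * (n + 3) ≤ 2 * (Fintype.card ι * x)) :
    ∃ c : ι → ℤ, c ≠ 0 ∧ (∀ j, |(c j : ℝ)| ≤ (E : ℝ) ^ x) ∧
      ∀ m < n, |∑ j, (c j : ℝ) * u j m| ≤ Fintype.card ι * (E : ℝ) ^ x * G / (E : ℝ) ^ n := by
  classical
  have hE0 : (0 : ℝ) < E := by positivity
  have hT : 0 < Fintype.card ι := Fintype.card_pos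
  have hT' : (0 : ℝ) < Fintype.card ι := by exact_mod_cast hT
  set ε : ℝ := Fintype.card ι * (E : ℝ) ^ x * G / (E : ℝ) ^ n with hε
  have hε0 : 0 < ε := by positivity
  let φ : (ι → Fin (E ^ x + 1)) → (Fin n → ℤ) :=
    fun c m => ⌊(∑ j, ((c j : ℕ) : ℝ) * u j m) / ε⌋
  let S : Finset (Fin n → ℤ) :=
    Fintype.piFinset fun m => Finset.Icc (-(E : ℤ) ^ (n - (m : ℕ))) ((E : ℤ) ^ (n - (m : ℕ)))
  have hmaps : ∀ c ∈ (Finset.univ : Finset (ι → Fin (E ^ x + 1))), φ c ∈ S := by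
    intro c _
    rw [Fintype.mem_piFinset]
    intro m
    have hb : |(∑ j, ((c j : ℕ) : ℝ) * u j m) / ε| ≤ (E : ℝ) ^ (n - (m : ℕ)) := by
      rw [abs_div, abs_of_pos hε0, div_le_iff₀ hε0]
      calc |∑ j, ((c j : ℕ) : ℝ) * u j m| ≤ ∑ j, |((c j : ℕ) : ℝ) * u j m| :=
            Finset.abs_sum_le_sum_abs _ _
        _ ≤ ∑ _j : ι, (E : ℝ) ^ x * (G / (E : ℝ) ^ (m : ℕ)) := by
            refine Finset.sum_le_sum fun j _ => ?_
            rw [abs_mul]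
            refine mul_le_mul ?_ (hu j m) (abs_nonneg _) (by positivity)
            rw [Nat.abs_cast]
            exact_mod_cast Nat.lt_succ_iff.mp (c j).2
        _ = (E : ℝ) ^ (n - (m : ℕ)) * ε := by
            have h : (E : ℝ) ^ n = (E : ℝ) ^ (n - (m : ℕ)) * (E : ℝ) ^ (m : ℕ) := by
              rw [← pow_add, Nat.sub_add_cancel m.2.le]
            rw [Finset.sum_const, Finset.card_univ, nsmul_eq_mul, hε, h]
            field_simp
    rw [abs_le] at hb
    rw [Finset.mem_Icc]
    constructor
    · exact Int.le_floor.mpr (by push_cast; exact hb.1)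
    · have := (Int.floor_le ((∑ j, ((c j : ℕ) : ℝ) * u j m) / ε)).trans hb.2
      exact_mod_cast this
  have hlt : S.card < (Finset.univ : Finset (ι → Fin (E ^ x + 1))).card := by
    have h1 : S.card ≤ ∏ m : Fin n, E ^ (n - (m : ℕ) + 1) := by
      rw [Fintype.card_piFinset]
      refine Finset.prod_le_prod' fun m _ => ?_
      rw [Int.card_Icc]
      have h3 : 1 ≤ E ^ (n - (m : ℕ)) := Nat.one_le_pow _ _ (by omega)
      have h4 : E ^ (n - (m : ℕ) + 1) = E ^ (n - (m : ℕ)) * E := pow_succ _ _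
      have h5 : E ^ (n - (m : ℕ)) * 3 ≤ E ^ (n - (m : ℕ)) * E := Nat.mul_le_mul_left _ hE
      have h6 : ((E : ℤ) ^ (n - (m : ℕ)) + 1 - -(E : ℤ) ^ (n - (m : ℕ))).toNat
          = 2 * E ^ (n - (m : ℕ)) + 1 := by
        rw [show ((E : ℤ) ^ (n - (m : ℕ)) + 1 - -(E : ℤ) ^ (n - (m : ℕ)))
          = ((2 * E ^ (n - (m : ℕ)) + 1 : ℕ) : ℤ) by push_cast; ring]
        exact Int.toNat_natCast _
      rw [h6]
      omega
    have h2 : ∏ m : Fin n, E ^ (n - (m : ℕ) + 1) = E ^ (∑ m : Fin n, (n - (m : ℕ) + 1)) :=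
      Finset.prod_pow_eq_pow_sum _ _ _
    have h3 : 2 * ∑ m : Fin n, (n - (m : ℕ) + 1) = n * (n + 3) := by
      rw [Fin.sum_univ_eq_sum_range (fun m => n - m + 1) n,
        ← Finset.sum_range_reflect]
      have : ∑ j ∈ Finset.range n, (n - (n - 1 - j) + 1) = ∑ j ∈ Finset.range n, (j + 2) := by
        refine Finset.sum_congr rfl fun j hj => ?_
        have := Finset.mem_range.mp hj
        omega
      rw [this]
      clear * -
      induction n with
      | zero => simp
      | succ k ih => rw [Finset.sum_range_succ, mul_add, ih]; ring
    have h4 : E ^ (∑ m : Fin n, (n - (m : ℕ) + 1)) ≤ E ^ (x * Fintype.card ι) :=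
      Nat.pow_le_pow_right (by omega) (by nlinarith)
    rw [Finset.card_univ, Fintype.card_fun, Fintype.card_fin]
    calc S.card ≤ E ^ (x * Fintype.card ι) := (h1.trans h2.le).trans h4
      _ = (E ^ x) ^ Fintype.card ι := pow_mul _ _ _
      _ < (E ^ x + 1) ^ Fintype.card ι := Nat.pow_lt_pow_left (Nat.lt_succ_self _) hT.ne'
  obtain ⟨c₁, -, c₂, -, hne, heq⟩ := Finset.exists_ne_map_eq_of_card_lt_of_maps_to hlt hmaps
  refine ⟨fun j => (c₁ j : ℤ) - (c₂ j : ℤ), ?_, ?_, ?_⟩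
  · intro h
    refine hne (funext fun j => Fin.ext ?_)
    have := congrFun h j
    simp only [Pi.zero_apply] at this
    omega
  · intro j
    have h1 : ((c₁ j : ℕ) : ℝ) ≤ (E : ℝ) ^ x := by exact_mod_cast Nat.lt_succ_iff.mp (c₁ j).2
    have h2 : ((c₂ j : ℕ) : ℝ) ≤ (E : ℝ) ^ x := by exact_mod_cast Nat.lt_succ_iff.mp (c₂ j).2
    have h3 : (0 : ℝ) ≤ ((c₁ j : ℕ) : ℝ) := Nat.cast_nonneg _
    have h4 : (0 : ℝ) ≤ ((c₂ j : ℕ) : ℝ) := Nat.cast_nonneg _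
    push_cast
    rw [abs_le]
    constructor <;> linarith
  · intro m hm
    have h1 := congrFun heq ⟨m, hm⟩
    have h2 := Int.abs_sub_lt_one_of_floor_eq_floor h1
    rw [← sub_div, abs_div, abs_of_pos hε0, div_lt_one hε0, ← Finset.sum_sub_distrib] at h2
    refine le_of_eq_of_le ?_ h2.le
    congr 1
    refine Finset.sum_congr rfl fun j _ => ?_
    push_cast
    ring

theorem abs_sum_mul_le_of_small_sums {ι : Type*} [Fintype ι] [Nonempty ι] {u : ι → ℕ → ℝ}
    {G : ℝ} (hG : 0 < G) {E : ℕ} (hE : 3 ≤ E) {x n : ℕ}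
    (hu : ∀ j m, |u j m| ≤ G / (E : ℝ) ^ m) {c : ι → ℤ}
    (hc : ∀ j, |(c j : ℝ)| ≤ (E : ℝ) ^ x)
    (hs : ∀ m < n, |∑ j, (c j : ℝ) * u j m| ≤
      Fintype.card ι * (E : ℝ) ^ x * G / (E : ℝ) ^ n)
    {y : ℝ} (hy : |y| ≤ 1) {f : ι → ℝ} (hf : ∀ j, HasSum (fun m => u j m * y ^ m) (f j)) :
    |∑ j, (c j : ℝ) * f j| ≤
      (n + 2) * (Fintype.card ι * (E : ℝ) ^ x * G / (E : ℝ) ^ n) := by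
  have hE3 : (3 : ℝ) ≤ E := by exact_mod_cast hE
  have hE0 : (0 : ℝ) < E := by linarith
  set H : ℝ := Fintype.card ι * (E : ℝ) ^ x * G with hH
  have hH0 : 0 ≤ H := by positivity
  have hsum : HasSum (fun m => (∑ j, (c j : ℝ) * u j m) * y ^ m) (∑ j, (c j : ℝ) * f j) := by
    have := hasSum_sum (s := (Finset.univ : Finset ι)) fun j _ => (hf j).mul_left (c j : ℝ)
    refine this.congr_fun ?_ |> fun h => h
    intro m
    rw [Finset.sum_mul]
    exact Finset.sum_congr rfl fun j _ => by ring
  have hym : ∀ m : ℕ, |y ^ m| ≤ 1 := fun m => by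
    rw [abs_pow]; exact pow_le_one₀ (abs_nonneg _) hy
  have hterm : ∀ m, |(∑ j, (c j : ℝ) * u j m) * y ^ m| ≤ H * (1 / (E : ℝ)) ^ m := by
    intro m
    rw [abs_mul]
    have h1 : |∑ j, (c j : ℝ) * u j m| ≤ H * (1 / (E : ℝ)) ^ m := by
      calc |∑ j, (c j : ℝ) * u j m| ≤ ∑ j, |(c j : ℝ) * u j m| := Finset.abs_sum_le_sum_abs _ _
        _ ≤ ∑ _j : ι, (E : ℝ) ^ x * (G / (E : ℝ) ^ m) := by
            refine Finset.sum_le_sum fun j _ => ?_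
            rw [abs_mul]
            exact mul_le_mul (hc j) (hu j m) (abs_nonneg _) (by positivity)
        _ = H * (1 / (E : ℝ)) ^ m := by
            rw [Finset.sum_const, Finset.card_univ, nsmul_eq_mul, hH, one_div, inv_pow]
            ring
    calc _ ≤ |∑ j, (c j : ℝ) * u j m| * 1 :=
          mul_le_mul_of_nonneg_left (hym m) (abs_nonneg _)
      _ ≤ _ := by rw [mul_one]; exact h1
  have hE1 : 1 / (E : ℝ) < 1 := by rw [div_lt_one hE0]; linarith
  have hgeo := (hasSum_geometric_of_lt_one (r := 1 / (E : ℝ)) (by positivity) hE1).mul_left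
    (H * (1 / (E : ℝ)) ^ n)
  have htail : |∑' m, (∑ j, (c j : ℝ) * u j (m + n)) * y ^ (m + n)| ≤
      H * (1 / (E : ℝ)) ^ n * (1 - 1 / (E : ℝ))⁻¹ := by
    rw [← Real.norm_eq_abs]
    refine tsum_of_norm_bounded hgeo fun m => ?_
    rw [Real.norm_eq_abs]
    refine (hterm (m + n)).trans (le_of_eq ?_)
    rw [pow_add]; ring
  have hinv : (1 - 1 / (E : ℝ))⁻¹ ≤ 2 := by
    rw [inv_le_comm₀ (by linarith) two_pos]
    have : 1 / (E : ℝ) ≤ 1 / 3 := one_div_le_one_div_of_le (by norm_num) hE3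
    norm_num at this ⊢
    linarith
  have hHn : H * (1 / (E : ℝ)) ^ n = H / (E : ℝ) ^ n := by
    rw [one_div, inv_pow]; rfl
  rw [hHn] at htail
  have hHn0 : 0 ≤ H / (E : ℝ) ^ n := by positivity
  rw [← hsum.tsum_eq, ← hsum.summable.sum_add_tsum_nat_add n]
  refine (abs_add_le _ _).trans ?_
  have hfirst : |∑ m ∈ Finset.range n, (∑ j, (c j : ℝ) * u j m) * y ^ m| ≤
      n * (H / (E : ℝ) ^ n) := by
    refine (Finset.abs_sum_le_sum_abs _ _).trans ?_
    rw [← nsmul_eq_mul]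
    nth_rewrite 2 [← Finset.card_range n]
    refine Finset.sum_le_card_nsmul _ _ _ fun m hm => ?_
    rw [abs_mul]
    calc _ ≤ |∑ j, (c j : ℝ) * u j m| * 1 :=
          mul_le_mul_of_nonneg_left (hym m) (abs_nonneg _)
      _ ≤ _ := by rw [mul_one]; exact hs m (Finset.mem_range.mp hm)
  have : H / (E : ℝ) ^ n * (1 - 1 / (E : ℝ))⁻¹ ≤ H / (E : ℝ) ^ n * 2 :=
    mul_le_mul_of_nonneg_left hinv hHn0
  linarith

open Polynomial in
theorem polynomials_eq_zero_of_exponential_sums {F ι : Type*} [Field F] [Fintype ι]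
    (Q : ι → F[X]) (y : ι → F) (hy : Function.Injective y) (hy0 : ∀ b, y b ≠ 0) (δ : F) {D : ℕ}
    (hQ : ∀ b, (Q b).natDegree ≤ D) (S : Finset F) (hS : Fintype.card ι * D < S.card)
    (h : ∀ w ∈ S, ∃ v : ι → F, (∀ b, v b ≠ 0) ∧
      ∀ i < Fintype.card ι, ∑ b, (Q b).eval (w + δ * (i : ℕ)) * y b ^ i * v b = 0) :
    ∀ b, Q b = 0 := by
  classical
  by_contra! hne
  obtain ⟨b₀, hb₀⟩ := hne
  let B := {b : ι // Q b ≠ 0}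
  set L := Fintype.card B with hL
  have hLle : L ≤ Fintype.card ι := Fintype.card_subtype_le _
  let e : Fin L ≃ B := (Fintype.equivFin B).symm
  let R : Fin L → F[X] := fun k => Q (e k)
  let z : Fin L → F := fun k => y (e k)
  have hz : Function.Injective z := fun k l hkl =>
    e.injective (Subtype.ext (hy hkl))
  have hR : ∀ k, R k ≠ 0 := fun k => (e k).2
  let M : Matrix (Fin L) (Fin L) F[X] :=
    Matrix.of fun i k => (R k).comp (X + C (δ * ((i : ℕ) : F))) * C (z k ^ (i : ℕ))
  have hMdeg : ∀ i k, (M i k).natDegree = (R k).natDegree := fun i k => by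
    simp only [M, Matrix.of_apply]
    rw [natDegree_mul_C (pow_ne_zero _ (hy0 _)), natDegree_comp, natDegree_X_add_C, mul_one]
  have hMlead : ∀ i k, (M i k).leadingCoeff = z k ^ (i : ℕ) * (R k).leadingCoeff := fun i k => by
    simp only [M, Matrix.of_apply]
    rw [leadingCoeff_mul, leadingCoeff_C,
      leadingCoeff_comp (by rw [natDegree_X_add_C]; exact one_ne_zero),
      leadingCoeff_X_add_C, one_pow, mul_one, mul_comm]
  have hM0 : ∀ i k, M i k ≠ 0 := fun i k => by
    rw [← leadingCoeff_ne_zero, hMlead]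
    exact mul_ne_zero (pow_ne_zero _ (hy0 _)) (leadingCoeff_ne_zero.mpr (hR k))
  set d := ∑ k, (R k).natDegree with hd
  have hprod : ∀ σ : Equiv.Perm (Fin L), (∏ k, M (σ k) k).natDegree = d := fun σ => by
    rw [natDegree_prod _ _ fun k _ => hM0 _ _]
    exact Finset.sum_congr rfl fun k _ => hMdeg _ _
  have hdet : M.det.coeff d ≠ 0 := by
    have h1 : M.det.coeff d =
        (Matrix.of fun i k : Fin L =>
          (R k).leadingCoeff * (Matrix.vandermonde z).transpose i k).det := by
      rw [Matrix.det_apply, Matrix.det_apply, finsetSum_coeff]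
      refine Finset.sum_congr rfl fun σ _ => ?_
      rw [Units.smul_def, Units.smul_def, coeff_smul]
      congr 1
      rw [← hprod σ, coeff_natDegree, leadingCoeff_prod]
      refine Finset.prod_congr rfl fun k _ => ?_
      rw [hMlead, mul_comm]
      rfl
    rw [h1, Matrix.det_mul_row, Matrix.det_transpose]
    exact mul_ne_zero (Finset.prod_ne_zero_iff.mpr fun k _ => leadingCoeff_ne_zero.mpr (hR k))
      (Matrix.det_vandermonde_ne_zero_iff.mpr hz)
  have hdeg : M.det.natDegree ≤ d := by
    rw [Matrix.det_apply]
    refine natDegree_sum_le_of_forall_le _ _ fun σ _ => ?_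
    rw [Units.smul_def]
    exact (natDegree_smul_le _ _).trans (hprod σ).le
  have hdle : d ≤ Fintype.card ι * D := by
    calc d ≤ ∑ _k : Fin L, D := Finset.sum_le_sum fun k _ => hQ _
      _ = L * D := by simp
      _ ≤ _ := Nat.mul_le_mul_right _ hLle
  refine hdet ?_
  rw [eq_zero_of_natDegree_lt_card_of_eval_eq_zero' M.det S ?_ (by omega), coeff_zero]
  intro w hw
  obtain ⟨v, hv0, hv⟩ := h w hw
  have hev : M.det.eval w = (M.map (eval w)).det := by
    rw [← coe_evalRingHom, RingHom.map_det]
    rfl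
  rw [hev]
  refine Matrix.exists_mulVec_eq_zero_iff.mp ⟨fun k => v (e k), ?_, ?_⟩
  · intro h0
    exact hv0 b₀ (by simpa using congrFun h0 (e.symm ⟨b₀, hb₀⟩))
  · funext i
    have := hv i (i.2.trans_le hLle)
    rw [← Fintype.sum_subtype_add_sum_subtype (fun b => Q b ≠ 0)] at this
    rw [Finset.sum_eq_zero (s := (Finset.univ : Finset {b // ¬ (Q b ≠ 0)}))
      (fun b _ => by rw [not_not.mp b.2]; simp), add_zero, ← e.sum_comp] at this
    rw [Pi.zero_apply, ← this]
    simp [Matrix.mulVec, dotProduct, M, R, z, Matrix.map_apply]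

open Nat in
/-- The Taylor coefficients of `y ↦ (Ξ * y) ^ a * (κ * exp (w * y)).re` at `0`. -/
noncomputable def powMulReExpCoeff (Ξ : ℝ) (κ w : ℂ) (a m : ℕ) : ℝ :=
  if a ≤ m then Ξ ^ a * (κ * (w ^ (m - a) / (m - a)!)).re else 0

open Nat in
theorem hasSum_powMulReExpCoeff (Ξ : ℝ) (κ w : ℂ) (a : ℕ) (y : ℝ) :
    HasSum (fun m => powMulReExpCoeff Ξ κ w a m * y ^ m)
      ((Ξ * y) ^ a * (κ * Complex.exp (w * y)).re) := by
  have h1 : HasSum (fun m : ℕ => (w * y) ^ m / m !) (Complex.exp (w * y)) := by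
    rw [Complex.exp_eq_exp_ℂ]
    exact NormedSpace.expSeries_div_hasSum_exp (w * y)
  have h2 := (Complex.hasSum_re (h1.mul_left κ)).mul_left ((Ξ * y) ^ a)
  rw [← Function.Injective.hasSum_iff (add_left_injective a)]
  · refine h2.congr_fun ?_ |> fun h => h
    intro m
    have : κ * ((w * y) ^ m / (m ! : ℂ)) = (κ * (w ^ m / (m ! : ℂ))) * ((y ^ m : ℝ) : ℂ) := by
      push_cast; ring
    simp only [Function.comp, powMulReExpCoeff, Nat.le_add_left, if_true, Nat.add_sub_cancel]
    rw [this, Complex.re_mul_ofReal]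
    ring
  · intro m hm
    have : ¬ a ≤ m := fun h => hm ⟨m - a, Nat.sub_add_cancel h⟩
    simp [powMulReExpCoeff, this]

open Nat in
theorem abs_powMulReExpCoeff_le {Ξ : ℝ} (hΞ : 1 ≤ Ξ) {κ w : ℂ} (hκ : ‖κ‖ ≤ 1) {E W : ℝ}
    (hE : 1 ≤ E) (hw : ‖w‖ ≤ W) {a A : ℕ} (ha : a ≤ A) (m : ℕ) :
    |powMulReExpCoeff Ξ κ w a m| ≤ (E * Ξ) ^ A * Real.exp (E * W) / E ^ m := by
  have hE0 : 0 < E := by linarith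
  have hW : 0 ≤ W := (norm_nonneg _).trans hw
  unfold powMulReExpCoeff
  split_ifs with h
  · obtain ⟨k, rfl⟩ := Nat.exists_eq_add_of_le' h
    rw [Nat.add_sub_cancel, abs_mul, abs_of_nonneg (by positivity : 0 ≤ Ξ ^ a)]
    have h1 : |(κ * (w ^ k / (k ! : ℂ))).re| ≤ W ^ k / k ! := by
      refine (Complex.abs_re_le_norm _).trans ?_
      rw [norm_mul, norm_div, norm_pow, Complex.norm_natCast]
      calc _ ≤ 1 * (‖w‖ ^ k / k !) := by gcongr
        _ ≤ _ := by rw [one_mul]; gcongr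
    have h2 : (E * W) ^ k / k ! ≤ Real.exp (E * W) :=
      Real.pow_div_factorial_le_exp _ (by positivity) _
    have h3 : W ^ k / k ! ≤ Real.exp (E * W) / E ^ k := by
      rw [le_div_iff₀ (by positivity)]
      refine le_trans (le_of_eq ?_) h2
      rw [mul_pow]; ring
    calc Ξ ^ a * |(κ * (w ^ k / (k ! : ℂ))).re| ≤ Ξ ^ a * (Real.exp (E * W) / E ^ k) := by
          gcongr; exact h1.trans h3
      _ = (E * Ξ) ^ a * Real.exp (E * W) / E ^ (k + a) := by
          rw [mul_pow, pow_add]; field_simp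
      _ ≤ _ := by
          gcongr
          exact one_le_mul_of_one_le_of_one_le hE hΞ
  · rw [abs_zero]; positivity

open Complex in
theorem norm_exp_mul_I_sub_exp_mul_I_le (s t : ℝ) : ‖exp (s * I) - exp (t * I)‖ ≤ |s - t| := by
  have h : exp (s * I) - exp (t * I) = exp (t * I) * (exp (I * (s - t : ℝ)) - 1) := by
    rw [mul_sub, ← exp_add, mul_one]
    congr 2
    push_cast; ring
  rw [h, norm_mul, norm_exp_ofReal_mul_I, one_mul]
  exact Real.norm_exp_I_mul_ofReal_sub_one_le.trans (le_of_eq (Real.norm_eq_abs _))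

open Complex in
theorem exists_int_abs_sub_two_pi_le {θ ε : ℝ} (h : ‖exp (θ * I) - 1‖ ≤ 2 * ε) :
    ∃ i : ℤ, |θ - 2 * Real.pi * i| ≤ Real.pi * ε ∧ |i - θ / (2 * Real.pi)| ≤ 1 / 2 := by
  have hπ := Real.pi_pos
  refine ⟨round (θ / (2 * Real.pi)), ?_, ?_⟩
  swap
  · rw [abs_sub_comm]; exact abs_sub_round _
  set i := round (θ / (2 * Real.pi))
  have h1 : |θ / (2 * Real.pi) - i| ≤ 1 / 2 := abs_sub_round _
  have h2 : θ - 2 * Real.pi * i = 2 * Real.pi * (θ / (2 * Real.pi) - i) := by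
    field_simp
  have h3 : |(θ - 2 * Real.pi * i) / 2| ≤ Real.pi / 2 := by
    rw [h2, mul_assoc, mul_div_cancel_left₀ _ two_ne_zero, abs_mul, abs_of_pos hπ]
    nlinarith
  have h4 := Real.mul_abs_le_abs_sin h3
  have h5 : exp (θ * I) = exp (I * (θ - 2 * Real.pi * i : ℝ)) := by
    rw [exp_eq_exp_iff_exists_int]
    exact ⟨i, by push_cast; ring⟩
  rw [h5, norm_exp_I_mul_ofReal_sub_one, norm_mul, Real.norm_eq_abs, Real.norm_eq_abs,
    abs_two] at h
  rw [abs_div, abs_two] at h4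
  have h6 : 2 / Real.pi * (|θ - 2 * Real.pi * i| / 2) ≤ ε := by linarith
  have h7 : 2 / Real.pi * (|θ - 2 * Real.pi * i| / 2) = |θ - 2 * Real.pi * i| / Real.pi := by
    field_simp
  rwa [h7, div_le_iff₀ hπ, mul_comm ε] at h6

theorem exp_sixteen_pi_mul_le (m : ℕ) : Real.exp (16 * Real.pi * m) ≤ 2 ^ (73 * m) := by
  rw [pow_mul, mul_comm, Real.exp_nat_mul]
  gcongr
  rw [← Real.le_log_iff_exp_le (by positivity), Real.log_pow]
  have := Real.log_two_gt_d9
  have := Real.pi_lt_d4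
  push_cast
  linarith

/-- The weight making `(trigWeight s b * exp (b * θ * I)).re` equal to `cos (b * θ)` for `0 ≤ b`
and to `sin (b * θ) / s` for `b < 0`. -/
noncomputable def trigWeight (s : ℝ) (b : ℤ) : ℂ := if 0 ≤ b then 1 else -Complex.I / s

/-- The frequencies `-h, …, h`. -/
def frequency (h : ℕ) (k : Fin (2 * h + 1)) : ℤ := (k : ℕ) - h

theorem norm_trigWeight_le {s : ℝ} (hs : 1 ≤ s) (b : ℤ) : ‖trigWeight s b‖ ≤ 1 := by
  unfold trigWeight
  split_ifs
  · simp
  · rw [norm_div, norm_neg, Complex.norm_I, Complex.norm_real, Real.norm_eq_abs]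
    exact (div_le_one (by positivity)).mpr (hs.trans (le_abs_self s))

theorem abs_frequency_le (h : ℕ) (k : Fin (2 * h + 1)) : |frequency h k| ≤ h := by
  have := k.2
  unfold frequency
  rw [abs_le]
  constructor <;> omega

/-- The auxiliary polynomial in `ξ`, `cos θ` and `sin θ / s` with integer coefficients, written as a
linear combination of `ξ ^ a` times `cos (b * θ)` or `sin (b * θ) / s`. -/
noncomputable def trigForm {A h : ℕ} (c : Fin A × Fin (2 * h + 1) → ℤ) (s ξ θ : ℝ) : ℝ :=
  ∑ j, (c j : ℝ) * (ξ ^ (j.1 : ℕ) *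
    (trigWeight s (frequency h j.2) * Complex.exp ((frequency h j.2 * θ : ℝ) * Complex.I)).re)

theorem exists_int_mul_trigForm_eq {A h : ℕ} (c : Fin A × Fin (2 * h + 1) → ℤ) {τ s : ℝ}
    (hs : 1 ≤ s) {N ℓ : ℕ} (hℓ : 0 < ℓ)
    (hint : ∀ (j : ℤ) (M : ℕ), |j| ≤ M →
      ∃ g f : ℤ, (N : ℂ) ^ M * Complex.exp ((j * τ : ℝ) * Complex.I) = g + f * s * Complex.I)
    {ρ : ℕ} {r : ℤ} (hr : |r| ≤ ρ) (w : ℤ) :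
    ∃ m : ℤ, (N : ℝ) ^ (h * ρ) * (ℓ : ℝ) ^ A * trigForm c s (w / ℓ) (r * τ) = m := by
  have hre : ∀ k, ∃ m : ℤ, (N : ℝ) ^ (h * ρ) * (trigWeight s (frequency h k) *
      Complex.exp ((frequency h k * (r * τ) : ℝ) * Complex.I)).re = m := by
    intro k
    have hle : |frequency h k * r| ≤ ((h * ρ : ℕ) : ℤ) := by
      rw [abs_mul]; push_cast
      exact mul_le_mul (abs_frequency_le h k) hr (abs_nonneg _) (by positivity)
    obtain ⟨g, f, hgf⟩ := hint (frequency h k * r) (h * ρ) hle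
    have h1 : (N : ℝ) ^ (h * ρ) * (trigWeight s (frequency h k) *
        Complex.exp ((frequency h k * (r * τ) : ℝ) * Complex.I)).re =
        (trigWeight s (frequency h k) * (g + f * s * Complex.I)).re := by
      rw [← hgf, ← Complex.re_ofReal_mul]
      congr 1
      push_cast
      rw [mul_left_comm]
      congr 4
      ring
    rw [h1]
    unfold trigWeight
    split_ifs
    · exact ⟨g, by simp⟩
    · refine ⟨f, ?_⟩
      have hs0 : (s : ℂ) ≠ 0 := by
        rw [Complex.ofReal_ne_zero]; linarith
      have : -Complex.I / s * (g + f * s * Complex.I) = (f : ℝ) + (-(g / s) : ℝ) * Complex.I := by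
        have hI := Complex.I_sq
        push_cast
        field_simp
        linear_combination (-(f : ℂ) * s) * hI
      rw [this]
      simp
  choose m hm using hre
  refine ⟨∑ j : Fin A × Fin (2 * h + 1),
    c j * (w ^ (j.1 : ℕ) * (ℓ : ℤ) ^ (A - (j.1 : ℕ)) * m j.2), ?_⟩
  rw [trigForm, Finset.mul_sum]
  simp only [Int.cast_sum, Int.cast_mul, Int.cast_pow, Int.cast_natCast]
  refine Finset.sum_congr rfl fun j _ => ?_
  rw [← hm]
  have hpow : (ℓ : ℝ) ^ A = (ℓ : ℝ) ^ (j.1 : ℕ) * (ℓ : ℝ) ^ (A - (j.1 : ℕ)) := by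
    rw [← pow_add, Nat.add_sub_cancel' j.1.2.le]
  have : (ℓ : ℝ) ≠ 0 := by positivity
  rw [hpow, div_pow]
  generalize (trigWeight s (frequency h j.2) *
    Complex.exp ((frequency h j.2 * (r * τ) : ℝ) * Complex.I)).re = t
  field_simp

theorem exists_small_trigForm {s : ℝ} (hs : 1 ≤ s) {h A x Ξ : ℕ} (hA : 0 < A) (hΞ : 1 ≤ Ξ)
    (hx : 2 * x + 3 ≤ A * (2 * h + 1)) :
    ∃ c : Fin A × Fin (2 * h + 1) → ℤ, c ≠ 0 ∧ (∀ j, |(c j : ℝ)| ≤ 8 ^ x) ∧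
      ∀ ξ : ℝ, |ξ| ≤ Ξ → |trigForm c s ξ (2 * Real.pi * ξ)| * 8 ^ x ≤
        (2 * x + 2) * (A * (2 * h + 1)) * (8 * Ξ) ^ A * 2 ^ (73 * (h * Ξ)) := by
  have : Nonempty (Fin A × Fin (2 * h + 1)) := ⟨⟨⟨0, hA⟩, 0⟩⟩
  have hΞ' : (1 : ℝ) ≤ Ξ := by exact_mod_cast hΞ
  set κ : Fin A × Fin (2 * h + 1) → ℂ := fun j => trigWeight s (frequency h j.2)
  set W : Fin A × Fin (2 * h + 1) → ℂ :=
    fun j => ((2 * Real.pi * frequency h j.2 * Ξ : ℝ) : ℂ) * Complex.I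
  set u : Fin A × Fin (2 * h + 1) → ℕ → ℝ :=
    fun j m => powMulReExpCoeff Ξ (κ j) (W j) j.1 m
  set G : ℝ := (8 * Ξ) ^ A * Real.exp (8 * (2 * Real.pi * h * Ξ)) with hGdef
  have hG : 0 < G := by positivity
  have hW : ∀ j, ‖W j‖ ≤ 2 * Real.pi * h * Ξ := by
    intro j
    have hb : |((frequency h j.2 : ℤ) : ℝ)| ≤ h := by exact_mod_cast abs_frequency_le h j.2
    have hπ := Real.pi_pos
    rw [norm_mul, Complex.norm_I, mul_one, Complex.norm_real, Real.norm_eq_abs, abs_mul, abs_mul,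
      abs_of_pos (by positivity : 0 < 2 * Real.pi), Nat.abs_cast]
    gcongr
  have hu : ∀ j m, |u j m| ≤ G / ((8 : ℕ) : ℝ) ^ m := fun j m => by
    push_cast
    exact abs_powMulReExpCoeff_le hΞ' (norm_trigWeight_le hs _) (by norm_num) (hW j) j.1.2.le m
  have hcard : Fintype.card (Fin A × Fin (2 * h + 1)) = A * (2 * h + 1) := by simp
  obtain ⟨c, hc0, hc, hsm⟩ := exists_int_coeffs_small_sums (x := x) (n := 2 * x) u hG
    (by norm_num : 3 ≤ 8) hu (by rw [hcard]; nlinarith)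
  push_cast at hc
  refine ⟨c, hc0, hc, fun ξ hξ => ?_⟩
  have hy : |ξ / Ξ| ≤ 1 := by
    rw [abs_div, Nat.abs_cast]; exact div_le_one_of_le₀ hξ (by positivity)
  have hΞy : (Ξ : ℝ) * (ξ / Ξ) = ξ := by field_simp
  have key := abs_sum_mul_le_of_small_sums hG (by norm_num : 3 ≤ 8) hu (c := c)
    (by push_cast; exact hc) hsm hy (fun j => hasSum_powMulReExpCoeff Ξ (κ j) (W j) j.1 (ξ / Ξ))
  have hform : trigForm c s ξ (2 * Real.pi * ξ) = ∑ j, (c j : ℝ) * ((Ξ * (ξ / Ξ)) ^ (j.1 : ℕ) *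
      (κ j * Complex.exp (W j * (ξ / Ξ : ℝ))).re) := by
    unfold trigForm
    refine Finset.sum_congr rfl fun j _ => ?_
    have hreal : 2 * Real.pi * frequency h j.2 * Ξ * (ξ / Ξ) =
        frequency h j.2 * (2 * Real.pi * ξ) := by
      rw [mul_assoc _ (Ξ : ℝ), hΞy]; ring
    have hWξ : W j * (ξ / Ξ : ℝ) = ((frequency h j.2 * (2 * Real.pi * ξ) : ℝ) : ℂ) * Complex.I := by
      rw [← hreal]; simp only [W]; push_cast; ring
    rw [hΞy, hWξ]
  rw [← hform, hcard] at key
  have hexp : Real.exp (8 * (2 * Real.pi * h * Ξ)) ≤ 2 ^ (73 * (h * Ξ)) := by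
    refine le_trans (le_of_eq ?_) (exp_sixteen_pi_mul_le (h * Ξ))
    congr 1; push_cast; ring
  have h8 : (8 : ℝ) ^ (2 * x) = 8 ^ x * 8 ^ x := by rw [two_mul, pow_add]
  push_cast at key
  rw [h8] at key
  calc |trigForm c s ξ (2 * Real.pi * ξ)| * 8 ^ x ≤ (2 * x + 2) *
        (A * (2 * h + 1) * 8 ^ x * G / (8 ^ x * 8 ^ x)) * 8 ^ x := by gcongr
    _ = (2 * x + 2) * (A * (2 * h + 1)) * (8 * Ξ) ^ A * Real.exp (8 * (2 * Real.pi * h * Ξ)) := by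
        rw [hGdef]; field_simp
    _ ≤ _ := by gcongr

theorem abs_trigForm_sub_le {A h : ℕ} (c : Fin A × Fin (2 * h + 1) → ℤ) {C : ℝ}
    (hc : ∀ j, |(c j : ℝ)| ≤ C) {s : ℝ} (hs : 1 ≤ s) {ξ Ξ : ℝ} (hΞ : 1 ≤ Ξ) (hξ : |ξ| ≤ Ξ)
    (θ θ' : ℝ) :
    |trigForm c s ξ θ - trigForm c s ξ θ'| ≤ A * (2 * h + 1) * (C * (Ξ ^ A * (h * |θ - θ'|))) := by
  unfold trigForm
  rw [← Finset.sum_sub_distrib]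
  have hcard : Fintype.card (Fin A × Fin (2 * h + 1)) = A * (2 * h + 1) := by simp
  refine (Finset.abs_sum_le_sum_abs _ _).trans ?_
  have hterm : ∀ j ∈ (Finset.univ : Finset (Fin A × Fin (2 * h + 1))),
      |(c j : ℝ) * (ξ ^ (j.1 : ℕ) * (trigWeight s (frequency h j.2) *
        Complex.exp ((frequency h j.2 * θ : ℝ) * Complex.I)).re) -
      (c j : ℝ) * (ξ ^ (j.1 : ℕ) * (trigWeight s (frequency h j.2) *
        Complex.exp ((frequency h j.2 * θ' : ℝ) * Complex.I)).re)|
      ≤ C * (Ξ ^ A * (h * |θ - θ'|)) := by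
    intro j _
    rw [← mul_sub, ← mul_sub, ← Complex.sub_re, ← mul_sub, abs_mul, abs_mul, abs_pow]
    have h1 : |ξ| ^ (j.1 : ℕ) ≤ Ξ ^ A :=
      (pow_le_pow_left₀ (abs_nonneg _) hξ _).trans (pow_le_pow_right₀ hΞ j.1.2.le)
    have hb : |((frequency h j.2 : ℤ) : ℝ)| ≤ h := by exact_mod_cast abs_frequency_le h j.2
    refine mul_le_mul (hc j) (mul_le_mul h1 ?_ (abs_nonneg _) (by positivity)) (by positivity)
      ((abs_nonneg _).trans (hc j))
    refine (Complex.abs_re_le_norm _).trans ?_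
    rw [norm_mul]
    calc _ ≤ 1 * |(frequency h j.2 : ℝ) * θ - frequency h j.2 * θ'| :=
          mul_le_mul (norm_trigWeight_le hs _) (norm_exp_mul_I_sub_exp_mul_I_le _ _)
            (norm_nonneg _) zero_le_one
      _ = |((frequency h j.2 : ℤ) : ℝ)| * |θ - θ'| := by rw [one_mul, ← mul_sub, abs_mul]
      _ ≤ _ := by gcongr
  refine (Finset.sum_le_card_nsmul _ _ _ hterm).trans (le_of_eq ?_)
  rw [Finset.card_univ, hcard, nsmul_eq_mul]
  push_cast
  rfl

theorem trigForm_two_pi_mul {A h : ℕ} (c : Fin A × Fin (2 * h + 1) → ℤ) (s ξ θ : ℝ) (n : ℤ) :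
    trigForm c s ξ (θ + 2 * Real.pi * n) = trigForm c s ξ θ := by
  unfold trigForm
  refine Finset.sum_congr rfl fun j _ => ?_
  congr 4
  rw [Complex.exp_eq_exp_iff_exists_int]
  exact ⟨frequency h j.2 * n, by push_cast; ring⟩

theorem exists_vanishing_trigForm {τ s ε : ℝ} (hs : 1 ≤ s) {N ℓ : ℕ} (hN : 0 < N) (hℓ : 0 < ℓ)
    (hint : ∀ (j : ℤ) (M : ℕ), |j| ≤ M →
      ∃ g f : ℤ, (N : ℂ) ^ M * Complex.exp ((j * τ : ℝ) * Complex.I) = g + f * s * Complex.I)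
    {i : ℤ} (hτ : |τ - 2 * Real.pi * i / ℓ| ≤ ε) (hi : 2 * |i| ≤ ℓ + 1)
    {h ρ σ A x Ξ : ℕ} (hA : 0 < A) (hρ : ρ ≤ ℓ) (hΞ : ρ + 2 * σ + 2 ≤ 2 * Ξ)
    (hx : 2 * x + 3 ≤ A * (2 * h + 1))
    (hx' : 4 * (N ^ (h * ρ) * ℓ ^ A * ((2 * x + 2) * (A * (2 * h + 1)) * (8 * Ξ) ^ A *
      2 ^ (73 * (h * Ξ)))) ≤ 8 ^ x)
    (hε : 8 ^ (2 * x) * ε ≤ 1) :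
    ∃ c : Fin A × Fin (2 * h + 1) → ℤ, c ≠ 0 ∧ ∀ r t : ℤ, |r| ≤ ρ → |t| ≤ σ →
      trigForm c s ((i * r + ℓ * t : ℤ) / ℓ) (r * τ) = 0 := by
  have hΞ1 : 1 ≤ Ξ := by omega
  have hΞ1' : (1 : ℝ) ≤ Ξ := by exact_mod_cast hΞ1
  have hℓ' : (0 : ℝ) < ℓ := by exact_mod_cast hℓ
  have hN' : (0 : ℝ) < N := by exact_mod_cast hN
  have hε0 : 0 ≤ ε := (abs_nonneg _).trans hτ
  obtain ⟨c, hc0, hc, hsmall⟩ := exists_small_trigForm hs hA hΞ1 hx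
  refine ⟨c, hc0, fun r t hr ht => ?_⟩
  set ξ : ℝ := ((i * r + ℓ * t : ℤ) : ℝ) / ℓ with hξdef
  have hξ : ξ = i * r / ℓ + t := by
    rw [hξdef]; push_cast; field_simp
  have hr' : |(r : ℝ)| ≤ ρ := by exact_mod_cast hr
  have ht' : |(t : ℝ)| ≤ σ := by exact_mod_cast ht
  have hi' : 2 * |(i : ℝ)| ≤ ℓ + 1 := by exact_mod_cast hi
  have hρ' : (ρ : ℝ) ≤ ℓ := by exact_mod_cast hρ
  have hΞ' : (ρ : ℝ) + 2 * σ + 2 ≤ 2 * Ξ := by exact_mod_cast hΞ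
  have hξΞ : |ξ| ≤ Ξ := by
    have h1 : |(i : ℝ) * r / ℓ| ≤ (ρ + 1) / 2 := by
      rw [abs_div, Nat.abs_cast, div_le_iff₀ hℓ', abs_mul]
      have := mul_le_mul hi' hr' (abs_nonneg _) (by positivity)
      nlinarith
    rw [hξ]
    refine (abs_add_le _ _).trans ?_
    linarith
  set B : ℝ := (2 * x + 2) * (A * (2 * h + 1)) * (8 * Ξ) ^ A * 2 ^ (73 * (h * Ξ)) with hB
  set D : ℝ := (N : ℝ) ^ (h * ρ) * (ℓ : ℝ) ^ A with hD
  have hD0 : 0 < D := by positivity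
  have hDB : 4 * (D * B) ≤ 8 ^ x := by rw [hD, hB]; exact_mod_cast hx'
  have hangle : trigForm c s ξ (2 * Real.pi * ξ) = trigForm c s ξ (r * (2 * Real.pi * i / ℓ)) := by
    rw [← trigForm_two_pi_mul c s ξ (r * (2 * Real.pi * i / ℓ)) t]
    congr 1
    rw [hξ]; ring
  have hF : D * |trigForm c s ξ (2 * Real.pi * ξ)| ≤ 1 / 4 := by
    have h8 : (0 : ℝ) < 8 ^ x := by positivity
    have h1 := mul_le_mul_of_nonneg_left (hsmall ξ hξΞ) hD0.le
    rw [← mul_assoc] at h1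
    have h2 : D * |trigForm c s ξ (2 * Real.pi * ξ)| * 8 ^ x ≤ 1 / 4 * 8 ^ x := by linarith
    exact le_of_mul_le_mul_right h2 h8
  have hdiff : D * |trigForm c s ξ (r * τ) - trigForm c s ξ (2 * Real.pi * ξ)| ≤ 1 / 4 := by
    have h1 := abs_trigForm_sub_le c hc hs hΞ1' hξΞ (r * τ) (r * (2 * Real.pi * i / ℓ))
    rw [← hangle, ← mul_sub, abs_mul] at h1
    have h2 : |(r : ℝ)| * |τ - 2 * Real.pi * i / ℓ| ≤ ρ * ε :=
      mul_le_mul hr' hτ (abs_nonneg _) (by positivity)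
    have h3 : (h : ℝ) * ρ ≤ 2 ^ (73 * (h * Ξ)) := by
      have : h * ρ ≤ 2 ^ (73 * (h * Ξ)) := by
        calc h * ρ ≤ 73 * (h * Ξ) := by nlinarith [Nat.zero_le h]
          _ ≤ _ := Nat.lt_two_pow_self.le
      exact_mod_cast this
    have h4 : (Ξ : ℝ) ^ A ≤ (8 * Ξ) ^ A := by gcongr; linarith
    have h5 : (1 : ℝ) ≤ 2 * x + 2 := by
      have : (0 : ℝ) ≤ x := by positivity
      linarith
    calc D * |trigForm c s ξ (r * τ) - trigForm c s ξ (2 * Real.pi * ξ)|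
        ≤ D * (A * (2 * h + 1) * (8 ^ x * (Ξ ^ A * (h * (ρ * ε))))) := by
          gcongr; exact h1.trans (by gcongr)
      _ = D * (1 * (A * (2 * h + 1)) * Ξ ^ A * (h * ρ)) * (8 ^ x * ε) := by ring
      _ ≤ D * ((2 * x + 2) * (A * (2 * h + 1)) * (8 * Ξ) ^ A * 2 ^ (73 * (h * Ξ))) *
          (8 ^ x * ε) := by
          gcongr
      _ = D * B * (8 ^ x * ε) := rfl
      _ ≤ (8 ^ x / 4) * (8 ^ x * ε) := by gcongr; linarith
      _ = (8 ^ (2 * x) * ε) / 4 := by rw [two_mul, pow_add]; ring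
      _ ≤ 1 / 4 := by linarith
  obtain ⟨m, hm⟩ := exists_int_mul_trigForm_eq c hs hℓ hint hr (i * r + ℓ * t)
  have hlt : |(m : ℝ)| < 1 := by
    rw [← hm, abs_mul, abs_of_pos hD0]
    have : |trigForm c s ξ (r * τ)| ≤ |trigForm c s ξ (r * τ) - trigForm c s ξ (2 * Real.pi * ξ)| +
        |trigForm c s ξ (2 * Real.pi * ξ)| := by
      have := abs_add_le (trigForm c s ξ (r * τ) - trigForm c s ξ (2 * Real.pi * ξ))
        (trigForm c s ξ (2 * Real.pi * ξ))
      rwa [sub_add_cancel] at this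
    have := mul_le_mul_of_nonneg_left this hD0.le
    linarith
  have hm0 : m = 0 := Int.abs_lt_one_iff.mp (by exact_mod_cast hlt)
  rw [hm0, Int.cast_zero] at hm
  exact (mul_eq_zero.mp hm).resolve_left hD0.ne'

theorem frequency_rev (h : ℕ) (k : Fin (2 * h + 1)) : frequency h k.rev = -frequency h k := by
  unfold frequency
  rw [Fin.val_rev]
  have := k.2
  omega

open Polynomial Complex in
theorem eq_zero_of_vanishing_trigForm {A h ρ σ ℓ : ℕ} {c : Fin A × Fin (2 * h + 1) → ℤ}
    {s τ : ℝ} (hs : 1 ≤ s) {i : ℤ} (hcop : IsCoprime i (ℓ : ℤ))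
    (hroot : ∀ j : ℤ, j ≠ 0 → |j| ≤ 2 * h → exp ((j * τ : ℝ) * I) ≠ 1)
    (hρ : 2 * ρ < ℓ) (hA : A * (2 * h + 1) ≤ (2 * ρ + 1) * (2 * σ + 1))
    (hA0 : 0 < A)
    (hc : ∀ r t : ℤ, |r| ≤ (ρ + h : ℕ) → |t| ≤ σ →
      trigForm c s ((i * r + ℓ * t : ℤ) / ℓ) (r * τ) = 0) : c = 0 := by
  classical
  have hℓ : (ℓ : ℂ) ≠ 0 := by
    have : 0 < ℓ := by omega
    exact_mod_cast this.ne'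
  set P : Fin (2 * h + 1) → ℂ[X] := fun k =>
    ∑ a : Fin A, C ((c (a, k) : ℤ) : ℂ) * X ^ (a : ℕ) with hP
  set κ : Fin (2 * h + 1) → ℂ := fun k => trigWeight s (frequency h k) with hκ
  set Q : Fin (2 * h + 1) → ℂ[X] := fun k =>
    C (κ k) * P k + C (starRingEnd ℂ (κ k.rev)) * P k.rev with hQ
  set y : Fin (2 * h + 1) → ℂ := fun k => exp ((frequency h k * τ : ℝ) * I) with hy
  have hPdeg : ∀ k, (P k).natDegree ≤ A - 1 := fun k =>
    natDegree_sum_le_of_forall_le _ _ fun a _ =>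
      (natDegree_C_mul_X_pow_le _ _).trans (by have := a.2; omega)
  have hPeval : ∀ k (ξ : ℝ), (P k).eval (ξ : ℂ) =
      ((∑ a : Fin A, (c (a, k) : ℝ) * ξ ^ (a : ℕ) : ℝ) : ℂ) :=
    fun k ξ => by simp [hP, eval_finsetSum]
  have hPcoeff : ∀ k (a : Fin A), (P k).coeff a = ((c (a, k) : ℤ) : ℂ) := fun k a => by
    simp only [hP, finsetSum_coeff, coeff_C_mul, coeff_X_pow]
    rw [Finset.sum_eq_single a]
    · simp
    · intro b _ hb
      rw [if_neg fun h => hb (Fin.ext h.symm), mul_zero]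
    · simp
  have hsum : ∀ (ξ θ : ℝ), ∑ k, (Q k).eval (ξ : ℂ) * exp ((frequency h k * θ : ℝ) * I) =
      ((2 * trigForm c s ξ θ : ℝ) : ℂ) := by
    intro ξ θ
    have h1 : ∀ k, (Q k).eval (ξ : ℂ) * exp ((frequency h k * θ : ℝ) * I) =
        κ k * (P k).eval (ξ : ℂ) * exp ((frequency h k * θ : ℝ) * I) +
        starRingEnd ℂ (κ k.rev) * (P k.rev).eval (ξ : ℂ) * exp ((frequency h k * θ : ℝ) * I) := by
      intro k; simp only [hQ, eval_add, eval_mul, eval_C]; ring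
    rw [Finset.sum_congr rfl fun k _ => h1 k, Finset.sum_add_distrib]
    have h2 : ∑ k, starRingEnd ℂ (κ k.rev) * (P k.rev).eval (ξ : ℂ) *
        exp ((frequency h k * θ : ℝ) * I) = ∑ k, starRingEnd ℂ (κ k) * (P k).eval (ξ : ℂ) *
        starRingEnd ℂ (exp ((frequency h k * θ : ℝ) * I)) := by
      rw [← Equiv.sum_comp Fin.revPerm]
      refine Finset.sum_congr rfl fun k _ => ?_
      rw [Fin.revPerm_apply, Fin.rev_rev, frequency_rev, ← exp_conj]
      congr 2
      simp
    rw [h2, ← Finset.sum_add_distrib]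
    have h3 : ∀ k, κ k * (P k).eval (ξ : ℂ) * exp ((frequency h k * θ : ℝ) * I) +
        starRingEnd ℂ (κ k) * (P k).eval (ξ : ℂ) *
        starRingEnd ℂ (exp ((frequency h k * θ : ℝ) * I)) =
        ((2 * ∑ a : Fin A, (c (a, k) : ℝ) * (ξ ^ (a : ℕ) *
          (κ k * exp ((frequency h k * θ : ℝ) * I)).re) : ℝ) : ℂ) := by
      intro k
      generalize exp ((frequency h k * θ : ℝ) * I) = e
      have h4 := Complex.add_conj (κ k * e)
      rw [map_mul] at h4
      have h5 : ∑ a : Fin A, (c (a, k) : ℝ) * (ξ ^ (a : ℕ) * (κ k * e).re) =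
          (∑ a : Fin A, (c (a, k) : ℝ) * ξ ^ (a : ℕ)) * (κ k * e).re := by
        rw [Finset.sum_mul]; exact Finset.sum_congr rfl fun a _ => by ring
      rw [h5, hPeval]
      generalize (∑ a : Fin A, (c (a, k) : ℝ) * ξ ^ (a : ℕ)) = p
      push_cast at h4 ⊢
      linear_combination (p : ℂ) * h4
    rw [Finset.sum_congr rfl fun k _ => h3 k, ← ofReal_sum, ← Finset.mul_sum]
    congr 2
    unfold trigForm
    rw [Fintype.sum_prod_type_right]
  have hQ0 : ∀ k, Q k = 0 := by
    let f : ℤ × ℤ → ℂ := fun z => ((((i * (z.1 - h) + ℓ * z.2 : ℤ) : ℝ) / ℓ : ℝ) : ℂ)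
    refine polynomials_eq_zero_of_exponential_sums Q y ?_ (fun k => exp_ne_zero _)
      ((i : ℂ) / ℓ) (D := A - 1) (fun k => ?_)
      ((Finset.Icc (-(ρ : ℤ)) ρ ×ˢ Finset.Icc (-(σ : ℤ)) σ).image f) ?_ ?_
    · intro k l hkl
      by_contra hne
      refine hroot (frequency h k - frequency h l) ?_ ?_ ?_
      · intro h0
        apply hne
        ext
        unfold frequency at h0
        omega
      · have := k.2
        have := l.2
        unfold frequency
        rw [abs_le]; constructor <;> omega
      · have h1 : exp ((frequency h k * τ : ℝ) * I) = exp ((frequency h l * τ : ℝ) * I) := hkl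
        have h2 : (((frequency h k - frequency h l : ℤ) : ℝ) * τ : ℝ) * I =
            (frequency h k * τ : ℝ) * I - (frequency h l * τ : ℝ) * I := by push_cast; ring
        rw [h2, exp_sub, h1, div_self (exp_ne_zero _)]
    · refine (natDegree_add_le _ _).trans (max_le ?_ ?_)
      · exact (natDegree_C_mul_le _ _).trans (hPdeg k)
      · exact (natDegree_C_mul_le _ _).trans (hPdeg _)
    · rw [Finset.card_image_of_injOn, Finset.card_product, Int.card_Icc, Int.card_Icc,
        Fintype.card_fin]
      · rw [show ((ρ : ℤ) + 1 - -(ρ : ℤ)).toNat = 2 * ρ + 1 by omega,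
          show ((σ : ℤ) + 1 - -(σ : ℤ)).toNat = 2 * σ + 1 by omega]
        obtain ⟨B, rfl⟩ := Nat.exists_eq_add_of_le' hA0
        rw [Nat.add_sub_cancel]
        nlinarith
      · rintro ⟨r, t⟩ h1 ⟨r', t'⟩ h2 heq
        simp only [Finset.coe_product, Finset.coe_Icc, Set.mem_prod, Set.mem_Icc] at h1 h2
        simp only [f, ofReal_inj] at heq
        have hℓr : (ℓ : ℝ) ≠ 0 := by exact_mod_cast hℓ
        rw [div_left_inj' hℓr, Int.cast_inj] at heq
        have hdvd : (ℓ : ℤ) ∣ r - r' := by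
          refine hcop.symm.dvd_of_dvd_mul_left ⟨t' - t, ?_⟩
          linear_combination heq
        have hr : r - r' = 0 := by
          refine Int.eq_zero_of_abs_lt_dvd hdvd ?_
          rw [abs_lt]; constructor <;> omega
        obtain rfl : r = r' := by omega
        have : (ℓ : ℤ) * t = ℓ * t' := by linarith
        have hℓz : (ℓ : ℤ) ≠ 0 := by exact_mod_cast hℓ
        rw [mul_right_inj' hℓz] at this
        rw [this]
    · intro w hw
      obtain ⟨⟨r, t⟩, hrt, rfl⟩ := Finset.mem_image.mp hw
      simp only [Finset.mem_product, Finset.mem_Icc] at hrt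
      refine ⟨fun k => exp ((frequency h k * ((r - h : ℤ) * τ) : ℝ) * I), fun k => exp_ne_zero _,
        fun m hm => ?_⟩
      rw [Fintype.card_fin] at hm
      have h1 := hc (r - h + m) t (by rw [abs_le]; push_cast; constructor <;> omega)
        (by rw [abs_le]; exact hrt.2)
      have h2 := hsum (((i * (r - h + m) + ℓ * t : ℤ) : ℝ) / ℓ) ((r - h + m : ℤ) * τ)
      rw [h1, mul_zero, ofReal_zero] at h2
      rw [← h2]
      refine Finset.sum_congr rfl fun k _ => ?_
      rw [mul_assoc]
      congr 1
      · congr 1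
        simp only [f]
        push_cast
        field_simp
        ring
      · simp only [hy]
        rw [← exp_nat_mul, ← exp_add]
        congr 1
        push_cast
        ring
  have hs0 : (s : ℂ) ≠ 0 := by
    rw [ofReal_ne_zero]; linarith
  have hpos : ∀ k, 0 ≤ frequency h k → ∀ a, c (a, k) = 0 ∧ c (a, k.rev) = 0 := by
    intro k hk a
    have h1 := congrArg (fun p => p.coeff (a : ℕ)) (hQ0 k)
    simp only [hQ, coeff_add, coeff_C_mul, hPcoeff, coeff_zero] at h1
    have hκk : κ k = 1 := if_pos hk
    by_cases hk0 : frequency h k = 0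
    · have hrev : k.rev = k := by
        ext; rw [Fin.val_rev]; unfold frequency at hk0; omega
      rw [hrev, hκk, map_one] at h1
      have h2 : ((c (a, k) : ℤ) : ℂ) = 0 := by linear_combination h1 / 2
      have h3 : c (a, k) = 0 := by exact_mod_cast h2
      rw [hrev]
      exact ⟨h3, h3⟩
    · have hκr : κ k.rev = -I / s := if_neg (by rw [frequency_rev]; omega)
      rw [hκk, hκr] at h1
      have h2 : ((c (a, k) : ℝ) : ℂ) + ((c (a, k.rev) / s : ℝ) : ℂ) * I = 0 := by
        rw [← h1]
        simp only [map_div₀, map_neg, conj_I, conj_ofReal, neg_neg]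
        push_cast
        ring
      have hre := congrArg re h2
      have him := congrArg im h2
      simp only [add_re, ofReal_re, mul_re, ofReal_im, I_re, mul_zero, I_im,
        sub_zero, add_zero, zero_re, add_im, mul_im, mul_one, zero_add, zero_im] at hre him
      have hs1 : s ≠ 0 := by linarith
      rw [div_eq_zero_iff, or_iff_left hs1] at him
      exact ⟨by exact_mod_cast hre, by exact_mod_cast him⟩
  funext ⟨a, k⟩
  by_cases hk : 0 ≤ frequency h k
  · exact (hpos k hk a).1
  · have := (hpos k.rev (by rw [frequency_rev]; omega) a).2
    rwa [Fin.rev_rev] at this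

open Complex in
theorem exists_int_pow_mul_exp_eq {N : ℕ} {s τ : ℝ} {Y g₀ f₀ : ℤ} (hs : s ^ 2 = Y)
    (hτ : (N : ℂ) * exp (τ * I) = g₀ + f₀ * s * I) (j : ℤ) (M : ℕ) (hj : |j| ≤ M) :
    ∃ g f : ℤ, (N : ℂ) ^ M * exp ((j * τ : ℝ) * I) = g + f * s * I := by
  have hs' : (s : ℂ) ^ 2 = Y := by exact_mod_cast congrArg ofReal hs
  have hnat : ∀ m : ℕ, ∃ g f : ℤ, (N : ℂ) ^ m * exp ((m * τ : ℝ) * I) = g + f * s * I := by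
    intro m
    induction m with
    | zero => exact ⟨1, 0, by simp⟩
    | succ m ih =>
      obtain ⟨g, f, h⟩ := ih
      refine ⟨g * g₀ - f * f₀ * Y, g * f₀ + f * g₀, ?_⟩
      have h1 : exp (((m + 1 : ℕ) * τ : ℝ) * I) = exp ((m * τ : ℝ) * I) * exp (τ * I) := by
        rw [← exp_add]; congr 1; push_cast; ring
      rw [h1, pow_succ, mul_mul_mul_comm, h, hτ]
      push_cast
      linear_combination (f * f₀ * s ^ 2 : ℂ) * I_sq - (f * f₀ : ℂ) * hs'
  have hle : ∀ m : ℕ, m ≤ M →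
      ∃ g f : ℤ, (N : ℂ) ^ M * exp ((m * τ : ℝ) * I) = g + f * s * I := by
    intro m hm
    obtain ⟨g, f, h⟩ := hnat m
    refine ⟨N ^ (M - m) * g, N ^ (M - m) * f, ?_⟩
    rw [← Nat.sub_add_cancel hm, pow_add, mul_assoc, h, Nat.add_sub_cancel]
    push_cast; ring
  obtain ⟨m, rfl | rfl⟩ := j.eq_nat_or_neg
  · exact_mod_cast hle m (by simpa using hj)
  · obtain ⟨g, f, h⟩ := hle m (by simpa using hj)
    refine ⟨g, -f, ?_⟩
    have h1 := congrArg (starRingEnd ℂ) h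
    simp only [map_mul, map_pow, map_natCast, map_add, map_intCast, conj_ofReal, conj_I,
      ← exp_conj] at h1
    push_cast at h1 ⊢
    rw [show -(m : ℂ) * τ * I = m * τ * -I by ring, h1]
    ring

open Complex ComplexConjugate in
/-- A lower bound for a trace in a Lucas sequence, by an interpolation argument in the style of
Gelfond and Schneider applied to real linear forms in two logarithms. -/
theorem lt_norm_pow_add_conj_pow {β : ℂ} {a : ℤ} {N ℓ : ℕ} (ha : a ≠ 0) (haN : a ^ 2 < N)
    (hre : β.re = a) (hnorm : normSq β = N) (hℓ : ℓ.Prime) (hℓ5 : 5 ≤ ℓ) {h ρ σ A x Ξ : ℕ}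
    (hroot : ∀ j : ℕ, 0 < j → j ≤ 2 * h → (-conj β) ^ j ≠ β ^ j)
    (hA : 0 < A) (hρ : 2 * ρ + h ≤ ℓ) (hρ' : 0 < h) (hΞ : ρ + h + 2 * σ + 2 ≤ 2 * Ξ)
    (hx : 2 * x + 3 ≤ A * (2 * h + 1)) (hcount : A * (2 * h + 1) ≤ (2 * ρ + 1) * (2 * σ + 1))
    (hx' : 4 * (N ^ (h * (ρ + h)) * ℓ ^ A * ((2 * x + 2) * (A * (2 * h + 1)) * (8 * Ξ) ^ A *
      2 ^ (73 * (h * Ξ)))) ≤ 8 ^ x)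
    (hε : 8 ^ (2 * x) ≤ N ^ ((ℓ - 1) / 2)) :
    2 * √N < ‖β ^ ℓ + conj β ^ ℓ‖ := by
  by_contra! hsmall
  have hN0 : 0 < N := by
    have : (0 : ℤ) < N := lt_of_le_of_lt (sq_nonneg a) haN
    exact_mod_cast this
  have hN : (0 : ℝ) < N := by exact_mod_cast hN0
  have hβ : β ≠ 0 := by
    rw [← normSq_pos, hnorm]; exact hN
  have hββ : β * conj β = N := by rw [mul_conj, hnorm]; simp
  have hβnorm : ‖β‖ = √N := by rw [norm_def, hnorm]
  have hsqN : √(N : ℝ) ^ 2 = N := Real.sq_sqrt hN.le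
  have hsqN0 : 0 < √(N : ℝ) := Real.sqrt_pos.mpr hN
  set γ : ℂ := -conj β / β with hγ
  have hγnorm : ‖γ‖ = 1 := by
    rw [hγ, norm_div, norm_neg, norm_conj, div_self (norm_ne_zero_iff.mpr hβ)]
  set τ : ℝ := arg γ with hτdef
  have hexp : exp (τ * I) = γ := by
    have := norm_mul_exp_arg_mul_I γ
    rwa [hγnorm, ofReal_one, one_mul] at this
  set s : ℝ := |β.im| with hs
  have hs2 : s ^ 2 = ((N - a ^ 2 : ℤ) : ℝ) := by
    rw [hs, sq_abs]
    rw [normSq_apply, hre] at hnorm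
    push_cast; linarith
  have hs1 : 1 ≤ s := by
    have h1 : (1 : ℝ) ≤ ((N - a ^ 2 : ℤ) : ℝ) := by exact_mod_cast (by omega : (1 : ℤ) ≤ N - a ^ 2)
    rw [← hs2] at h1
    exact (one_le_sq_iff₀ (abs_nonneg _)).mp h1
  obtain ⟨f₀, hf₀⟩ : ∃ f₀ : ℤ, 2 * a * β.im = f₀ * s := by
    rcases abs_cases β.im with ⟨h1, -⟩ | ⟨h1, -⟩
    · exact ⟨2 * a, by rw [hs, h1]; push_cast; ring⟩
    · exact ⟨-2 * a, by rw [hs, h1]; push_cast; ring⟩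
  have hNγ : (N : ℂ) * exp (τ * I) = ((N - 2 * a ^ 2 : ℤ) : ℂ) + f₀ * s * I := by
    have h1 : (N : ℂ) * exp (τ * I) = -conj β ^ 2 := by
      rw [hexp, hγ, ← hββ]; field_simp
    have h2 : conj β = (a : ℂ) - β.im * I := by
      apply Complex.ext <;> simp [hre]
    have h3 : (β.im : ℂ) ^ 2 = ((N - a ^ 2 : ℤ) : ℂ) := by
      rw [hs, sq_abs] at hs2
      exact_mod_cast congrArg ofReal hs2
    have h4 : (2 * a * β.im : ℂ) = f₀ * s := by exact_mod_cast congrArg ofReal hf₀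
    rw [h1, h2, ← h4]
    push_cast at h3 ⊢
    linear_combination h3 - (β.im : ℂ) ^ 2 * I_sq
  have hodd : Odd ℓ := hℓ.odd_of_ne_two (by omega)
  set k := (ℓ - 1) / 2 with hk
  have hℓk : ℓ = 2 * k + 1 := by obtain ⟨m, rfl⟩ := hodd; omega
  set ε : ℝ := 1 / N ^ k with hεdef
  have hε0 : 0 < ε := by positivity
  have hγℓ : ‖exp ((ℓ * τ : ℝ) * I) - 1‖ ≤ 2 * ε := by
    have h1 : exp ((ℓ * τ : ℝ) * I) = γ ^ ℓ := by
      rw [← hexp, ← exp_nat_mul]; congr 1; push_cast; ring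
    have h2 : γ ^ ℓ - 1 = -((β ^ ℓ + conj β ^ ℓ) / β ^ ℓ) := by
      rw [hγ, div_pow, hodd.neg_pow]; field_simp; ring
    rw [h1, h2, norm_neg, norm_div, norm_pow, hβnorm]
    have h3 : √(N : ℝ) ^ ℓ = √N * N ^ k := by
      rw [hℓk, pow_succ, pow_mul, hsqN]; ring
    rw [h3, div_le_iff₀ (by positivity), hεdef]
    refine hsmall.trans (le_of_eq ?_)
    field_simp
  obtain ⟨i, hi1, hi2⟩ := exists_int_abs_sub_two_pi_le hγℓ
  have hℓ0 : (0 : ℝ) < ℓ := by exact_mod_cast hℓ.pos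
  have hℓ5' : (5 : ℝ) ≤ ℓ := by exact_mod_cast hℓ5
  have hπ := Real.pi_pos
  have hπ4 := Real.pi_lt_four
  have hτle : |τ| ≤ Real.pi := abs_arg_le_pi γ
  have hi : 2 * |i| ≤ ℓ + 1 := by
    have h1 : |(ℓ : ℝ) * τ / (2 * Real.pi)| ≤ ℓ / 2 := by
      rw [abs_div, abs_mul, Nat.abs_cast, abs_of_pos (by positivity : 0 < 2 * Real.pi),
        div_le_iff₀ (by positivity)]
      nlinarith
    have h2 : |(i : ℝ)| ≤ |i - (ℓ : ℝ) * τ / (2 * Real.pi)| + |(ℓ : ℝ) * τ / (2 * Real.pi)| := by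
      have := abs_add_le (i - (ℓ : ℝ) * τ / (2 * Real.pi)) ((ℓ : ℝ) * τ / (2 * Real.pi))
      rwa [sub_add_cancel] at this
    have h3 : 2 * |(i : ℝ)| ≤ ℓ + 1 := by linarith
    exact_mod_cast h3
  have hk1 : 1 ≤ k := by omega
  have hN1 : (1 : ℝ) ≤ N := by exact_mod_cast hN0
  have hi0 : i ≠ 0 := by
    rintro rfl
    rw [Int.cast_zero, mul_zero, sub_zero, abs_mul, Nat.abs_cast] at hi1
    have h1 : 2 / √N ≤ |τ| := by
      have h2 := norm_exp_mul_I_sub_exp_mul_I_le τ 0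
      rw [hexp, ofReal_zero, zero_mul, exp_zero, sub_zero] at h2
      refine le_trans ?_ h2
      have h3 : γ - 1 = -((2 * a : ℝ) : ℂ) / β := by
        have : conj β + β = ((2 * a : ℝ) : ℂ) := by rw [add_comm, add_conj, hre]
        rw [← this, hγ]; field_simp; ring
      rw [h3, norm_div, norm_neg, norm_real, hβnorm, Real.norm_eq_abs, abs_mul, abs_two]
      gcongr
      have : (1 : ℝ) ≤ |(a : ℝ)| := by exact_mod_cast Int.one_le_abs ha
      linarith
    have h4 : ε ≤ 1 / √N := by
      rw [hεdef]
      apply one_div_le_one_div_of_le hsqN0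
      calc √(N : ℝ) ≤ N := Real.sqrt_le_self_iff.mpr (Or.inr hN1)
        _ = N ^ 1 := (pow_one _).symm
        _ ≤ N ^ k := pow_le_pow_right₀ hN1 hk1
    have h5 : 0 < 1 / √(N : ℝ) := by positivity
    have h6 : 2 / √(N : ℝ) = 2 * (1 / √N) := by ring
    rw [h6] at h1
    nlinarith
  have hcop : IsCoprime i (ℓ : ℤ) := by
    rw [isCoprime_comm, (Nat.prime_iff_prime_int.mp hℓ).coprime_iff_not_dvd]
    intro hdvd
    exact hi0 (Int.eq_zero_of_abs_lt_dvd hdvd (by omega))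
  have hτi : |τ - 2 * Real.pi * i / ℓ| ≤ ε := by
    have h1 : τ - 2 * Real.pi * i / ℓ = (ℓ * τ - 2 * Real.pi * i) / ℓ := by field_simp
    rw [h1, abs_div, Nat.abs_cast, div_le_iff₀ hℓ0]
    nlinarith
  obtain ⟨c, hc0, hc⟩ := exists_vanishing_trigForm hs1 hN0 hℓ.pos
    (exists_int_pow_mul_exp_eq hs2 hNγ) hτi hi hA (ρ := ρ + h) (by omega) hΞ hx hx' (by
      rw [hεdef, mul_one_div, div_le_one (by positivity)]
      exact_mod_cast hε)
  refine hc0 (eq_zero_of_vanishing_trigForm hs1 hcop ?_ (by omega) hcount hA hc)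
  have hnat : ∀ j : ℕ, 0 < j → j ≤ 2 * h → exp ((j * τ : ℝ) * I) ≠ 1 := by
    intro j hj0 hj h1
    refine hroot j hj0 hj ?_
    have h2 : exp ((j * τ : ℝ) * I) = γ ^ j := by
      rw [← hexp, ← exp_nat_mul]; congr 1; push_cast; ring
    rw [h2, hγ, div_pow, div_eq_one_iff_eq (pow_ne_zero _ hβ)] at h1
    exact h1
  intro j hj0 hj
  obtain ⟨m, rfl | rfl⟩ := j.eq_nat_or_neg
  · exact_mod_cast hnat m (by omega) (by simp at hj; omega)
  · intro h1
    refine hnat m (by omega) (by simp at hj; omega) ?_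
    have h2 : exp ((m * τ : ℝ) * I) = (exp (((-(m : ℤ) : ℤ) * τ : ℝ) * I))⁻¹ := by
      rw [← exp_neg]; congr 1; push_cast; ring
    rw [h2, h1, inv_one]

theorem sq_le_two_pow_add_two {μ : ℕ} (hμ : 22 ≤ μ) :
    (μ * (2 * μ + 66) + 14) ^ 2 ≤ 2 ^ (μ + 2) := by
  induction μ, hμ using Nat.le_induction with
  | base => norm_num
  | succ m hm ih =>
    obtain ⟨u, rfl⟩ := Nat.exists_eq_add_of_le hm
    have : 2 ^ (22 + u + 1 + 2) = 2 * 2 ^ (22 + u + 2) := by ring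
    rw [this]
    refine le_trans ?_ (Nat.mul_le_mul_left 2 ih)
    ring_nf
    nlinarith [Nat.zero_le u, Nat.zero_le (u ^ 2), Nat.zero_le (u ^ 3), Nat.zero_le (u ^ 4)]

theorem mul_le_two_pow_add_two {μ : ℕ} (hμ : 22 ≤ μ) :
    50 * (2 * (μ * (2 * μ + 40)) + 1) * (2 * μ + 1) ≤ 2 ^ (μ + 2) := by
  induction μ, hμ using Nat.le_induction with
  | base => norm_num
  | succ m hm ih =>
    obtain ⟨u, rfl⟩ := Nat.exists_eq_add_of_le hm
    have : 2 ^ (22 + u + 1 + 2) = 2 * 2 ^ (22 + u + 2) := by ring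
    rw [this]
    refine le_trans ?_ (Nat.mul_le_mul_left 2 ih)
    ring_nf
    nlinarith [Nat.zero_le u, Nat.zero_le (u ^ 2), Nat.zero_le (u ^ 3)]

theorem mul_le_mul_two_pow {μ ν : ℕ} (hμ : 22 ≤ μ) (hν : 30 ≤ ν) :
    150 * (2 * (μ * (ν + 40)) + 1) * (2 * μ + 1) ≤ (ν - 1) * 2 ^ (μ - 2) := by
  obtain ⟨v, rfl⟩ := Nat.exists_eq_add_of_le hν
  induction μ, hμ using Nat.le_induction with
  | base =>
    rw [show 30 + v - 1 = 29 + v by omega]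
    norm_num
    omega
  | succ m hm ih =>
    obtain ⟨u, rfl⟩ := Nat.exists_eq_add_of_le hm
    have : 2 ^ (22 + u + 1 - 2) = 2 * 2 ^ (22 + u - 2) := by
      rw [← pow_succ']; congr 1; omega
    rw [this]
    refine le_trans ?_ ((Nat.mul_le_mul_left 2 ih).trans_eq (mul_left_comm _ _ _))
    ring_nf
    nlinarith [Nat.zero_le u, Nat.zero_le (u ^ 2), Nat.zero_le (u * v), Nat.zero_le (u ^ 2 * v)]

open Complex ComplexConjugate in
theorem lt_norm_pow_add_conj_pow_of_large {β : ℂ} {a : ℤ} {N ℓ : ℕ} (ha : a ≠ 0)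
    (haN : a ^ 2 < N) (hre : β.re = a) (hnorm : normSq β = N) (hℓ : ℓ.Prime)
    (hroot : ∀ j : ℕ, 0 < j → (-conj β) ^ j ≠ β ^ j)
    (hℓ' : 2 ^ 21 ≤ ℓ) (hN' : 2 ^ 29 ≤ N) (hNℓ : N ≤ ℓ ^ 2) :
    2 * √N < ‖β ^ ℓ + conj β ^ ℓ‖ := by
  have hℓ0 : ℓ ≠ 0 := hℓ.ne_zero
  have hN0 : N ≠ 0 := by omega
  obtain ⟨μ, hμdef⟩ : ∃ μ, μ = Nat.log 2 ℓ + 1 := ⟨_, rfl⟩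
  obtain ⟨ν, hνdef⟩ : ∃ ν, ν = Nat.log 2 N + 1 := ⟨_, rfl⟩
  have hμ : 22 ≤ μ := by
    have := Nat.le_log_of_pow_le one_lt_two hℓ'
    omega
  have hν : 30 ≤ ν := by
    have := Nat.le_log_of_pow_le one_lt_two hN'
    omega
  have hℓlt : ℓ < 2 ^ μ := hμdef ▸ Nat.lt_pow_succ_log_self one_lt_two ℓ
  have hNlt : N < 2 ^ ν := hνdef ▸ Nat.lt_pow_succ_log_self one_lt_two N
  have hℓge : 2 ^ (μ - 1) ≤ ℓ := by
    rw [hμdef]; exact Nat.pow_log_le_self 2 hℓ0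
  have hNge : 2 ^ (ν - 1) ≤ N := by
    rw [hνdef]; exact Nat.pow_log_le_self 2 hN0
  have hνμ : ν ≤ 2 * μ := by
    have h1 : 2 ^ (ν - 1) < 2 ^ (2 * μ) := by
      calc 2 ^ (ν - 1) ≤ ℓ ^ 2 := hNge.trans hNℓ
        _ < (2 ^ μ) ^ 2 := Nat.pow_lt_pow_left hℓlt two_ne_zero
        _ = 2 ^ (2 * μ) := by rw [← pow_mul, mul_comm]
    have := (Nat.pow_lt_pow_iff_right one_lt_two).mp h1
    omega
  obtain ⟨σ, hσ⟩ : ∃ σ, σ = μ * (ν + 40) := ⟨_, rfl⟩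
  have hσle : σ ≤ μ * (2 * μ + 40) := by rw [hσ]; gcongr
  obtain ⟨Ξ, hΞ⟩ : ∃ Ξ, Ξ = σ + 26 * μ + 14 := ⟨_, rfl⟩
  have hΞsq : Ξ ^ 2 ≤ 2 ^ (μ + 2) := by
    refine le_trans (Nat.pow_le_pow_left ?_ 2) (sq_le_two_pow_add_two hμ)
    rw [hΞ]; nlinarith
  obtain ⟨T, hT⟩ : ∃ T, T = 50 * (2 * σ + 1) * (2 * μ + 1) := ⟨_, rfl⟩
  have hTle : T ≤ 2 ^ (μ + 2) := by
    refine le_trans ?_ (mul_le_two_pow_add_two hμ)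
    rw [hT]; gcongr
  obtain ⟨x, hx⟩ : ∃ x, x + 2 = 25 * (2 * σ + 1) * (2 * μ + 1) :=
    ⟨25 * (2 * σ + 1) * (2 * μ + 1) - 2, by
      have : 1 * 1 ≤ (2 * σ + 1) * (2 * μ + 1) := Nat.mul_le_mul (by omega) (by omega)
      rw [mul_assoc]; omega⟩
  have hxT : 2 * x + 4 = T := by rw [hT]; linarith
  have hexp : 2 + ν * (μ * (51 * μ + 25)) + μ * (50 * (2 * σ + 1)) + (2 * μ + 4) +
      (μ + 8) * (25 * (2 * σ + 1)) + 73 * (μ * Ξ) ≤ 3 * x := by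
    have h1 : 2 + ν * (μ * (51 * μ + 25)) + μ * (50 * (2 * σ + 1)) + (2 * μ + 4) +
      (μ + 8) * (25 * (2 * σ + 1)) + 73 * (μ * Ξ) + 6 ≤ 3 * (x + 2) := by
      rw [hx, hΞ, hσ]
      obtain ⟨u, rfl⟩ := Nat.exists_eq_add_of_le hμ
      obtain ⟨v, rfl⟩ := Nat.exists_eq_add_of_le hν
      ring_nf
      nlinarith [Nat.zero_le u, Nat.zero_le (u ^ 2), Nat.zero_le (u * v), Nat.zero_le (u ^ 2 * v),
        Nat.zero_le v]
    omega
  refine lt_norm_pow_add_conj_pow ha haN hre hnorm hℓ (by omega) (h := μ) (ρ := 50 * μ + 25)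
    (σ := σ) (A := 50 * (2 * σ + 1)) (x := x) (Ξ := Ξ) (fun j hj _ => hroot j hj)
    (by omega) ?_ (by omega) (by omega) ?_ ?_ ?_ ?_
  · have h1 : 2 ^ (μ + 2) = 8 * 2 ^ (μ - 1) := by
      rw [show μ + 2 = μ - 1 + 3 by omega, pow_add]; ring
    have h2 : 50 * (2 * (22 * 40) + 1) * (2 * μ + 1) ≤ 2 ^ (μ + 2) := by
      refine le_trans ?_ (mul_le_two_pow_add_two hμ)
      gcongr
      omega
    omega
  · rw [← hT]; omega
  · rw [mul_right_comm]; nlinarith [Nat.zero_le σ]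
  · rw [← hT, show 50 * μ + 25 + μ = 51 * μ + 25 by ring]
    have h1 : N ^ (μ * (51 * μ + 25)) ≤ 2 ^ (ν * (μ * (51 * μ + 25))) := by
      rw [pow_mul 2]; exact Nat.pow_le_pow_left hNlt.le _
    have h2 : ℓ ^ (50 * (2 * σ + 1)) ≤ 2 ^ (μ * (50 * (2 * σ + 1))) := by
      rw [pow_mul 2]; exact Nat.pow_le_pow_left hℓlt.le _
    have h3 : (2 * x + 2) * T ≤ 2 ^ (2 * μ + 4) := by
      calc (2 * x + 2) * T ≤ T * T := Nat.mul_le_mul_right _ (by omega)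
        _ ≤ 2 ^ (μ + 2) * 2 ^ (μ + 2) := Nat.mul_le_mul hTle hTle
        _ = 2 ^ (2 * μ + 4) := by rw [← pow_add]; congr 1; ring
    have h4 : (8 * Ξ) ^ (50 * (2 * σ + 1)) ≤ 2 ^ ((μ + 8) * (25 * (2 * σ + 1))) := by
      rw [show 50 * (2 * σ + 1) = 2 * (25 * (2 * σ + 1)) by ring, pow_mul, pow_mul 2]
      refine Nat.pow_le_pow_left ?_ _
      calc (8 * Ξ) ^ 2 = 2 ^ 6 * Ξ ^ 2 := by ring
        _ ≤ 2 ^ 6 * 2 ^ (μ + 2) := Nat.mul_le_mul_left _ hΞsq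
        _ = 2 ^ (μ + 8) := by rw [← pow_add]; congr 1; ring
    calc 4 * (N ^ (μ * (51 * μ + 25)) * ℓ ^ (50 * (2 * σ + 1)) * ((2 * x + 2) * T *
          (8 * Ξ) ^ (50 * (2 * σ + 1)) * 2 ^ (73 * (μ * Ξ))))
        ≤ 2 ^ 2 * (2 ^ (ν * (μ * (51 * μ + 25))) * 2 ^ (μ * (50 * (2 * σ + 1))) *
          (2 ^ (2 * μ + 4) * 2 ^ ((μ + 8) * (25 * (2 * σ + 1))) * 2 ^ (73 * (μ * Ξ)))) := by
          gcongr
          norm_num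
      _ = 2 ^ (2 + ν * (μ * (51 * μ + 25)) + μ * (50 * (2 * σ + 1)) + (2 * μ + 4) +
          (μ + 8) * (25 * (2 * σ + 1)) + 73 * (μ * Ξ)) := by
          simp only [← pow_add]; congr 1; ring
      _ ≤ 2 ^ (3 * x) := Nat.pow_le_pow_right two_pos hexp
      _ = 8 ^ x := by rw [pow_mul]; norm_num
  · have hk : 2 ^ (μ - 2) ≤ (ℓ - 1) / 2 := by
      have h1 : 2 ^ (μ - 1) = 2 * 2 ^ (μ - 2) := by
        rw [← pow_succ']; congr 1; omega
      have hodd : Odd ℓ := hℓ.odd_of_ne_two (by omega)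
      obtain ⟨m, rfl⟩ := hodd
      omega
    have h2 := mul_le_mul_two_pow hμ hν
    rw [← hσ] at h2
    calc 8 ^ (2 * x) = 2 ^ (3 * (2 * x)) := by rw [pow_mul 2 3]; norm_num
      _ ≤ 2 ^ ((ν - 1) * 2 ^ (μ - 2)) := Nat.pow_le_pow_right two_pos (by
          refine le_trans ?_ h2
          have : 150 * (2 * σ + 1) * (2 * μ + 1) = 3 * T := by rw [hT]; ring
          omega)
      _ ≤ 2 ^ ((ν - 1) * ((ℓ - 1) / 2)) := Nat.pow_le_pow_right two_pos (Nat.mul_le_mul_left _ hk)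
      _ = (2 ^ (ν - 1)) ^ ((ℓ - 1) / 2) := pow_mul _ _ _
      _ ≤ N ^ ((ℓ - 1) / 2) := Nat.pow_le_pow_left hNge _

/-- `2 ^ (n - 1) % n ^ 2` for `n = m + 1`, computed with small intermediate powers. -/
def twoPowPredMod (m : ℕ) : ℕ :=
  Nat.mod (Nat.mul (Nat.pow (Nat.mod (Nat.pow (Nat.mod (Nat.pow 2 (Nat.div m 1024))
    (Nat.pow (Nat.succ m) 2)) 32) (Nat.pow (Nat.succ m) 2)) 32) (Nat.pow 2 (Nat.mod m 1024)))
    (Nat.pow (Nat.succ m) 2)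

/-- Either `n = m + 1` has an odd prime factor below `64`, or `n` does not satisfy
`2 ^ (n - 1) ≡ 1` modulo `n ^ 2`, or `n` is `1` or `1093`. -/
def nonWieferichTest (m : ℕ) : Bool :=
  cond (Nat.beq (Nat.gcd (Nat.succ m) 58644190679703485491635) 1)
    (or (not (Nat.beq (twoPowPredMod m) 1)) (or (Nat.beq m 0) (Nat.beq m 1092))) true

/-- The conjunction of `nonWieferichTest (4 * j)` over the `2 ^ d` indices
`(i - 1) * 2 ^ d ≤ j < i * 2 ^ d`, for `0 < i`. -/
def nonWieferichTree (d : ℕ) : ℕ → Bool :=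
  Nat.rec (motive := fun _ => ℕ → Bool)
    (fun i => Nat.rec (motive := fun _ => Bool) true (fun j _ =>
      Nat.rec (motive := fun _ => Bool) true (fun m _ => nonWieferichTest m)
        (Nat.succ (Nat.mul 4 j))) i)
    (fun _ ih i => Nat.rec (motive := fun _ => Bool) true
      (fun j _ => and (ih (Nat.succ (Nat.mul 2 j))) (ih (Nat.succ (Nat.succ (Nat.mul 2 j))))) i) d

theorem twoPowPredMod_eq (m : ℕ) : twoPowPredMod m = 2 ^ m % (m + 1) ^ 2 := by
  change (((2 ^ (m / 1024) % (m + 1) ^ 2) ^ 32 % (m + 1) ^ 2) ^ 32 * 2 ^ (m % 1024)) %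
    (m + 1) ^ 2 = _
  rw [← Nat.pow_mod, ← pow_mul, Nat.mul_mod, ← Nat.pow_mod, ← pow_mul, ← Nat.mul_mod, ← pow_add]
  congr 2
  omega

theorem nonWieferichTest_of_tree (d : ℕ) : ∀ i j : ℕ, nonWieferichTree d (i + 1) = true →
    i * 2 ^ d ≤ j → j < (i + 1) * 2 ^ d → nonWieferichTest (4 * j) = true := by
  induction d with
  | zero =>
    intro i j h h1 h2
    obtain rfl : j = i := by omega
    exact h
  | succ d ih =>
    intro i j h h1 h2
    have h' : (nonWieferichTree d (2 * i + 1) && nonWieferichTree d (2 * i + 1 + 1)) = true := h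
    rw [Bool.and_eq_true] at h'
    rw [pow_succ] at h1 h2
    by_cases hj : j < (2 * i + 1) * 2 ^ d
    · exact ih _ _ h'.1 (by nlinarith) hj
    · exact ih _ _ h'.2 (by omega) (by nlinarith)

set_option maxRecDepth 100000 in
theorem nonWieferichTree_eighteen : nonWieferichTree 18 1 = true := by decide +kernel

theorem eq_1093_of_wieferich {p : ℕ} (hp : p.Prime) (hmod : p % 4 = 1)
    (hw : 2 ^ (p - 1) ≡ 1 [MOD p ^ 2]) (hlt : p < 2 ^ 20) : p = 1093 := by
  by_cases h64 : p < 64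
  · exfalso
    interval_cases p <;> first | omega | (revert hp; norm_num; done) | (revert hw; decide)
  · have h := nonWieferichTest_of_tree 18 0 (p / 4) nonWieferichTree_eighteen (by omega) (by omega)
    have h4 : 4 * (p / 4) + 1 = p := by omega
    have hp1 : 4 * (p / 4) = p - 1 := by omega
    have hcop : Nat.gcd (Nat.succ (4 * (p / 4))) 58644190679703485491635 = 1 := by
      rw [Nat.succ_eq_add_one, h4]
      refine (Nat.Prime.coprime_iff_not_dvd hp).mpr fun hdvd => ?_
      rw [show 58644190679703485491635 = 3 * 5 * 7 * 11 * 13 * 17 * 19 * 23 * 29 * 31 * 37 * 41 *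
        43 * 47 * 53 * 59 * 61 by norm_num] at hdvd
      simp only [hp.dvd_mul] at hdvd
      have hle : ∀ q : ℕ, 0 < q → q < 64 → ¬ p ∣ q := fun q h0 hq hd =>
        h64 ((Nat.le_of_dvd h0 hd).trans_lt hq)
      simp only [hle, Nat.ofNat_pos, Nat.reduceLT, or_self] at hdvd
    have htwo : twoPowPredMod (4 * (p / 4)) = 1 := by
      rw [twoPowPredMod_eq, h4, hp1]
      have : 1 < p ^ 2 := Nat.one_lt_pow two_ne_zero hp.one_lt
      exact Nat.mod_eq_of_modEq hw this
    rw [nonWieferichTest, hcop, htwo] at h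
    have h' : (Nat.beq (4 * (p / 4)) 0 || Nat.beq (4 * (p / 4)) 1092) = true := h
    rw [Bool.or_eq_true, Nat.beq_eq, Nat.beq_eq] at h'
    omega

/-- The Lucas sequence `b ^ j + c ^ j` for `b + c = P` and `b * c = N`. -/
def lucasTrace (P N : ℤ) : ℕ → ℤ
  | 0 => 2
  | 1 => P
  | j + 2 => P * lucasTrace P N (j + 1) - N * lucasTrace P N j

theorem pow_add_pow_eq_lucasTrace {R : Type*} [CommRing R] {b c : R} {P N : ℤ} (hP : b + c = P)
    (hN : b * c = N) : ∀ j, b ^ j + c ^ j = lucasTrace P N j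
  | 0 => by simp [lucasTrace, one_add_one_eq_two]
  | 1 => by simp [lucasTrace, hP]
  | j + 2 => by
    rw [lucasTrace]
    push_cast
    rw [← pow_add_pow_eq_lucasTrace hP hN (j + 1), ← pow_add_pow_eq_lucasTrace hP hN j, ← hP, ← hN]
    ring

theorem lucasTrace_modEq (P N : ℤ) (j : ℕ) : lucasTrace P N (j + 1) ≡ P ^ (j + 1) [ZMOD N] := by
  induction j with
  | zero => simp [lucasTrace]
  | succ j ih =>
    have h : P * lucasTrace P N (j + 1) - N * lucasTrace P N j ≡
        P * lucasTrace P N (j + 1) [ZMOD N] := by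
      rw [Int.modEq_iff_dvd]
      exact ⟨lucasTrace P N j, by ring⟩
    rw [lucasTrace, pow_succ' P (j + 1)]
    exact h.trans (ih.mul_left P)

theorem exists_odd_lucasTrace_eq (a : ℤ) {N : ℤ} (hN : Odd N) (i : ℕ) :
    ∃ C, Odd C ∧ lucasTrace (2 * a) N (2 * i + 1) = 2 * a * C := by
  have hstep : ∀ j, lucasTrace (2 * a) N (j + 4) =
      (4 * a ^ 2 - 2 * N) * lucasTrace (2 * a) N (j + 2)
      - N ^ 2 * lucasTrace (2 * a) N j := fun j => by
    simp only [lucasTrace]; ring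
  induction i using Nat.twoStepInduction with
  | zero => exact ⟨1, odd_one, by simp [lucasTrace]⟩
  | one =>
    refine ⟨4 * a ^ 2 - 3 * N, ?_, by simp [lucasTrace]; ring⟩
    exact Even.sub_odd ⟨2 * a ^ 2, by ring⟩ (Odd.mul ⟨1, rfl⟩ hN)
  | more i h1 h2 =>
    obtain ⟨C₁, hC₁, h1⟩ := h1
    obtain ⟨C₂, hC₂, h2⟩ := h2
    refine ⟨(4 * a ^ 2 - 2 * N) * C₂ - N ^ 2 * C₁, ?_, ?_⟩
    · exact Even.sub_odd (Even.mul_right ⟨2 * a ^ 2 - N, by ring⟩ _) (hN.pow.mul hC₁)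
    · rw [show 2 * (i + 1 + 1) + 1 = 2 * i + 1 + 4 by ring, hstep, h1,
        show 2 * i + 1 + 2 = 2 * (i + 1) + 1 by ring, h2]
      ring

theorem pow_pred_dvd_of_pow_dvd_pow_sub_one {p m k u : ℕ} (hp : p.Prime) (hp2 : p ≠ 2) (hk : k ≠ 0)
    (hu1 : p ∣ u ^ (p - 1) - 1) (hu2 : ¬ p ^ 2 ∣ u ^ (p - 1) - 1) (hu : 1 < u)
    (h : p ^ m ∣ u ^ k - 1) : p ^ (m - 1) ∣ k := by
  have : Fact p.Prime := ⟨hp⟩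
  have hp1 : p - 1 ≠ 0 := by have := hp.two_le; omega
  have hupow : 1 < u ^ (p - 1) := Nat.one_lt_pow hp1 hu
  have h1 : ¬ p ∣ u ^ (p - 1) := fun hd => by
    have h2 := Nat.dvd_sub hd hu1
    rw [Nat.sub_sub_self hupow.le] at h2
    exact hp.one_lt.ne' (Nat.dvd_one.mp h2)
  have hlte := padicValNat.pow_sub_pow (p := p) (hp.odd_of_ne_two hp2) hupow hu1 h1 hk
  have hv1 : padicValNat p (u ^ (p - 1) - 1) ≤ 1 := by
    by_contra! hlt
    exact hu2 ((padicValNat_dvd_iff_le (by omega)).mpr hlt)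
  have hne : (u ^ (p - 1)) ^ k - 1 ≠ 0 := by
    have := Nat.one_lt_pow hk hupow
    omega
  have hdvd : p ^ m ∣ (u ^ (p - 1)) ^ k - 1 := by
    refine h.trans ?_
    rw [← pow_mul, mul_comm, pow_mul]
    simpa using Nat.sub_dvd_pow_sub_pow (u ^ k) 1 (p - 1)
  rw [padicValNat_dvd_iff_le hne] at hdvd
  rw [one_pow] at hlte
  exact (padicValNat_dvd_iff_le hk).mpr (by omega)

theorem natAbs_eq_of_sq_lucasTrace_eq {a N : ℤ} {q ℓ : ℕ} (hN : Odd N) (hq : q.Prime)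
    (hℓ : ℓ.Prime) (hV : lucasTrace (2 * a) N ℓ ^ 2 = (4 * q) ^ 2) :
    ℓ ≠ 2 ∧ (a.natAbs = 2 ∨ a.natAbs = 2 * q) := by
  have hℓ2 : ℓ ≠ 2 := by
    rintro rfl
    simp only [lucasTrace] at hV
    obtain ⟨k, hk⟩ := hN
    rcases sq_eq_sq_iff_eq_or_eq_neg.mp hV with h | h <;> ring_nf at h <;> omega
  refine ⟨hℓ2, ?_⟩
  obtain ⟨i, hi⟩ := hℓ.odd_of_ne_two hℓ2
  obtain ⟨C, hC, hVC⟩ := exists_odd_lucasTrace_eq a hN i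
  rw [hi, hVC] at hV
  have h := Int.natAbs_eq_iff_sq_eq.mpr hV
  simp only [Int.natAbs_mul, Int.natAbs_natCast, Int.reduceAbs] at h
  have hmul : a.natAbs * C.natAbs = 2 * q := by linarith
  have hCq : C.natAbs ∣ q := by
    have hco : Nat.Coprime C.natAbs 2 :=
      (Nat.coprime_two_right).mpr (Int.natAbs_odd.mpr hC)
    exact hco.dvd_of_dvd_mul_left ⟨a.natAbs, by rw [← hmul, mul_comm]⟩
  rcases (Nat.dvd_prime hq).mp hCq with h1 | h1
  · right; simpa [h1] using hmul
  · left; rw [h1] at hmul; exact Nat.eq_of_mul_eq_mul_right hq.pos hmul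

theorem pow_pred_eq_one_of_sq_lucasTrace_eq {p m q ℓ : ℕ} {a : ℤ} (hodd : Odd p) (hm : 2 ≤ m)
    (hw : 2 ^ (p - 1) ≡ 1 [MOD p ^ 2]) (hℓ : ℓ ≠ 0) (ha : a.natAbs = 2)
    (hV : lucasTrace (2 * a) ((p : ℤ) ^ m) ℓ ^ 2 = (4 * q) ^ 2) : q ^ (p - 1) ≡ 1 [MOD p ^ 2] := by
  have key {R : Type} [CommRing R] {v a q : R} {k : ℕ} (h1 : v = (2 * a) ^ ℓ)
      (h2 : v ^ 2 = (4 * q) ^ 2) (h3 : a ^ 2 = 4) (h4 : (2 : R) ^ (2 * k) = 1) :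
      q ^ (2 * k) = 1 := by
    calc q ^ (2 * k) = (2 ^ (2 * k)) ^ 2 * q ^ (2 * k) := by rw [h4]; ring
      _ = ((4 * q) ^ 2) ^ k := by
        rw [show (4 : R) = 2 ^ 2 by norm_num]; simp only [← pow_mul, mul_pow]; ring_nf
      _ = ((4 * a ^ 2) ^ ℓ) ^ k := by
        rw [← h2, h1, show (4 : R) = 2 ^ 2 by norm_num, ← mul_pow 2 a]
        simp only [← pow_mul]
        ring_nf
      _ = ((2 ^ (2 * k)) ^ 2) ^ ℓ := by
        rw [h3, show (4 : R) * 4 = 2 ^ 4 by norm_num]; simp only [← pow_mul]; congr 1; ring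
      _ = 1 := by rw [h4]; simp
  obtain ⟨i, rfl⟩ := Nat.exists_eq_succ_of_ne_zero hℓ
  have h1 := (lucasTrace_modEq (2 * a) ((p : ℤ) ^ m) i).of_dvd (pow_dvd_pow _ hm)
  rw [← Nat.cast_pow p 2, ← ZMod.intCast_eq_intCast_iff, Int.cast_pow, Int.cast_mul,
    Int.cast_ofNat] at h1
  have ha2 : a ^ 2 = 4 := by rw [← Int.natAbs_sq, ha]; norm_num
  have hV' := congrArg (Int.cast : ℤ → ZMod (p ^ 2)) hV
  have ha2' := congrArg (Int.cast : ℤ → ZMod (p ^ 2)) ha2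
  obtain ⟨k, hk⟩ := hodd
  have hk : p - 1 = 2 * k := by omega
  rw [← ZMod.natCast_eq_natCast_iff, Nat.cast_pow, Nat.cast_one, hk] at hw ⊢
  simp only [Int.cast_pow, Int.cast_mul, Int.cast_ofNat, Int.cast_natCast] at hV' ha2'
  exact key h1 hV' ha2' (by simpa using hw)

theorem pow_pred_dvd_pred_of_sq_lucasTrace_eq {p m q ℓ : ℕ} {a : ℤ} (hp : p.Prime) (hp2 : p ≠ 2)
    (hq0 : q ≠ 0) (hpq : ¬ p ∣ q) (hqw : ¬ q ^ (p - 1) ≡ 1 [MOD p ^ 2])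
    (hw : 2 ^ (p - 1) ≡ 1 [MOD p ^ 2]) (hℓ : 1 < ℓ) (ha : a.natAbs = 2 * q)
    (hV : lucasTrace (2 * a) ((p : ℤ) ^ m) ℓ ^ 2 = (4 * q) ^ 2) : p ^ (m - 1) ∣ ℓ - 1 := by
  obtain ⟨i, rfl⟩ : ∃ i, ℓ = i + 1 := ⟨ℓ - 1, by omega⟩
  have hi : i ≠ 0 := by omega
  set u : ℕ := (4 * q) ^ 2 with hu
  have hu0 : 0 < u := by positivity
  have hu1 : 1 < u := by
    have : 0 < q := by omega
    rw [hu]; nlinarith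
  have hau : (2 * a) ^ 2 = (u : ℤ) := by
    rw [mul_pow, ← Int.natAbs_sq a, ha, hu]; push_cast; ring
  have hpu : p.Coprime u := by
    have h4 : p.Coprime 4 := by
      rw [show 4 = 2 ^ 2 by norm_num]
      exact ((Nat.coprime_primes hp Nat.prime_two).mpr hp2).pow_right 2
    exact (h4.mul_right ((Nat.Prime.coprime_iff_not_dvd hp).mpr hpq)).pow_right 2
  have hdvd : p ^ m ∣ u ^ i - 1 := by
    have h1 := (lucasTrace_modEq (2 * a) ((p : ℤ) ^ m) i).pow 2
    rw [hV, pow_right_comm, hau] at h1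
    have h2 : u ^ (i + 1) ≡ u [MOD p ^ m] := by
      rw [← Int.natCast_modEq_iff, hu]
      push_cast
      rw [hu] at h1
      push_cast at h1
      exact h1.symm
    have h3 : u ^ i ≡ 1 [MOD p ^ m] := by
      refine Nat.ModEq.cancel_left_of_coprime (c := u) (Nat.Coprime.pow_left m hpu) ?_
      rwa [mul_one, ← pow_succ']
    exact (Nat.modEq_iff_dvd' (Nat.one_le_pow _ _ hu0)).mp h3.symm
  refine pow_pred_dvd_of_pow_dvd_pow_sub_one hp hp2 hi ?_ ?_ hu1 hdvd
  · have : Fact p.Prime := ⟨hp⟩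
    refine (Nat.modEq_iff_dvd' (Nat.one_le_pow _ _ hu0)).mp ?_
    rw [← Nat.totient_prime hp]
    exact (Nat.ModEq.pow_totient hpu.symm).symm
  · intro h
    have h1 := ((Nat.modEq_iff_dvd' (Nat.one_le_pow _ _ hu0)).mpr h).symm
    have h2 : (q ^ (p - 1)) ^ 2 ≡ 1 [MOD p ^ 2] := by
      have h3 : u ^ (p - 1) = (2 ^ (p - 1)) ^ 4 * (q ^ (p - 1)) ^ 2 := by
        rw [hu, show 4 = 2 ^ 2 by norm_num]; simp only [mul_pow, ← pow_mul]; ring_nf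
      have h4 := (hw.pow 4).mul_right ((q ^ (p - 1)) ^ 2)
      rw [← h3, one_pow, one_mul] at h4
      exact h4.symm.trans h1
    have h3 : q ^ (p - 1) ≡ 1 [MOD p] := by
      rw [← Nat.totient_prime hp]
      exact Nat.ModEq.pow_totient ((Nat.Prime.coprime_iff_not_dvd hp).mpr hpq).symm
    have h4 : 1 ≤ q ^ (p - 1) := Nat.one_le_pow _ _ (Nat.pos_of_ne_zero hq0)
    apply hqw
    generalize q ^ (p - 1) = x at *
    have h5 := (Nat.modEq_iff_dvd' (Nat.one_le_pow 2 x h4)).mp h2.symm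
    rw [show x ^ 2 - 1 = (x - 1) * (x + 1) by rw [mul_comm]; exact Nat.sq_sub_sq x 1] at h5
    refine ((Nat.modEq_iff_dvd' h4).mpr (Nat.Coprime.dvd_of_dvd_mul_right ?_ h5)).symm
    refine Nat.Coprime.pow_left 2 ((Nat.Prime.coprime_iff_not_dvd hp).mpr fun h6 => ?_)
    have h7 := (Nat.modEq_iff_dvd' h4).mp h3.symm
    have h8 := Nat.dvd_sub h6 h7
    rw [show x + 1 - (x - 1) = 2 by omega] at h8
    exact hp2 ((Nat.prime_dvd_prime_iff_eq hp Nat.prime_two).mp h8)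

theorem not_prime_dvd_of_sq_lucasTrace_eq {p q m j ℓ : ℕ} {a : ℤ} (hp : p.Prime) (hp2 : p ≠ 2)
    (hpq : ¬ p ∣ q) (hm : m ≠ 0) (hℓ : ℓ ≠ 0)
    (hV : lucasTrace (2 * a) ((p : ℤ) ^ m) ℓ ^ 2 = (4 * q) ^ 2) :
    ¬ (p : ℤ) ∣ lucasTrace (2 * a) ((p : ℤ) ^ m) (j + 1) := by
  have hpZ : Prime (p : ℤ) := Nat.prime_iff_prime_int.mp hp
  intro h
  obtain ⟨i, rfl⟩ := Nat.exists_eq_succ_of_ne_zero hℓ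
  have h1 := (lucasTrace_modEq (2 * a) ((p : ℤ) ^ m) j).of_dvd (dvd_pow_self (p : ℤ) hm)
  have h2 := (lucasTrace_modEq (2 * a) ((p : ℤ) ^ m) i).of_dvd (dvd_pow_self (p : ℤ) hm)
  have h3 : (p : ℤ) ∣ 2 * a := hpZ.dvd_of_dvd_pow (h1.dvd_iff.mp h)
  have h4 := hpZ.dvd_of_dvd_pow 
    (hV ▸ dvd_pow (h2.dvd_iff.mpr (dvd_pow h3 (by omega))) two_ne_zero)
  have h5 : p ∣ 2 ^ 2 * q := by exact_mod_cast h4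
  rcases (Nat.Prime.dvd_mul hp).mp h5 with h6 | h6
  · exact hp2 ((Nat.prime_dvd_prime_iff_eq hp Nat.prime_two).mp (hp.dvd_of_dvd_pow h6))
  · exact hpq h6

open Complex ComplexConjugate in
theorem sq_pow_add_conj_pow_ne {p q m ℓ : ℕ} {β : ℂ} {a : ℤ} (hp : p.Prime) (hmod : p % 4 = 1)
    (hw : 2 ^ (p - 1) ≡ 1 [MOD p ^ 2]) (hq : q.Prime) (hqp : q ∣ p - 2)
    (hqw : ¬ q ^ (p - 1) ≡ 1 [MOD p ^ 2]) (hm : 2 ≤ m) (hℓ : ℓ.Prime) (hre : β.re = a)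
    (hnorm : normSq β = (p : ℝ) ^ m) (ham : a ^ 2 < (p : ℤ) ^ m) :
    (β ^ ℓ + conj β ^ ℓ) ^ 2 ≠ (4 * q) ^ 2 := by
  intro h
  have hp5 : 5 ≤ p := by
    have := hp.two_le
    omega
  have hp2 : p ≠ 2 := by omega
  have hqle : q ≤ p - 2 := Nat.le_of_dvd (by omega) hqp
  have hpq : ¬ p ∣ q := fun h => by
    have := Nat.le_of_dvd hq.pos h
    omega
  have htr : β + conj β = ((2 * a : ℤ) : ℂ) := by
    rw [add_conj, hre]; push_cast; ring
  have hnm : β * conj β = (((p : ℤ) ^ m : ℤ) : ℂ) := by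
    rw [mul_conj, hnorm]; push_cast; ring
  have hV : lucasTrace (2 * a) ((p : ℤ) ^ m) ℓ ^ 2 = (4 * q) ^ 2 := by
    rw [pow_add_pow_eq_lucasTrace htr hnm] at h
    exact_mod_cast h
  have hodd : Odd ((p : ℤ) ^ m) := by
    exact_mod_cast (hp.odd_of_ne_two hp2).pow
  obtain ⟨hℓ2, ha | ha⟩ := natAbs_eq_of_sq_lucasTrace_eq hodd hq hℓ hV
  · exact hqw (pow_pred_eq_one_of_sq_lucasTrace_eq (hp.odd_of_ne_two hp2) hm hw hℓ.ne_zero ha hV)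
  have hdvd := pow_pred_dvd_pred_of_sq_lucasTrace_eq hp hp2 hq.ne_zero hpq hqw hw hℓ.one_lt ha hV
  have hℓodd := hℓ.odd_of_ne_two hℓ2
  have hℓ3 := hℓ.two_le
  have h2dvd : 2 * p ^ (m - 1) ∣ ℓ - 1 := by
    refine Nat.Coprime.mul_dvd_of_dvd_of_dvd ?_ ?_ hdvd
    · exact Nat.coprime_two_left.mpr (hp.odd_of_ne_two hp2).pow
    · obtain ⟨k, hk⟩ := hℓodd
      exact ⟨k, by omega⟩
  have hℓlarge : 2 * p ^ (m - 1) + 1 ≤ ℓ := by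
    have := Nat.le_of_dvd (by omega) h2dvd
    omega
  have hNℓ : p ^ m ≤ ℓ ^ 2 := by
    calc p ^ m ≤ p ^ (2 * (m - 1)) := Nat.pow_le_pow_right hp.pos (by omega)
      _ = (p ^ (m - 1)) ^ 2 := by rw [mul_comm, pow_mul]
      _ ≤ ℓ ^ 2 := Nat.pow_le_pow_left (by omega) 2
  have ha0 : a ≠ 0 := by
    have := hq.pos
    omega
  have hpm : p ^ 1 ≤ p ^ (m - 1) := Nat.pow_le_pow_right hp.pos (by omega)
  have hlarge : 2 ^ 21 ≤ ℓ ∧ 2 ^ 29 ≤ p ^ m := by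
    rcases lt_or_ge p (2 ^ 20) with hlt | hge
    · obtain rfl := eq_1093_of_wieferich hp hmod hw hlt
      have hq' : q = 1091 := by
        have : Nat.Prime 1091 := by norm_num
        exact (Nat.prime_dvd_prime_iff_eq hq this).mp hqp
      have hm3 : 3 ≤ m := by
        by_contra hlt
        obtain rfl : m = 2 := by omega
        rw [← Int.natAbs_sq, ha, hq'] at ham
        norm_num at ham
      have h1 : 1093 ^ 2 ≤ 1093 ^ (m - 1) := Nat.pow_le_pow_right (by norm_num) (by omega)
      have h2 : 1093 ^ 3 ≤ 1093 ^ m := Nat.pow_le_pow_right (by norm_num) hm3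
      norm_num at h1 h2
      omega
    · have h1 : p ^ 2 ≤ p ^ m := Nat.pow_le_pow_right hp.pos hm
      rw [pow_one] at hpm
      constructor
      · omega
      · nlinarith
  have hroot : ∀ j : ℕ, 0 < j → (-conj β) ^ j ≠ β ^ j := by
    intro j hj he
    obtain ⟨i, rfl⟩ : ∃ i, j = i + 1 := ⟨j - 1, by omega⟩
    have h1 := pow_add_pow_eq_lucasTrace htr hnm (i + 1)
    have h2 : lucasTrace (2 * a) ((p : ℤ) ^ m) (i + 1) ^ 2 =
        2 * (1 + (-1) ^ (i + 1)) * ((p : ℤ) ^ m) ^ (i + 1) := by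
      have : ((lucasTrace (2 * a) ((p : ℤ) ^ m) (i + 1) : ℤ) : ℂ) ^ 2 =
          2 * (1 + (-1) ^ (i + 1)) * (((p : ℤ) ^ m : ℤ) : ℂ) ^ (i + 1) := by
        rw [← h1, ← hnm, mul_pow β]
        rw [neg_pow] at he
        have h3 : ((-1 : ℂ) ^ (i + 1)) ^ 2 = 1 := by rw [pow_right_comm]; simp
        rw [← he]
        linear_combination (-(conj β ^ (i + 1)) ^ 2) * h3
      exact_mod_cast this
    refine not_prime_dvd_of_sq_lucasTrace_eq hp hp2 hpq (by omega) hℓ.ne_zero hV (j := i) ?_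
    refine (Nat.prime_iff_prime_int.mp hp).dvd_of_dvd_pow (n := 2) ?_
    rw [h2, ← pow_mul]
    exact dvd_mul_of_dvd_right (dvd_pow_self _ (by positivity)) _
  have hbig := lt_norm_pow_add_conj_pow_of_large (N := p ^ m) ha0 (by exact_mod_cast ham) hre
    (by exact_mod_cast hnorm) hℓ hroot hlarge.1 hlarge.2 hNℓ
  have h4q : ‖β ^ ℓ + conj β ^ ℓ‖ = 4 * q := by
    rcases sq_eq_sq_iff_eq_or_eq_neg.mp h with h | h <;> rw [h] <;> simp
  rw [h4q] at hbig
  have h5 : (2 * q : ℝ) < √((p : ℝ) ^ m) := by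
    refine Real.lt_sqrt_of_sq_lt ?_
    rw [← Int.natAbs_sq, ha] at ham
    exact_mod_cast ham
  push_cast at hbig
  linarith

section

variable {R : Type*} [CommRing R] {p a b : R}

theorem isCoprime_span_pair (h : IsCoprime p (a + b)) :
    IsCoprime (Ideal.span {p, a}) (Ideal.span {p, b}) := by
  obtain ⟨x, y, hxy⟩ := h
  refine Ideal.isCoprime_iff_exists.mpr ⟨x * p + y * a, ?_, y * b, ?_, by rw [← hxy]; ring⟩
  · exact Ideal.mem_span_pair.mpr ⟨x, y, rfl⟩
  · exact Ideal.mem_span_pair.mpr ⟨0, y, by ring⟩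

theorem isCoprime_span_singleton_span_pair (h : IsCoprime p (a + b)) :
    IsCoprime (Ideal.span {a}) (Ideal.span {p, b}) := by
  obtain ⟨x, y, hxy⟩ := h
  refine Ideal.isCoprime_iff_exists.mpr ⟨y * a, ?_, x * p + y * b, ?_, by rw [← hxy]; ring⟩
  · exact Ideal.mem_span_singleton'.mpr ⟨y, rfl⟩
  · exact Ideal.mem_span_pair.mpr ⟨x, y, rfl⟩

theorem span_pair_mul_span_pair_eq (h : IsCoprime p (a + b)) (hab : p ∣ a * b) :
    Ideal.span {p, a} * Ideal.span {p, b} = Ideal.span {p} := by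
  rw [Ideal.span_pair_mul_span_pair]
  apply le_antisymm
  · rw [Ideal.span_le]
    rintro x (rfl | rfl | rfl | rfl) <;> rw [SetLike.mem_coe, Ideal.mem_span_singleton]
    · exact dvd_mul_right _ _
    · exact dvd_mul_right _ _
    · exact dvd_mul_left _ _
    · exact hab
  · rw [Ideal.span_singleton_le_iff_mem]
    obtain ⟨x, y, hxy⟩ := h
    have hmem : x * (p * p) + y * (p * b) + y * (a * p) ∈
        Ideal.span {p * p, p * b, a * p, a * b} := by
      refine Ideal.add_mem _ (Ideal.add_mem _ ?_ ?_) ?_ <;>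
        exact Ideal.mul_mem_left _ _ (Ideal.subset_span (by simp))
    rwa [show x * (p * p) + y * (p * b) + y * (a * p) = p by linear_combination p * hxy] at hmem

theorem span_pair_pow_eq_span_singleton [IsDedekindDomain R] {n : ℕ} (h : IsCoprime p (a + b))
    (hn : n ≠ 0) (hab : a * b = p ^ n) : Ideal.span {p, a} ^ n = Ideal.span {a} := by
  have hprod : Ideal.span {p, a} ^ n * Ideal.span {p, b} ^ n = Ideal.span {a} * Ideal.span {b} := by
    rw [← mul_pow, span_pair_mul_span_pair_eq h (hab ▸ dvd_pow_self p hn),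
      Ideal.span_singleton_pow, Ideal.span_singleton_mul_span_singleton, hab]
  have h' : IsCoprime p (b + a) := by rwa [add_comm]
  apply dvd_antisymm
  · exact (isCoprime_span_singleton_span_pair h').symm.pow_left.dvd_of_dvd_mul_right ⟨_, hprod.symm⟩
  · exact (isCoprime_span_singleton_span_pair h).pow_right.dvd_of_dvd_mul_right ⟨_, hprod⟩

end

theorem isPrime_of_mul_eq_span_natCast {K : Type*} [Field K] [NumberField K]
    (hK : Module.finrank ℚ K ≤ 2) {p : ℕ} (hp : p.Prime)
    {I J : Ideal (NumberField.RingOfIntegers K)} (hI : I ≠ ⊤) (hJ : J ≠ ⊤)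
    (h : I * J = Ideal.span {(p : NumberField.RingOfIntegers K)}) : I.IsPrime := by
  have hnorm : I.absNorm * J.absNorm = p ^ Module.finrank ℚ K := by
    rw [← map_mul, h, Ideal.absNorm_span_natCast, NumberField.RingOfIntegers.rank]
  obtain ⟨i, hi, hI'⟩ := (Nat.dvd_prime_pow hp).mp ⟨_, hnorm.symm⟩
  obtain ⟨j, hj, hJ'⟩ := (Nat.dvd_prime_pow hp).mp ⟨_, ((mul_comm _ _).trans hnorm).symm⟩
  have hi0 : i ≠ 0 := fun h => hI (Ideal.absNorm_eq_one_iff.mp (by rw [hI', h, pow_zero]))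
  have hj0 : j ≠ 0 := fun h => hJ (Ideal.absNorm_eq_one_iff.mp (by rw [hJ', h, pow_zero]))
  rw [hI', hJ', ← pow_add] at hnorm
  have hij := Nat.pow_right_injective hp.two_le hnorm
  obtain rfl : i = 1 := by omega
  exact Ideal.isPrime_of_irreducible_absNorm (by rwa [hI', pow_one])

open Complex ComplexConjugate NumberField in
theorem orderOf_mk0_eq_of_pow_eq_span {K : IntermediateField ℚ ℂ} [NumberField K]
    (hre : ∀ x : 𝓞 K, ∃ a : ℤ, ((x : K) : ℂ).re = a)
    (hunit : ∀ x : 𝓞 K, IsUnit x → x = 1 ∨ x = -1)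
    {p q n : ℕ} (hp : p.Prime) (hmod : p % 4 = 1)
    (hw : 2 ^ (p - 1) ≡ 1 [MOD p ^ 2]) (hq : q.Prime) (hqp : q ∣ p - 2)
    (hqw : ¬ q ^ (p - 1) ≡ 1 [MOD p ^ 2]) (hn : 1 < n) (hn' : ¬ n.Prime)
    {α : 𝓞 K} (hα : ((α : K) : ℂ).re = 2 * q) (hαim : ((α : K) : ℂ).im ≠ 0)
    (hnorm : normSq ((α : K) : ℂ) = (p : ℝ) ^ n) {P : Ideal (𝓞 K)} (hP0 : P ≠ 0)
    (hP : P ^ n = Ideal.span {α}) :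
    orderOf (ClassGroup.mk0 ⟨P, mem_nonZeroDivisors_of_ne_zero hP0⟩) = n := by
  have key (s : ℕ) : ClassGroup.mk0 ⟨P, mem_nonZeroDivisors_of_ne_zero hP0⟩ ^ s = 1 ↔
      (P ^ s).IsPrincipal := by
    rw [← map_pow, SubmonoidClass.mk_pow, ClassGroup.mk0_eq_one_iff]
  obtain ⟨t, ht⟩ : orderOf (ClassGroup.mk0 ⟨P, mem_nonZeroDivisors_of_ne_zero hP0⟩) ∣ n :=
    orderOf_dvd_of_pow_eq_one ((key n).mpr ⟨α, hP⟩)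
  have hs := (key _).mp (pow_orderOf_eq_one
    (ClassGroup.mk0 ⟨P, mem_nonZeroDivisors_of_ne_zero hP0⟩))
  generalize orderOf (ClassGroup.mk0 ⟨P, mem_nonZeroDivisors_of_ne_zero hP0⟩) = s at *
  obtain ⟨b, hb⟩ := hs
  rw [Ideal.submodule_span_eq] at hb
  by_cases ht1 : t = 1
  · rw [ht, ht1, mul_one]
  exfalso
  obtain ⟨ℓ, hℓ, r, rfl⟩ := Nat.exists_prime_and_dvd ht1
  have hspan : Ideal.span {(b ^ r) ^ ℓ} = Ideal.span {α} := by
    rw [← hP, ht, pow_mul, hb, Ideal.span_singleton_pow, ← pow_mul, mul_comm r]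
  obtain ⟨u, hu⟩ := Ideal.span_singleton_eq_span_singleton.mp hspan
  generalize b ^ r = β at hu
  have hnm : n = s * r * ℓ := by rw [ht]; ring
  generalize s * r = m at hnm
  have hm : 2 ≤ m := by
    by_contra hlt
    interval_cases m
    · omega
    · rw [one_mul] at hnm
      exact hn' (hnm ▸ hℓ)
  obtain ⟨a, ha⟩ := hre β
  have hpow : ((β : K) : ℂ) ^ ℓ = ((α : K) : ℂ) ∨ ((β : K) : ℂ) ^ ℓ = -((α : K) : ℂ) := by
    rcases hunit u u.isUnit with h | h <;> rw [h] at hu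
    · left; rw [← hu]; simp
    · right; rw [← hu]; simp
  generalize ((β : K) : ℂ) = B at *
  generalize ((α : K) : ℂ) = A at *
  have hBnorm : normSq B = (p : ℝ) ^ m := by
    refine (pow_left_inj₀ (normSq_nonneg _) (by positivity) hℓ.ne_zero).mp ?_
    rw [← map_pow, ← pow_mul, ← hnm, ← hnorm]
    rcases hpow with h | h <;> rw [h]
    exact normSq_neg A
  have hBim : B.im ≠ 0 := by
    intro him
    have h1 : (B ^ ℓ).im = 0 := by
      rw [← re_add_im B, him]
      simp [← ofReal_pow]
    rcases hpow with h | h <;> rw [h] at h1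
    · exact hαim h1
    · exact hαim (by simpa using h1)
  refine sq_pow_add_conj_pow_ne hp hmod hw hq hqp hqw hm hℓ ha hBnorm ?_ ?_
  · have h1 : ((a : ℝ)) ^ 2 < (p : ℝ) ^ m := by
      rw [← ha, ← hBnorm, normSq_apply]
      have := mul_self_pos.mpr hBim
      nlinarith
    exact_mod_cast h1
  · rw [← map_pow, add_conj]
    rcases hpow with h | h <;> rw [h]
    · rw [hα]; push_cast; ring
    · rw [neg_re, hα]; push_cast; ring

section

open Complex ComplexConjugate

theorem re_eq_zero_of_sq_eq_neg {z : ℂ} {d : ℝ} (hd : 0 < d) (hz : z ^ 2 = -(d : ℂ)) :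
    z.re = 0 ∧ z.im ^ 2 = d := by
  have h1 := congrArg re hz
  have h2 := congrArg im hz
  simp only [sq, mul_re, mul_im, neg_re, neg_im, ofReal_re, ofReal_im, neg_zero] at h1 h2
  have h3 : z.re = 0 ∨ z.im = 0 := by
    rw [← mul_eq_zero]; linarith
  rcases h3 with h | h
  · exact ⟨h, by rw [h] at h1; linarith⟩
  · rw [h] at h1; nlinarith [mul_self_nonneg z.re]

theorem exists_rat_add_mul_of_mem_adjoin {z : ℂ} {d : ℤ} (hd : 0 < d) (hz : z ^ 2 = -(d : ℂ))
    {x : ℂ} (hx : x ∈ IntermediateField.adjoin ℚ {z}) : ∃ u v : ℚ, x = u + v * z := by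
  induction hx using IntermediateField.adjoin_induction with
  | mem x hx => exact ⟨0, 1, by simp [Set.mem_singleton_iff.mp hx]⟩
  | algebraMap x => exact ⟨x, 0, by simp⟩
  | add x y _ _ hx hy =>
    obtain ⟨u, v, rfl⟩ := hx
    obtain ⟨u', v', rfl⟩ := hy
    exact ⟨u + u', v + v', by push_cast; ring⟩
  | mul x y _ _ hx hy =>
    obtain ⟨u, v, rfl⟩ := hx
    obtain ⟨u', v', rfl⟩ := hy
    refine ⟨u * u' - v * v' * d, u * v' + v * u', ?_⟩
    push_cast
    linear_combination (v * v' : ℂ) * hz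
  | inv x _ hx =>
    obtain ⟨u, v, rfl⟩ := hx
    by_cases h0 : u = 0 ∧ v = 0
    · exact ⟨0, 0, by simp [h0.1, h0.2]⟩
    have hd' : (0 : ℚ) < d := by exact_mod_cast hd
    have hn : u ^ 2 + v ^ 2 * d ≠ 0 := by
      intro h
      have hv : v = 0 := by
        by_contra hv
        have : 0 < v ^ 2 * d := by positivity
        nlinarith [sq_nonneg u]
      refine h0 ⟨?_, hv⟩
      simpa [hv] using h
    refine ⟨u / (u ^ 2 + v ^ 2 * d), -v / (u ^ 2 + v ^ 2 * d), ?_⟩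
    have hn' : (u ^ 2 + v ^ 2 * d : ℂ) ≠ 0 := by exact_mod_cast hn
    push_cast
    refine inv_eq_of_mul_eq_one_right ?_
    field_simp
    linear_combination (-v ^ 2 : ℂ) * hz

theorem exists_int_of_isIntegral_of_eq_ratCast {x : ℂ} {r : ℚ} (hx : IsIntegral ℤ x) (h : x = r) :
    ∃ n : ℤ, r = n := by
  subst h
  have : IsIntegral ℤ r := (isIntegral_algebraMap_iff (algebraMap ℚ ℂ).injective).mp hx
  obtain ⟨n, hn⟩ := IsIntegrallyClosed.isIntegral_iff.mp this
  exact ⟨n, by simpa using hn.symm⟩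

theorem even_of_sq_add_sq_mul_eq {t N d : ℤ} {w : ℚ} (hd : d % 4 = 1)
    (h : (t : ℚ) ^ 2 + w ^ 2 * d = 4 * N) : Even t := by
  by_contra ht
  rw [Int.not_even_iff_odd] at ht
  have h1 : (w.num : ℚ) ^ 2 * d = w.den ^ 2 * (4 * N - t ^ 2) := by
    rw [← h, add_sub_cancel_left, ← mul_assoc, ← mul_pow, Rat.den_mul_eq_num]
  have h2 : w.num ^ 2 * d = w.den ^ 2 * (4 * N - t ^ 2) := by exact_mod_cast h1
  have hdodd : Odd d := Int.odd_iff.mpr (by omega)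
  have hModd : Odd (4 * N - t ^ 2) := Even.sub_odd ⟨2 * N, by ring⟩ ht.pow
  have hden : Odd (w.den : ℤ) := by
    by_contra hden
    rw [Int.not_odd_iff_even] at hden
    have hnum : Even w.num := by
      have h3 : Even (w.num ^ 2 * d) := h2 ▸ (hden.pow_of_ne_zero two_ne_zero).mul_right _
      exact (Int.even_pow.mp
        ((Int.even_mul.mp h3).resolve_right (Int.not_even_iff_odd.mpr hdodd))).1
    have h4 := Nat.dvd_gcd (Int.natAbs_even.mpr hnum).two_dvd (by exact_mod_cast hden.two_dvd)
    rw [w.reduced] at h4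
    norm_num at h4
  have hnum : Odd w.num := by
    have h3 : Odd (w.num ^ 2 * d) := h2 ▸ hden.pow.mul hModd
    exact (Int.odd_pow.mp (Int.odd_mul.mp h3).1).resolve_right two_ne_zero
  have hr := Int.sq_mod_four_eq_one_of_odd hnum
  have hs := Int.sq_mod_four_eq_one_of_odd hden
  have ht2 := Int.sq_mod_four_eq_one_of_odd ht
  have hmod := congrArg (· % 4) h2
  simp only [Int.mul_emod _ d, Int.mul_emod _ (4 * N - t ^ 2), hr, hs, hd] at hmod
  omega

theorem exists_int_re_normSq {z : ℂ} {d : ℤ} (hd : 0 < d) (hd4 : d % 4 = 1)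
    (hz : z ^ 2 = -(d : ℂ)) {x : ℂ} (hx : x ∈ IntermediateField.adjoin ℚ {z})
    (hint : IsIntegral ℤ x) : ∃ a N : ℤ, x.re = a ∧ normSq x = N := by
  obtain ⟨u, v, rfl⟩ := exists_rat_add_mul_of_mem_adjoin hd hz hx
  obtain ⟨hz1, hz2⟩ := re_eq_zero_of_sq_eq_neg (d := d) (by exact_mod_cast hd) (by simpa using hz)
  have hconj : IsIntegral ℤ (conj ((u : ℂ) + v * z)) := hint.map (conjAe.toAlgHom.restrictScalars ℤ)
  have hzconj : conj z = -z := by apply Complex.ext <;> simp [hz1]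
  have hre : ((u : ℂ) + v * z).re = u := by simp [hz1]
  have hns : normSq ((u : ℂ) + v * z) = ((u ^ 2 + v ^ 2 * d : ℚ) : ℝ) := by
    push_cast
    rw [normSq_apply, hre, ← hz2]; simp; ring
  obtain ⟨t, ht⟩ := exists_int_of_isIntegral_of_eq_ratCast (r := 2 * u) (hint.add hconj) (by
    rw [add_conj, hre]; push_cast; ring)
  obtain ⟨N, hN⟩ := exists_int_of_isIntegral_of_eq_ratCast (r := u ^ 2 + v ^ 2 * d)
    (hint.mul hconj) (by rw [mul_conj, hns]; push_cast; ring)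
  have heven : Even t := even_of_sq_add_sq_mul_eq (w := 2 * v) (N := N) hd4 (by
    rw [← ht, ← hN]; ring)
  obtain ⟨a, rfl⟩ := heven
  refine ⟨a, N, ?_, ?_⟩
  · have : u = a := by push_cast at ht; linarith
    rw [hre, this]; simp
  · rw [hns, hN]; simp

theorem eq_one_or_eq_neg_one_of_mul_eq_one {z : ℂ} {d : ℤ} (hd : 0 < d) (hd4 : d % 4 = 1)
    (hz : z ^ 2 = -(d : ℂ))
    (hI : IntermediateField.adjoin ℚ {z} ≠ IntermediateField.adjoin ℚ {I}) {x y : ℂ}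
    (hx : x ∈ IntermediateField.adjoin ℚ {z}) (hy : y ∈ IntermediateField.adjoin ℚ {z})
    (hxint : IsIntegral ℤ x) (hyint : IsIntegral ℤ y) (hxy : x * y = 1) : x = 1 ∨ x = -1 := by
  obtain ⟨a, N, hxa, hxN⟩ := exists_int_re_normSq hd hd4 hz hx hxint
  obtain ⟨-, M, -, hyM⟩ := exists_int_re_normSq hd hd4 hz hy hyint
  have h1 := congrArg normSq hxy
  rw [map_mul, hxN, hyM, map_one] at h1
  have h2 : N * M = 1 := by exact_mod_cast h1
  have hN0 : 0 ≤ N := by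
    have := normSq_nonneg x
    rw [hxN] at this
    exact_mod_cast this
  obtain rfl : N = 1 := Int.eq_one_of_mul_eq_one_right hN0 h2
  rw [normSq_apply, hxa, Int.cast_one] at hxN
  have ha : a ^ 2 ≤ 1 := by
    have : (a : ℝ) ^ 2 ≤ 1 := by nlinarith [mul_self_nonneg x.im]
    exact_mod_cast this
  have ha' : -1 ≤ a ∧ a ≤ 1 := abs_le.mp (by rwa [← sq_le_one_iff_abs_le_one])
  have him (h : a ^ 2 = 1) : x.im = 0 := by
    have : (a : ℝ) ^ 2 = 1 := by exact_mod_cast h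
    rw [← mul_self_eq_zero]; linarith
  obtain rfl | rfl | rfl : a = -1 ∨ a = 0 ∨ a = 1 := by omega
  · right; apply Complex.ext <;> simp [hxa, him (by norm_num)]
  · exfalso
    obtain ⟨u, v, rfl⟩ := exists_rat_add_mul_of_mem_adjoin hd hz hx
    obtain ⟨hz1, hz2⟩ := re_eq_zero_of_sq_eq_neg (d := d) (by exact_mod_cast hd) (by simpa using hz)
    have hu : u = 0 := by simpa [hz1] using hxa
    subst hu
    have hxI : (0 : ℚ) + v * z = I ∨ (0 : ℚ) + v * z = -I := by
      rcases mul_self_eq_one_iff.mp (show _ = (1 : ℝ) by simpa using hxN) with h | h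
      · left; apply Complex.ext <;> simp [hz1] at h ⊢; exact h
      · right; apply Complex.ext <;> simp [hz1] at h ⊢; exact h
    have hv : (v : ℂ) ≠ 0 := by
      rintro h
      simp [h, eq_comm, I_ne_zero] at hxI
    apply hI
    apply le_antisymm <;> rw [IntermediateField.adjoin_simple_le_iff]
    · have hIm := IntermediateField.mem_adjoin_simple_self ℚ I
      have hvm (x : ℂ) : (v : ℂ)⁻¹ ∈ IntermediateField.adjoin ℚ {x} :=
        inv_mem (IntermediateField.algebraMap_mem _ v)
      have hzv : z = (v : ℂ)⁻¹ * ((0 : ℚ) + v * z) := by simp [hv]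
      rw [hzv]
      rcases hxI with h | h <;> rw [h]
      · exact mul_mem (hvm I) hIm
      · exact mul_mem (hvm I) (neg_mem hIm)
    · rcases hxI with h | h
      · exact h ▸ hx
      · rw [h] at hx
        simpa using neg_mem hx
  · left; apply Complex.ext <;> simp [hxa, him (by norm_num)]

theorem finrank_le_two {z : ℂ} {d : ℤ} (hz : z ^ 2 = -(d : ℂ)) :
    Module.finrank ℚ (IntermediateField.adjoin ℚ {z}) ≤ 2 := by
  have hmonic : (Polynomial.X ^ 2 + Polynomial.C (d : ℚ)).Monic := by monicity!
  have hroot : Polynomial.aeval z (Polynomial.X ^ 2 + Polynomial.C (d : ℚ)) = 0 := by simp [hz]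
  rw [IntermediateField.adjoin.finrank ⟨_, hmonic, hroot⟩]
  refine (Polynomial.natDegree_le_of_dvd (minpoly.dvd ℚ z hroot) hmonic.ne_zero).trans ?_
  compute_degree

end

/-- Let `p` be a prime with `p ≡ 1 (mod 4)` and `2^(p−1) ≡ 1 (mod p^2)`, let `q1` be a prime
factor of `p − 2` such that `q1^(p−1) ≢ 1 (mod p^2)`, and let `n` be a composite number such
that `K = ℚ(√(4q1^2 − p^n)) ≠ ℚ(i)`. Then `p` splits in the imaginary quadratic field `K`,
and for any prime ideal `℘` of the ring of integers of `K` lying over `p`, the order of the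
ideal class of `℘` in the ideal class group of `K` is exactly `n`. -/
theorem stmt_10 (p : ℕ) (hp : p.Prime) (hmod : p % 4 = 1)
    (hw : 2 ^ (p - 1) ≡ 1 [MOD p ^ 2])
    (q1 : ℕ) (hq1 : q1.Prime) (hq1dvd : q1 ∣ p - 2)
    (hq1nw : ¬ (q1 ^ (p - 1) ≡ 1 [MOD p ^ 2]))
    (n : ℕ) (hcomp : 1 < n ∧ ¬ n.Prime)
    (z : ℂ) (hz : z ^ 2 = 4 * (q1 : ℂ) ^ 2 - (p : ℂ) ^ n)
    (K : IntermediateField ℚ ℂ) (hK : K = IntermediateField.adjoin ℚ {z})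
    (hKi : K ≠ IntermediateField.adjoin ℚ {Complex.I})
    [NumberField K] :
    (∃ P Q : Ideal (NumberField.RingOfIntegers K), P ≠ Q ∧ P.IsPrime ∧ Q.IsPrime ∧
        P * Q = Ideal.span {(p : NumberField.RingOfIntegers K)}) ∧
    ∀ (P : Ideal (NumberField.RingOfIntegers K)), P.IsPrime →
      (p : NumberField.RingOfIntegers K) ∈ P → ∀ (hP0 : P ≠ 0),
      orderOf (ClassGroup.mk0 ⟨P, mem_nonZeroDivisors_of_ne_zero hP0⟩) = n := by
  subst hK
  obtain ⟨hn, hn'⟩ := hcomp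
  have hp5 : 5 ≤ p := by
    have := hp.two_le
    omega
  have hp2 : p ≠ 2 := by omega
  have hqle : q1 ≤ p - 2 := Nat.le_of_dvd (by omega) hq1dvd
  have hpq : ¬ p ∣ q1 := fun h => by
    have := Nat.le_of_dvd hq1.pos h
    omega
  have hn4 : 4 ≤ n := by
    by_contra h
    interval_cases n
    · exact hn' Nat.prime_two
    · exact hn' Nat.prime_three
  set d : ℤ := (p : ℤ) ^ n - 4 * (q1 : ℤ) ^ 2 with hd
  have hzd : z ^ 2 = -(d : ℂ) := by rw [hz, hd]; push_cast; ring
  have hd0 : 0 < d := by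
    have h1 : p ^ 4 ≤ p ^ n := Nat.pow_le_pow_right hp.pos hn4
    have h2 : q1 ^ 2 ≤ p ^ 2 := Nat.pow_le_pow_left (by omega) 2
    have h3 : 5 ^ 2 ≤ p ^ 2 := Nat.pow_le_pow_left hp5 2
    have h4 : 4 * q1 ^ 2 < p ^ n := by nlinarith
    rw [hd, sub_pos]
    exact_mod_cast h4
  have hd4 : d % 4 = 1 := by
    have h1 : ((p : ℤ) ^ n) % 4 = 1 := by
      have : (p : ℤ) ≡ 1 [ZMOD 4] := by
        rw [Int.ModEq]
        omega
      simpa [Int.ModEq] using this.pow n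
    omega
  obtain ⟨hzre, hzim⟩ := re_eq_zero_of_sq_eq_neg (d := d) (by exact_mod_cast hd0)
    (by simpa using hzd)
  have hzint : IsIntegral ℤ z := by
    refine IsIntegral.of_pow (n := 2) two_pos ?_
    rw [hzd]
    exact (isIntegral_algebraMap (x := d)).neg
  set K := IntermediateField.adjoin ℚ {z}
  have hzK : z ∈ K := IntermediateField.mem_adjoin_simple_self ℚ z
  have hint (x : NumberField.RingOfIntegers K) : IsIntegral ℤ ((x : K) : ℂ) :=
    (NumberField.RingOfIntegers.isIntegral_coe x).map (K.val.restrictScalars ℤ)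
  have hre (x : NumberField.RingOfIntegers K) : ∃ a : ℤ, ((x : K) : ℂ).re = a := by
    obtain ⟨a, -, ha, -⟩ := exists_int_re_normSq hd0 hd4 hzd (x : K).2 (hint x)
    exact ⟨a, ha⟩
  have hunit (x : NumberField.RingOfIntegers K) (hx : IsUnit x) : x = 1 ∨ x = -1 := by
    obtain ⟨y, hxy⟩ := hx.exists_right_inv
    have h1 := congrArg (fun t : NumberField.RingOfIntegers K => ((t : K) : ℂ)) hxy
    have h2 := eq_one_or_eq_neg_one_of_mul_eq_one hd0 hd4 hzd hKi (x : K).2 (y : K).2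
      (hint x) (hint y) (by simpa using h1)
    refine h2.imp (fun h => ?_) (fun h => ?_) <;>
      · apply NumberField.RingOfIntegers.ext
        apply Subtype.ext
        simpa using h
  obtain ⟨ζ, hζ⟩ : ∃ ζ : NumberField.RingOfIntegers K, ((ζ : K) : ℂ) = z := by
    refine ⟨⟨⟨z, hzK⟩, ?_⟩, rfl⟩
    exact (isIntegral_algHom_iff (K.val.restrictScalars ℤ) Subtype.val_injective).mp hzint
  have hζ2 : ζ ^ 2 = 4 * (q1 : NumberField.RingOfIntegers K) ^ 2 - p ^ n := by
    apply NumberField.RingOfIntegers.ext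
    apply Subtype.ext
    simpa [hζ, map_ofNat, show ((4 : K) : ℂ) = 4 from rfl] using hz
  have hcop : IsCoprime (p : NumberField.RingOfIntegers K) (4 * q1) := by
    have h1 : p.Coprime (4 * q1) := by
      rw [Nat.Prime.coprime_iff_not_dvd hp, show 4 = 2 ^ 2 by norm_num, hp.dvd_mul]
      rintro (h | h)
      · exact hp2 ((Nat.prime_dvd_prime_iff_eq hp Nat.prime_two).mp (hp.dvd_of_dvd_pow h))
      · exact hpq h
    have := (Nat.isCoprime_iff_coprime.mpr h1).intCast (R := NumberField.RingOfIntegers K)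
    push_cast at this
    exact this
  -- the ideal `(p, 2 q₁ + ξ)` for `ξ = ±√(4 q₁² - pⁿ)`
  have hsplit (ξ : NumberField.RingOfIntegers K) (hξ : ξ ^ 2 = ζ ^ 2)
      (hξre : ((ξ : K) : ℂ).re = 0) (hξim : ((ξ : K) : ℂ).im ^ 2 = d) :
      IsCoprime (Ideal.span {(p : NumberField.RingOfIntegers K), 2 * q1 + ξ})
        (Ideal.span {(p : NumberField.RingOfIntegers K), 2 * q1 - ξ}) ∧
      Ideal.span {(p : NumberField.RingOfIntegers K), 2 * q1 + ξ} *
        Ideal.span {(p : NumberField.RingOfIntegers K), 2 * q1 - ξ} = Ideal.span {↑p} ∧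
      Ideal.span {(p : NumberField.RingOfIntegers K), 2 * q1 - ξ} ≠ ⊤ ∧
      ∀ hP0 : Ideal.span {(p : NumberField.RingOfIntegers K), 2 * q1 + ξ} ≠ 0,
        orderOf (ClassGroup.mk0 ⟨_, mem_nonZeroDivisors_of_ne_zero hP0⟩) = n := by
    have hmul : (2 * (q1 : NumberField.RingOfIntegers K) + ξ) * (2 * q1 - ξ) = p ^ n := by
      linear_combination -hξ - hζ2
    have hcop' : IsCoprime (p : NumberField.RingOfIntegers K) ((2 * q1 + ξ) + (2 * q1 - ξ)) := by
      rwa [show (2 * (q1 : NumberField.RingOfIntegers K) + ξ) + (2 * q1 - ξ) = 4 * q1 by ring]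
    have hcoe : (((2 * q1 + ξ : NumberField.RingOfIntegers K) : K) : ℂ) = 2 * q1 + (ξ : K) := by
      simp [map_ofNat, show ((2 : K) : ℂ) = 2 from rfl]
    have hprod := span_pair_mul_span_pair_eq hcop' (hmul ▸ dvd_pow_self _ (by omega))
    refine ⟨isCoprime_span_pair hcop', hprod, fun htop => ?_, fun hP0 => ?_⟩
    · rw [htop, Ideal.mul_top] at hprod
      have h1 : 2 * (q1 : NumberField.RingOfIntegers K) + ξ ∈ Ideal.span {↑p} :=
        hprod ▸ Ideal.subset_span (by simp)
      obtain ⟨w, hw⟩ := Ideal.mem_span_singleton.mp h1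
      obtain ⟨a, ha⟩ := hre w
      have h2 := congrArg (fun t : NumberField.RingOfIntegers K => ((t : K) : ℂ).re) hw
      simp only [hcoe] at h2
      simp [hξre, ha] at h2
      have h3 : (2 * q1 : ℤ) = p * a := by exact_mod_cast h2
      have h4 : p ∣ 2 * q1 := by
        have : (p : ℤ) ∣ (2 * q1 : ℤ) := ⟨a, h3⟩
        exact_mod_cast this
      rcases hp.dvd_mul.mp h4 with h | h
      · exact hp2 ((Nat.prime_dvd_prime_iff_eq hp Nat.prime_two).mp h)
      · exact hpq h
    · refine orderOf_mk0_eq_of_pow_eq_span hre hunit hp hmod hw hq1 hq1dvd hq1nw hn hn' ?_ ?_ ?_ hP0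
        (span_pair_pow_eq_span_singleton hcop' (by omega) hmul)
      · rw [hcoe]
        simp [hξre]
      · rw [hcoe]
        intro h
        simp at h
        rw [h] at hξim
        have : (0 : ℝ) < d := by exact_mod_cast hd0
        simp at hξim
        linarith
      · rw [hcoe, Complex.normSq_apply]
        simp [hξre]
        rw [hd] at hξim
        push_cast at hξim
        linarith
  obtain ⟨hco, hprod, htop, hord⟩ := hsplit ζ rfl (by rw [hζ, hzre]) (by rw [hζ, hzim])
  obtain ⟨-, -, htop', hord'⟩ := hsplit (-ζ) (by ring) (by simp [hζ, hzre]) (by simp [hζ, hzim])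
  rw [sub_neg_eq_add] at htop'
  simp only [← sub_eq_add_neg] at hord'
  have hfin := finrank_le_two hzd
  have hprime := isPrime_of_mul_eq_span_natCast hfin hp htop' htop hprod
  have hprime' := isPrime_of_mul_eq_span_natCast hfin hp htop htop' ((mul_comm _ _).trans hprod)
  have hp0 : (p : NumberField.RingOfIntegers K) ≠ 0 := Nat.cast_ne_zero.mpr hp.ne_zero
  refine ⟨⟨_, _, fun h => ?_, hprime, hprime', hprod⟩, fun P hP hpP hP0 => ?_⟩
  · rw [h] at hco
    exact htop (by simpa [isCoprime_self] using hco)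
  have hle : Ideal.span {(p : NumberField.RingOfIntegers K), 2 * q1 + ζ} *
        Ideal.span {(p : NumberField.RingOfIntegers K), 2 * q1 - ζ} ≤ P := by
    rw [hprod, Ideal.span_singleton_le_iff_mem]
    exact hpP
  have hmax {x : NumberField.RingOfIntegers K}
      (h : (Ideal.span {(p : NumberField.RingOfIntegers K), x}).IsPrime) :
      (Ideal.span {(p : NumberField.RingOfIntegers K), x}).IsMaximal := by
    refine h.isMaximal fun hbot => hp0 ?_
    rw [← Ideal.mem_bot, ← hbot]
    exact Ideal.subset_span (by simp)
  rcases hP.mul_le.mp hle with h | h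
  · obtain rfl := (hmax hprime).eq_of_le hP.ne_top h
    exact hord hP0
  · obtain rfl := (hmax hprime').eq_of_le hP.ne_top h
    exact hord' hP0
end

section
/- Let p be a prime with p ≡ 3 (mod 4) and 2^{p−1} ≡ 1 (mod p^2), let q1 be a prime factor of p − 2 such that q1^{p−1} ≢ 1 (mod p^2), let n be an odd composite number, let d0 be the squarefree part of q1^2 − p^n and c the positive integer with q1^2 − p^n = c^2·d0. Then for any prime p4 dividing n, there are no integers u, v and sign ε ∈ {+1, −1} such that (u + v·√d0)^{p4} = ε·(q1 + c·√d0) in ℤ[√d0]. -/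
section Pade

open Finset Polynomial

theorem factorial_dvd_prod_range_sub (n : ℤ) (j : ℕ) :
    (j.factorial : ℤ) ∣ ∏ i ∈ range j, (n - i) := by
  have h := Ring.descPochhammer_eq_factorial_smul_choose n j
  rw [← Polynomial.eval_eq_smeval, descPochhammer_eval_eq_prod_range, nsmul_eq_mul] at h
  exact ⟨_, h⟩

theorem factorial_dvd_two_pow_mul_prod (c n : ℤ) (j : ℕ) :
    (j.factorial : ℤ) ∣ 2 ^ j * ∏ i ∈ range j, (4 * (n - i) + c) := by
  obtain ⟨a, o, ho, hj⟩ := Nat.exists_eq_two_pow_mul_odd (Nat.factorial_ne_zero j)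
  have ha : a ≤ j := by
    rcases Nat.eq_zero_or_pos j with rfl | hpos
    · have : 2 ^ a ∣ 1 := ⟨o, by simpa using hj⟩
      rcases Nat.eq_zero_or_pos a with h | h
      · exact h.le
      · have := (dvd_pow_self 2 h.ne').trans this
        norm_num at this
    · have h1 := Nat.emultiplicity_two_factorial_lt hpos.ne'
      have h2 := le_emultiplicity_of_pow_dvd (a := 2) (b := j.factorial) (k := a) ⟨o, hj⟩
      exact_mod_cast (h2.trans_lt h1).le
  have h4 : IsCoprime (4 : ℤ) (o : ℤ) := by
    have : Nat.Coprime (2 ^ 2) o := (Nat.coprime_two_left.2 ho).pow_left 2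
    exact_mod_cast Nat.isCoprime_iff_coprime.2 this
  obtain ⟨x, y, hxy⟩ := h4
  have hmod : (∏ i ∈ range j, (4 * (n - i) + c)) ≡
      ∏ i ∈ range j, (4 * (n + x * c - i)) [ZMOD o] := by
    refine Int.ModEq.prod fun i _ ↦ (Int.modEq_iff_dvd.2 ⟨-(y * c), ?_⟩)
    linear_combination c * hxy
  have hO : (o : ℤ) ∣ ∏ i ∈ range j, (4 * (n - i) + c) := by
    rw [hmod.dvd_iff, Finset.prod_mul_distrib]
    refine Dvd.dvd.mul_left (dvd_trans ?_ (factorial_dvd_prod_range_sub _ _)) _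
    exact_mod_cast Dvd.intro_left _ hj.symm
  rw [hj]
  push_cast
  exact mul_dvd_mul (pow_dvd_pow 2 ha) hO

/-- The integer `8 ^ j * binom (n + c / 4) j`. -/
def quarterChoose (c n : ℤ) (j : ℕ) : ℤ :=
  (2 ^ j * ∏ i ∈ range j, (4 * (n - i) + c)) / j.factorial

theorem factorial_mul_quarterChoose (c n : ℤ) (j : ℕ) :
    j.factorial * quarterChoose c n j = 2 ^ j * ∏ i ∈ range j, (4 * (n - i) + c) :=
  Int.mul_ediv_cancel' (factorial_dvd_two_pow_mul_prod c n j)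

/-- The coefficients of the diagonal Padé approximants to the fourth root. -/
def padeCoeff (k j : ℕ) : ℤ := quarterChoose 1 k j * quarterChoose (-1) k (k - j)

theorem prod_range_succ_int_sub {M : Type*} [CommMonoid M] (f : ℤ → M) {j k : ℕ} (h : j ≤ k) :
    ∏ i ∈ range (k + 1), f (j - i) =
      (∏ i ∈ range j, f (i + 1)) * f 0 * ∏ i ∈ range (k - j), f (-(i + 1)) := by
  obtain ⟨l, rfl⟩ := Nat.exists_eq_add_of_le h
  rw [show j + l + 1 = j + (l + 1) by ring, Finset.prod_range_add, Finset.prod_range_succ',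
    ← Finset.prod_range_reflect (fun i : ℕ ↦ f (i + 1)), Nat.add_sub_cancel_left, mul_assoc,
    mul_comm (f 0)]
  congr 1
  · refine Finset.prod_congr rfl fun i hi ↦ ?_
    have := mem_range.1 hi
    congr 1
    omega
  · congr 1
    · refine Finset.prod_congr rfl fun i hi ↦ ?_
      congr 1
      push_cast
      ring
    · simp

theorem prod_range_sub_mul_prod_range {M : Type*} [CommMonoid M] (f : ℤ → M) {j k : ℕ}
    (h : j ≤ k) :
    (∏ i ∈ range (k - j), f (i + 1)) * ∏ i ∈ range j, f (k - i) = ∏ i ∈ range k, f (i + 1) := by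
  obtain ⟨l, rfl⟩ := Nat.exists_eq_add_of_le h
  rw [Nat.add_sub_cancel_left, show ∏ i ∈ range (j + l), f (i + 1) =
    ∏ i ∈ range (l + j), f (i + 1) by rw [add_comm], Finset.prod_range_add,
    ← Finset.prod_range_reflect (fun i : ℕ ↦ f ((l + i : ℕ) + 1))]
  congr 1
  refine Finset.prod_congr rfl fun i hi ↦ ?_
  have := mem_range.1 hi
  congr 1
  omega

theorem prod_erase_four_mul {j k : ℕ} (h : j ≤ k) :
    ∏ i ∈ (range (k + 1)).erase j, (4 * ((j : ℤ) - i)) =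
      (-1) ^ (k - j) * 4 ^ k * j.factorial * (k - j).factorial := by
  obtain ⟨f, hf0, hf⟩ : ∃ f : ℤ → ℤ, f 0 = 1 ∧ ∀ x, x ≠ 0 → f x = 4 * x :=
    ⟨fun x ↦ if x = 0 then 1 else 4 * x, by simp, fun x hx ↦ by simp [hx]⟩
  have h1 : ∏ i ∈ (range (k + 1)).erase j, (4 * ((j : ℤ) - i)) =
      ∏ i ∈ (range (k + 1)).erase j, f (j - i) := by
    refine Finset.prod_congr rfl fun i hi ↦ ?_
    have := (Finset.mem_erase.1 hi).1
    rw [hf _ (by omega)]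
  have h2 (n : ℕ) : ∏ i ∈ range n, f (i + 1) = 4 ^ n * n.factorial := by
    rw [← Finset.prod_range_add_one_eq_factorial, Nat.cast_prod]
    conv_rhs => rw [← card_range n, ← Finset.prod_const, card_range, ← Finset.prod_mul_distrib]
    refine Finset.prod_congr rfl fun i hi ↦ ?_
    rw [hf _ (by omega)]
    push_cast
    ring
  have h3 (n : ℕ) : ∏ i ∈ range n, f (-(i + 1)) = (-1) ^ n * (4 ^ n * n.factorial) := by
    rw [← h2]
    conv_rhs => rw [← card_range n, ← Finset.prod_const, card_range, ← Finset.prod_mul_distrib]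
    refine Finset.prod_congr rfl fun i hi ↦ ?_
    rw [hf _ (by omega), hf _ (by omega)]
    ring
  rw [h1, Finset.prod_erase _ (by simpa using hf0), prod_range_succ_int_sub _ h, h2, h3, hf0]
  obtain ⟨l, rfl⟩ := Nat.exists_eq_add_of_le h
  rw [Nat.add_sub_cancel_left]
  ring

theorem padeCoeff_mul_factorial {j k : ℕ} (h : j ≤ k) :
    padeCoeff k j * (j.factorial * (k - j).factorial) =
      2 ^ k * (∏ i ∈ range j, (4 * ((k : ℤ) - i) + 1)) *
        ∏ i ∈ range (k - j), (4 * ((k : ℤ) - i) + -1) := by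
  have h1 := factorial_mul_quarterChoose 1 k j
  have h2 := factorial_mul_quarterChoose (-1) k (k - j)
  rw [padeCoeff]
  calc _ = (j.factorial * quarterChoose 1 k j) *
      ((k - j).factorial * quarterChoose (-1) k (k - j)) := by ring
    _ = _ := by
      rw [h1, h2]
      conv_rhs => rw [← Nat.add_sub_cancel' h, pow_add, Nat.add_sub_cancel' h]
      ring

theorem prod_range_four_mul_neg (c : ℤ) (n : ℕ) :
    ∏ i ∈ range n, (4 * (-((i : ℤ) + 1)) + c) =
      (-1) ^ n * ∏ i ∈ range n, (4 * ((i : ℤ) + 1) + -c) := by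
  conv_rhs => rw [← card_range n, ← Finset.prod_const, card_range, ← Finset.prod_mul_distrib]
  exact Finset.prod_congr rfl fun i hi ↦ by ring

theorem padeCoeff_mul_weight {j k : ℕ} (h : j ≤ k) :
    padeCoeff k j * ((∏ i ∈ (range (k + 1)).erase j, (4 * ((j : ℤ) - i))) *
      ∏ i ∈ range (k + 1), (4 * ((j : ℤ) - i) + -1)) =
    -(8 ^ k * ((∏ i ∈ range k, (4 * ((i : ℤ) + 1) + 1)) *
      ∏ i ∈ range k, (4 * ((i : ℤ) + 1) + -1))) := by
  have h1 := padeCoeff_mul_factorial h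
  have h2 := prod_range_sub_mul_prod_range (fun x : ℤ ↦ 4 * x + 1) h
  have h3 := prod_range_sub_mul_prod_range (fun x : ℤ ↦ 4 * x + -1) (Nat.sub_le k j)
  rw [Nat.sub_sub_self h] at h3
  have h4 := prod_range_succ_int_sub (fun x : ℤ ↦ 4 * x + -1) h
  rw [prod_erase_four_mul h, h4, prod_range_four_mul_neg, ← h2, ← h3, neg_neg,
    show (8 : ℤ) ^ k = 2 ^ k * 4 ^ k by rw [← mul_pow]; norm_num]
  have hs : ((-1 : ℤ) ^ (k - j)) * (-1) ^ (k - j) = 1 := by rw [← mul_pow]; simp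
  generalize (-1 : ℤ) ^ (k - j) = e at hs ⊢
  generalize (∏ i ∈ range j, (4 * ((k : ℤ) - i) + 1)) = A at *
  generalize (∏ i ∈ range (k - j), (4 * ((k : ℤ) - i) + -1)) = B at *
  generalize (∏ i ∈ range j, (4 * ((i : ℤ) + 1) + -1)) = D at *
  generalize (∏ i ∈ range (k - j), (4 * ((i : ℤ) + 1) + 1)) = E at *
  linear_combination (-(e * e) * 4 ^ k * D * E) * h1 - 2 ^ k * A * B * 4 ^ k * D * E * hs

theorem padeCoeff_rev_mul_weight {j k : ℕ} (h : j ≤ k) :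
    padeCoeff k (k - j) * ((∏ i ∈ range (k + 1), (4 * ((j : ℤ) - i) + 1)) *
      ∏ i ∈ (range (k + 1)).erase j, (4 * ((j : ℤ) - i))) =
    8 ^ k * ((∏ i ∈ range k, (4 * ((i : ℤ) + 1) + 1)) *
      ∏ i ∈ range k, (4 * ((i : ℤ) + 1) + -1)) := by
  have h1 := padeCoeff_mul_factorial (Nat.sub_le k j)
  have h2 := prod_range_sub_mul_prod_range (fun x : ℤ ↦ 4 * x + 1) (Nat.sub_le k j)
  have h3 := prod_range_sub_mul_prod_range (fun x : ℤ ↦ 4 * x + -1) h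
  rw [Nat.sub_sub_self h] at h1 h2
  have h4 := prod_range_succ_int_sub (fun x : ℤ ↦ 4 * x + 1) h
  rw [prod_erase_four_mul h, h4, prod_range_four_mul_neg, ← h2, ← h3,
    show (8 : ℤ) ^ k = 2 ^ k * 4 ^ k by rw [← mul_pow]; norm_num]
  have hs : ((-1 : ℤ) ^ (k - j)) * (-1) ^ (k - j) = 1 := by rw [← mul_pow]; simp
  generalize (-1 : ℤ) ^ (k - j) = e at hs ⊢
  generalize (∏ i ∈ range j, (4 * ((k : ℤ) - i) + -1)) = A at *
  generalize (∏ i ∈ range (k - j), (4 * ((k : ℤ) - i) + 1)) = B at *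
  generalize (∏ i ∈ range j, (4 * ((i : ℤ) + 1) + 1)) = D at *
  generalize (∏ i ∈ range (k - j), (4 * ((i : ℤ) + 1) + -1)) = E at *
  linear_combination ((e * e) * 4 ^ k * D * E) * h1 + 2 ^ k * A * B * 4 ^ k * D * E * hs

theorem padeCoeff_moment (k : ℕ) {g : ℚ[X]} (hg : g.natDegree < 2 * k + 1) :
    ∑ j ∈ range (k + 1), (padeCoeff k j : ℚ) * g.eval (4 * j : ℚ) =
      ∑ j ∈ range (k + 1), (padeCoeff k (k - j) : ℚ) * g.eval (4 * j + 1 : ℚ) := by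
  classical
  set s : Finset (ℕ ⊕ ℕ) := (range (k + 1)).disjSum (range (k + 1)) with hs
  set v : ℕ ⊕ ℕ → ℚ := Sum.elim (fun j ↦ 4 * j) (fun j ↦ 4 * j + 1) with hv
  have hcard : #s = 2 * k + 2 := by simp [hs, Finset.card_disjSum]; ring
  have hinj : Set.InjOn v s := by
    rintro (a | a) - (b | b) - hab
    · simpa [hv] using hab
    · have : (4 * a : ℚ) = 4 * b + 1 := hab
      norm_cast at this
      omega
    · have : (4 * a + 1 : ℚ) = 4 * b := hab
      norm_cast at this
      omega
    · simpa [hv] using hab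
  have hdeg : g.degree < #s := by
    refine Polynomial.degree_le_natDegree.trans_lt ?_
    rw [hcard]
    exact_mod_cast by omega
  have key := Lagrange.coeff_eq_sum hinj hdeg
  rw [Polynomial.coeff_eq_zero_of_natDegree_lt (by omega), hs, Finset.sum_disjSum] at key
  set K : ℚ := ((8 ^ k * ((∏ i ∈ range k, (4 * ((i : ℤ) + 1) + 1)) *
      ∏ i ∈ range k, (4 * ((i : ℤ) + 1) + -1)) : ℤ) : ℚ) with hK
  have hK0 : K ≠ 0 := by
    rw [hK, Int.cast_ne_zero]
    refine mul_ne_zero (by positivity) (mul_ne_zero ?_ ?_) <;>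
    exact Finset.prod_ne_zero_iff.2 fun i _ ↦ by omega
  have e1 (j) (hj : j ∈ range (k + 1)) : g.eval (v (Sum.inl j)) /
      ∏ i ∈ ((range (k + 1)).disjSum (range (k + 1))).erase (Sum.inl j), (v (Sum.inl j) - v i) =
      -(padeCoeff k j * g.eval (4 * j : ℚ)) / K := by
    have he : ((range (k + 1)).disjSum (range (k + 1))).erase (Sum.inl j) =
        ((range (k + 1)).erase j).disjSum (range (k + 1)) := by
      ext (x | x) <;> simp
    have hw := congrArg (Int.cast (R := ℚ))
      (padeCoeff_mul_weight (Nat.lt_succ_iff.1 (mem_range.1 hj)))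
    rw [Int.cast_neg, ← hK] at hw
    push_cast at hw
    have hd : ∏ i ∈ ((range (k + 1)).disjSum (range (k + 1))).erase (Sum.inl j),
        (v (Sum.inl j) - v i) = (∏ i ∈ (range (k + 1)).erase j, (4 * ((j : ℚ) - i))) *
      ∏ i ∈ range (k + 1), (4 * ((j : ℚ) - i) + -1) := by
      rw [he, Finset.prod_disjSum]
      simp only [hv, Sum.elim_inl, Sum.elim_inr]
      congr 1 <;> exact Finset.prod_congr rfl fun i _ ↦ by ring
    rw [hd]
    generalize (∏ i ∈ (range (k + 1)).erase j, (4 * ((j : ℚ) - i))) *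
      ∏ i ∈ range (k + 1), (4 * ((j : ℚ) - i) + -1) = W at hw ⊢
    have hW : W ≠ 0 := by
      rintro rfl
      apply hK0
      linear_combination hw
    rw [div_eq_div_iff hW hK0]
    simp only [hv, Sum.elim_inl]
    linear_combination g.eval (4 * j : ℚ) * hw
  have e2 (j) (hj : j ∈ range (k + 1)) : g.eval (v (Sum.inr j)) /
      ∏ i ∈ ((range (k + 1)).disjSum (range (k + 1))).erase (Sum.inr j), (v (Sum.inr j) - v i) =
      (padeCoeff k (k - j) * g.eval (4 * j + 1 : ℚ)) / K := by
    have he : ((range (k + 1)).disjSum (range (k + 1))).erase (Sum.inr j) =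
        (range (k + 1)).disjSum ((range (k + 1)).erase j) := by
      ext (x | x) <;> simp
    have hw := congrArg (Int.cast (R := ℚ))
      (padeCoeff_rev_mul_weight (Nat.lt_succ_iff.1 (mem_range.1 hj)))
    rw [← hK] at hw
    push_cast at hw
    have hd : ∏ i ∈ ((range (k + 1)).disjSum (range (k + 1))).erase (Sum.inr j),
        (v (Sum.inr j) - v i) = (∏ i ∈ range (k + 1), (4 * ((j : ℚ) - i) + 1)) *
      ∏ i ∈ (range (k + 1)).erase j, (4 * ((j : ℚ) - i)) := by
      rw [he, Finset.prod_disjSum]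
      simp only [hv, Sum.elim_inl, Sum.elim_inr]
      congr 1 <;> exact Finset.prod_congr rfl fun i _ ↦ by ring
    rw [hd]
    generalize (∏ i ∈ range (k + 1), (4 * ((j : ℚ) - i) + 1)) *
      ∏ i ∈ (range (k + 1)).erase j, (4 * ((j : ℚ) - i)) = W at hw ⊢
    have hW : W ≠ 0 := by
      rintro rfl
      apply hK0
      linear_combination -hw
    rw [div_eq_div_iff hW hK0]
    simp only [hv, Sum.elim_inr]
    linear_combination g.eval (4 * j + 1 : ℚ) * -hw
  rw [Finset.sum_congr rfl e1, Finset.sum_congr rfl e2, ← Finset.sum_div, ← Finset.sum_div,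
    Finset.sum_neg_distrib] at key
  field_simp at key
  linear_combination key

/-- The Padé polynomial `A` with `A(x⁴) - x * B(x⁴) = O((x - 1) ^ (2 * k + 1))`. -/
noncomputable def padePoly (k : ℕ) : ℤ[X] :=
  ∑ j ∈ range (k + 1), C (padeCoeff k j) * X ^ j

/-- The Padé polynomial `B` with `A(x⁴) - x * B(x⁴) = O((x - 1) ^ (2 * k + 1))`. -/
noncomputable def padePolyRev (k : ℕ) : ℤ[X] :=
  ∑ j ∈ range (k + 1), C (padeCoeff k (k - j)) * X ^ j

theorem natDegree_padePoly_le (k : ℕ) : (padePoly k).natDegree ≤ k :=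
  Polynomial.natDegree_sum_le_of_forall_le _ _ fun _ hj ↦
    (Polynomial.natDegree_C_mul_X_pow_le _ _).trans (Nat.lt_succ_iff.1 (mem_range.1 hj))

theorem natDegree_padePolyRev_le (k : ℕ) : (padePolyRev k).natDegree ≤ k :=
  Polynomial.natDegree_sum_le_of_forall_le _ _ fun _ hj ↦
    (Polynomial.natDegree_C_mul_X_pow_le _ _).trans (Nat.lt_succ_iff.1 (mem_range.1 hj))

theorem padeCoeff_sum_choose (k : ℕ) {d : ℕ} (hd : d < 2 * k + 1) :
    ∑ j ∈ range (k + 1), padeCoeff k j * ((4 * j).choose d : ℤ) =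
      ∑ j ∈ range (k + 1), padeCoeff k (k - j) * ((4 * j + 1).choose d : ℤ) := by
  have h := padeCoeff_moment k (g := descPochhammer ℚ d) (by rwa [descPochhammer_natDegree])
  have e (n : ℕ) : (descPochhammer ℚ d).eval (n : ℚ) = d.factorial * (n.choose d : ℚ) := by
    rw [descPochhammer_eval_eq_descFactorial, Nat.descFactorial_eq_factorial_mul_choose]
    push_cast
    ring
  have e1 (j : ℕ) := e (4 * j)
  have e2 (j : ℕ) := e (4 * j + 1)
  push_cast at e1 e2
  simp only [e1, e2] at h
  simp only [mul_left_comm _ (d.factorial : ℚ), ← Finset.mul_sum] at h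
  have h' := mul_left_cancel₀ (Nat.cast_ne_zero.2 d.factorial_ne_zero) h
  exact_mod_cast h'

theorem X_sub_one_pow_dvd_pade (k : ℕ) :
    (X - 1 : ℤ[X]) ^ (2 * k + 1) ∣ expand ℤ 4 (padePoly k) - X * expand ℤ 4 (padePolyRev k) := by
  rw [← C_1, Polynomial.X_sub_C_pow_dvd_iff, Polynomial.X_pow_dvd_iff]
  intro d hd
  have h : (expand ℤ 4 (padePoly k) - X * expand ℤ 4 (padePolyRev k)).comp (X + C 1) =
      ∑ j ∈ range (k + 1), C (padeCoeff k j) * (X + 1) ^ (4 * j) -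
      ∑ j ∈ range (k + 1), C (padeCoeff k (k - j)) * (X + 1) ^ (4 * j + 1) := by
    have e (a : ℕ → ℤ) : (expand ℤ 4 (∑ j ∈ range (k + 1), C (a j) * X ^ j)).comp (X + C 1) =
        ∑ j ∈ range (k + 1), C (a j) * (X + 1) ^ (4 * j) := by
      rw [map_sum, Polynomial.sum_comp]
      refine Finset.sum_congr rfl fun j _ ↦ ?_
      rw [map_mul, map_pow, expand_C, expand_X, mul_comp, C_comp, pow_comp, pow_comp, X_comp, C_1,
        pow_mul]
    rw [sub_comp, mul_comp, X_comp, padePoly, padePolyRev, e, e, C_1, Finset.mul_sum]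
    refine congrArg₂ _ rfl (Finset.sum_congr rfl fun j _ ↦ ?_)
    rw [pow_succ]
    ring
  rw [h]
  simp only [coeff_sub, finsetSum_coeff, coeff_C_mul, coeff_X_add_one_pow]
  rw [padeCoeff_sum_choose k hd, sub_self]

theorem succ_mul_quarterChoose_succ (c : ℤ) (k : ℕ) :
    (k + 1) * quarterChoose c (k + 1 : ℕ) (k + 1) =
      2 * (4 * (k + 1) + c) * quarterChoose c k k := by
  have h1 := factorial_mul_quarterChoose c (k + 1 : ℕ) (k + 1)
  have h2 := factorial_mul_quarterChoose c k k
  rw [Finset.prod_range_succ', Nat.factorial_succ] at h1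
  have h3 : ∏ i ∈ range k, (4 * (((k + 1 : ℕ) : ℤ) - (i + 1 : ℕ)) + c) =
      ∏ i ∈ range k, (4 * ((k : ℤ) - i) + c) :=
    Finset.prod_congr rfl fun i _ ↦ by push_cast; ring
  rw [h3] at h1
  have hk : (k.factorial : ℤ) ≠ 0 := by exact_mod_cast k.factorial_ne_zero
  apply mul_left_cancel₀ hk
  push_cast at h1 ⊢
  linear_combination h1 - 2 * (4 * ((k : ℤ) + 1) + c) * h2

theorem quarterChoose_self_ne_zero {c : ℤ} (hc : |c| = 1) (k : ℕ) : quarterChoose c k k ≠ 0 := by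
  intro h
  have h1 := factorial_mul_quarterChoose c k k
  rw [h, mul_zero] at h1
  refine mul_ne_zero (by positivity) (Finset.prod_ne_zero_iff.2 fun i _ ↦ ?_) h1.symm
  rcases abs_eq (zero_le_one) |>.1 hc with rfl | rfl <;> omega

theorem padePoly_det (k : ℕ) :
    ∃ c : ℤ, c ≠ 0 ∧ padePoly k * padePolyRev (k + 1) - padePoly (k + 1) * padePolyRev k =
      C c * (X - 1) ^ (2 * k + 1) := by
  set D := padePoly k * padePolyRev (k + 1) - padePoly (k + 1) * padePolyRev k with hD
  have hcoeff : D.coeff 0 ≠ 0 := by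
    have e1 (k : ℕ) : (padePoly k).coeff 0 = quarterChoose (-1) k k := by
      simp [padePoly, Polynomial.coeff_zero_eq_eval_zero, Polynomial.eval_finsetSum,
        Finset.sum_range_succ', padeCoeff, quarterChoose]
    have e2 (k : ℕ) : (padePolyRev k).coeff 0 = quarterChoose 1 k k := by
      simp [padePolyRev, Polynomial.coeff_zero_eq_eval_zero, Polynomial.eval_finsetSum,
        Finset.sum_range_succ', padeCoeff, quarterChoose]
    rw [hD, coeff_sub, mul_coeff_zero, mul_coeff_zero, e1, e1, e2, e2]
    have h1 := succ_mul_quarterChoose_succ 1 k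
    have h2 := succ_mul_quarterChoose_succ (-1) k
    have h3 := mul_ne_zero (quarterChoose_self_ne_zero (c := 1) (by simp) k)
      (quarterChoose_self_ne_zero (c := -1) (by simp) k)
    intro h0
    refine h3 ((mul_eq_zero.1 ?_).resolve_left (four_ne_zero (α := ℤ)))
    linear_combination (k + 1) * h0 - quarterChoose (-1) k k * h1 + quarterChoose 1 k k * h2
  have hD0 : D ≠ 0 := by rintro h; simp [h] at hcoeff
  have hdvd : (X - 1 : ℤ[X]) ^ (2 * k + 1) ∣ expand ℤ 4 D := by
    have h1 := X_sub_one_pow_dvd_pade k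
    have h2 := (pow_dvd_pow (X - 1 : ℤ[X]) (by omega : 2 * k + 1 ≤ 2 * (k + 1) + 1)).trans
      (X_sub_one_pow_dvd_pade (k + 1))
    have : expand ℤ 4 D = (expand ℤ 4 (padePoly k) - X * expand ℤ 4 (padePolyRev k)) *
        expand ℤ 4 (padePolyRev (k + 1)) -
        (expand ℤ 4 (padePoly (k + 1)) - X * expand ℤ 4 (padePolyRev (k + 1))) *
        expand ℤ 4 (padePolyRev k) := by
      rw [hD, map_sub, map_mul, map_mul]
      ring
    rw [this]
    exact dvd_sub (h1.mul_right _) (h2.mul_right _)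
  obtain ⟨E, hE, hE1⟩ := Polynomial.exists_eq_pow_rootMultiplicity_mul_and_not_dvd D hD0 1
  set m := D.rootMultiplicity 1 with hm
  have hle : 2 * k + 1 ≤ m := by
    by_contra! hlt
    have hfac : expand ℤ 4 D = (X - 1) ^ m * ((X ^ 3 + X ^ 2 + X + 1) ^ m * expand ℤ 4 E) := by
      rw [hE, map_mul, map_pow, map_sub, expand_X, expand_C, C_1, ← mul_assoc, ← mul_pow]
      congr 2
      ring
    rw [hfac] at hdvd
    have h3 := (pow_dvd_pow (X - 1 : ℤ[X]) hlt).trans hdvd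
    rw [pow_succ] at h3
    have hX : (X - 1 : ℤ[X]) ≠ 0 := by rw [← C_1]; exact X_sub_C_ne_zero 1
    have h4 := (mul_dvd_mul_iff_left (pow_ne_zero m hX)).1 h3
    rw [← C_1, Polynomial.dvd_iff_isRoot] at h4
    rw [Polynomial.dvd_iff_isRoot] at hE1
    simp only [IsRoot.def, eval_mul, eval_pow, expand_eval, eval_add, eval_X, one_pow, C_1,
      eval_one] at h4 hE1
    rcases mul_eq_zero.1 h4 with h | h
    · exact absurd h (by positivity)
    · exact hE1 h
  have hdeg : D.natDegree ≤ 2 * k + 1 := by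
    refine (Polynomial.natDegree_sub_le _ _).trans (max_le ?_ ?_)
    · refine Polynomial.natDegree_mul_le.trans ?_
      have := natDegree_padePoly_le k
      have := natDegree_padePolyRev_le (k + 1)
      omega
    · refine Polynomial.natDegree_mul_le.trans ?_
      have := natDegree_padePoly_le (k + 1)
      have := natDegree_padePolyRev_le k
      omega
  have hE0 : E ≠ 0 := by rintro rfl; simp at hE1
  have hnat : D.natDegree = m + E.natDegree := by
    rw [hE, (monic_X_sub_C (1 : ℤ)).pow m |>.natDegree_mul' hE0, natDegree_pow, natDegree_X_sub_C,
      mul_one]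
  obtain ⟨c, rfl⟩ := Polynomial.natDegree_eq_zero.1 (by omega : E.natDegree = 0)
  refine ⟨c, by rintro rfl; simp at hE0, ?_⟩
  rw [hE, show m = 2 * k + 1 by omega, C_1, mul_comm]

theorem quarterChoose_nonneg {c : ℤ} (hc : -1 ≤ c) {k j : ℕ} (h : j ≤ k) :
    0 ≤ quarterChoose c k j := by
  refine Int.ediv_nonneg (mul_nonneg (by positivity) (Finset.prod_nonneg fun i hi ↦ ?_))
    (by positivity)
  have := mem_range.1 hi
  omega

theorem quarterChoose_le {c : ℤ} {k m j : ℕ} (hc : -1 ≤ c) (hcm : 4 * k + c ≤ 4 * m)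
    (h : j ≤ k) : quarterChoose c k j ≤ 8 ^ j * m.choose j := by
  have h1 := factorial_mul_quarterChoose c k j
  have h2 : ∏ i ∈ range j, (4 * ((k : ℤ) - i) + c) ≤ ∏ i ∈ range j, (4 * ((m - i : ℕ) : ℤ)) := by
    refine Finset.prod_le_prod (fun i hi ↦ ?_) (fun i hi ↦ ?_) <;>
    · have := mem_range.1 hi
      omega
  have h3 : ∏ i ∈ range j, (4 * ((m - i : ℕ) : ℤ)) = 4 ^ j * (j.factorial * m.choose j) := by
    rw [Finset.prod_mul_distrib, Finset.prod_const, card_range]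
    congr 1
    have := Nat.descFactorial_eq_prod_range m j
    rw [Nat.descFactorial_eq_factorial_mul_choose] at this
    exact_mod_cast this.symm
  have hj : (0 : ℤ) < j.factorial := by exact_mod_cast j.factorial_pos
  refine le_of_mul_le_mul_left ?_ hj
  rw [h1, show (8 : ℤ) ^ j = 2 ^ j * 4 ^ j by rw [← mul_pow]; norm_num]
  calc _ ≤ (2 : ℤ) ^ j * (4 ^ j * (j.factorial * m.choose j)) := by
        rw [← h3]; gcongr
    _ = _ := by ring

theorem padeCoeff_nonneg {k j : ℕ} (h : j ≤ k) : 0 ≤ padeCoeff k j :=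
  mul_nonneg (quarterChoose_nonneg (by norm_num) h)
    (quarterChoose_nonneg (by norm_num) (Nat.sub_le k j))

theorem sum_padeCoeff_le (k : ℕ) : ∑ j ∈ range (k + 1), padeCoeff k j ≤ 2 * 32 ^ k := by
  have h (j) (hj : j ∈ range (k + 1)) :
      padeCoeff k j ≤ 8 ^ k * (2 ^ (k + 1) * (k.choose j : ℤ)) := by
    have hjk := Nat.lt_succ_iff.1 (mem_range.1 hj)
    have h1 := quarterChoose_le (c := 1) (m := k + 1) (by norm_num) (by push_cast; linarith) hjk
    have h2 := quarterChoose_le (c := -1) (m := k) (by norm_num) (by linarith) (Nat.sub_le k j)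
    have h3 : ((k + 1).choose j : ℤ) ≤ 2 ^ (k + 1) := by exact_mod_cast Nat.choose_le_two_pow _ _
    rw [Nat.choose_symm hjk] at h2
    calc padeCoeff k j ≤ (8 ^ j * (k + 1).choose j) * (8 ^ (k - j) * k.choose j) :=
          mul_le_mul h1 h2 (quarterChoose_nonneg (by norm_num) (Nat.sub_le k j)) (by positivity)
      _ = 8 ^ k * ((k + 1).choose j * (k.choose j : ℤ)) := by
          conv_rhs => rw [← Nat.add_sub_cancel' hjk, pow_add, Nat.add_sub_cancel' hjk]
          ring
      _ ≤ _ := by gcongr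
  refine (Finset.sum_le_sum h).trans ?_
  rw [← Finset.mul_sum, ← Finset.mul_sum, ← Nat.cast_sum, Nat.sum_range_choose]
  push_cast
  rw [show (32 : ℤ) ^ k = 8 ^ k * 2 ^ k * 2 ^ k by rw [← mul_pow, ← mul_pow]; norm_num, pow_succ]
  exact le_of_eq (by ring)

/-- The homogenization of `padePoly k`. -/
def padeForm {R : Type*} [CommRing R] (k : ℕ) (x y : R) : R :=
  ∑ j ∈ range (k + 1), (padeCoeff k j : R) * (x ^ (k - j) * y ^ j)

theorem padeForm_swap {R : Type*} [CommRing R] (k : ℕ) (x y : R) :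
    padeForm k y x = ∑ j ∈ range (k + 1), (padeCoeff k (k - j) : R) * (x ^ (k - j) * y ^ j) := by
  rw [padeForm, ← Finset.sum_range_reflect]
  refine Finset.sum_congr rfl fun j hj ↦ ?_
  have hjk := Nat.lt_succ_iff.1 (mem_range.1 hj)
  rw [Nat.add_sub_cancel, Nat.sub_sub_self hjk, mul_comm (y ^ j)]

theorem map_padeForm {R S : Type*} [CommRing R] [CommRing S] (f : R →+* S) (k : ℕ) (x y : R) :
    f (padeForm k x y) = padeForm k (f x) (f y) := by
  simp [padeForm]

theorem pow_mul_aeval_padePoly {R : Type*} [CommRing R] (k : ℕ) (x t : R) :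
    x ^ k * aeval t (padePoly k) = padeForm k x (x * t) := by
  rw [padePoly, padeForm, map_sum, Finset.mul_sum]
  refine Finset.sum_congr rfl fun j hj ↦ ?_
  rw [← Nat.sub_add_cancel (Nat.lt_succ_iff.1 (mem_range.1 hj)), pow_add, Nat.add_sub_cancel]
  simp
  ring

theorem pow_mul_aeval_padePolyRev {R : Type*} [CommRing R] (k : ℕ) (x t : R) :
    x ^ k * aeval t (padePolyRev k) = padeForm k (x * t) x := by
  rw [padePolyRev, padeForm_swap, map_sum, Finset.mul_sum]
  refine Finset.sum_congr rfl fun j hj ↦ ?_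
  have hjk := Nat.lt_succ_iff.1 (mem_range.1 hj)
  rw [show x ^ k = x ^ (k - j) * x ^ j by rw [← pow_add, Nat.sub_add_cancel hjk]]
  simp
  ring

theorem dvd_padeForm_sub_padeForm {R : Type*} [CommRing R] {z a b : R} (k : ℕ) (x : R)
    (h : z ∣ a - b) : z ∣ padeForm k x a - padeForm k x b := by
  rw [padeForm, padeForm, ← Finset.sum_sub_distrib]
  refine Finset.dvd_sum fun j _ ↦ ?_
  rw [← mul_sub, ← mul_sub]
  exact ((h.trans (sub_dvd_pow_sub_pow _ _ _)).mul_left _).mul_left _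

theorem dvd_padeForm_sub_padeForm_left {R : Type*} [CommRing R] {z a b : R} (k : ℕ) (x : R)
    (h : z ∣ a - b) : z ∣ padeForm k a x - padeForm k b x := by
  rw [padeForm, padeForm, ← Finset.sum_sub_distrib]
  refine Finset.dvd_sum fun j _ ↦ ?_
  rw [← mul_sub, ← sub_mul]
  exact ((h.trans (sub_dvd_pow_sub_pow _ _ _)).mul_right _).mul_left _

theorem pow_dvd_padeForm_sub {R : Type*} [CommRing R] {k : ℕ} {x y w b : R} (hb : w ∣ b - 1)
    (h : w ^ (2 * k + 1) ∣ x * b ^ 4 - y) :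
    w ^ (2 * k + 1) ∣ padeForm k x y - padeForm k y x * b := by
  have h1 := map_dvd (aeval b) (X_sub_one_pow_dvd_pade k)
  simp only [map_pow, map_sub, map_mul, aeval_X, map_one, expand_aeval] at h1
  have h2 := ((pow_dvd_pow_of_dvd hb _).trans h1).mul_left (x ^ k)
  rw [mul_sub, pow_mul_aeval_padePoly, mul_left_comm, pow_mul_aeval_padePolyRev] at h2
  have h3 := dvd_padeForm_sub_padeForm k x h
  have h4 := (dvd_padeForm_sub_padeForm_left k x h).mul_left b
  have := dvd_add (dvd_sub h2 h3) h4
  convert this using 1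
  ring

theorem padeForm_mul_sub_ne_zero {K : Type*} [Field K] [CharZero K] (k : ℕ) {x y : K} (hx : x ≠ 0)
    (hxy : x ≠ y) :
    padeForm k x y * padeForm (k + 1) y x - padeForm (k + 1) x y * padeForm k y x ≠ 0 := by
  obtain ⟨t, rfl⟩ : ∃ t, y = x * t := ⟨y / x, by field_simp⟩
  obtain ⟨c, hc, h⟩ := padePoly_det k
  have h1 := congrArg (aeval t) h
  simp only [map_pow, map_sub, map_mul, aeval_X, map_one, aeval_C] at h1
  simp only [← pow_mul_aeval_padePoly, ← pow_mul_aeval_padePolyRev]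
  have h2 : x ^ (2 * k + 1) * (c * (t - 1) ^ (2 * k + 1)) ≠ 0 := by
    have : t - 1 ≠ 0 := by
      rintro h0
      exact hxy (by rw [sub_eq_zero.1 h0, mul_one])
    have : (c : K) ≠ 0 := Int.cast_ne_zero.2 hc
    positivity
  convert h2 using 1
  rw [eq_intCast] at h1
  rw [← h1]
  ring

theorem norm_padeForm_le {k : ℕ} {x y : ℂ} {M : ℝ} (hx : ‖x‖ ≤ M) (hy : ‖y‖ ≤ M) :
    ‖padeForm k x y‖ ≤ 2 * 32 ^ k * M ^ k := by
  have hM := (norm_nonneg x).trans hx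
  have h : ((∑ j ∈ range (k + 1), padeCoeff k j : ℤ) : ℝ) ≤ 2 * 32 ^ k := by
    exact_mod_cast sum_padeCoeff_le k
  refine (norm_sum_le _ _).trans ?_
  calc _ ≤ ∑ j ∈ range (k + 1), (padeCoeff k j : ℝ) * M ^ k := by
        refine Finset.sum_le_sum fun j hj ↦ ?_
        have hjk := Nat.lt_succ_iff.1 (mem_range.1 hj)
        have h0 : (0 : ℝ) ≤ padeCoeff k j := by exact_mod_cast padeCoeff_nonneg hjk
        rw [norm_mul, norm_mul, norm_pow, norm_pow, Complex.norm_intCast, abs_of_nonneg h0,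
          show M ^ k = M ^ (k - j) * M ^ j by rw [← pow_add, Nat.sub_add_cancel hjk]]
        gcongr
    _ ≤ _ := by
        rw [← Finset.sum_mul]
        push_cast at h
        gcongr

end Pade

theorem zsqrtd_exists_ringHom_complex {d : ℤ} (hd : d < 0) :
    ∃ f : ℤ√d →+* ℂ, ∀ z, ‖f z‖ ^ 2 = z.norm := by
  have hd' : (0 : ℝ) ≤ -d := by exact_mod_cast (neg_pos.2 hd).le
  refine ⟨Zsqrtd.lift ⟨√(-d : ℝ) * Complex.I, ?_⟩, fun z ↦ ?_⟩
  · have : ((√(-d : ℝ) : ℝ) : ℂ) * (√(-d : ℝ) : ℝ) = -d := by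
      rw [← Complex.ofReal_mul, Real.mul_self_sqrt hd']
      push_cast
      rfl
    linear_combination -this + ((√(-d : ℝ) : ℝ) : ℂ) * (√(-d : ℝ) : ℝ) * Complex.I_sq
  · rw [← Complex.normSq_eq_norm_sq, Complex.normSq_apply]
    have := Real.mul_self_sqrt hd'
    simp [Zsqrtd.norm]
    linear_combination (z.im : ℝ) ^ 2 * this

/-- Gap principle: a power of an imaginary quadratic integer of large norm and comparatively small
trace is not too close to its trace. -/
theorem zsqrtd_norm_le_of_pow_add_star_pow_eq {d : ℤ} (hd : d < 0) {x b : ℤ√d} {l : ℕ}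
    (hl : 1 ≤ l) (hx : x ^ (4 * l + 1) + star x ^ (4 * l + 1) = x + star x)
    (hb : b = x ^ l ∨ b = -x ^ l) (hdvd : star x ∣ b - 1) (hre : (2 * x.re) ^ 2 ≤ x.norm) :
    x.norm ≤ 2 ^ 24 := by
  obtain ⟨f, hf⟩ := zsqrtd_exists_ringHom_complex hd
  set M := ‖f x‖ with hM
  have hM0 : 0 ≤ M := norm_nonneg _
  rcases le_or_gt x.norm 1 with h1 | h1
  · exact h1.trans (by norm_num)
  have hM1 : 1 < M := by
    have : (1 : ℝ) < M ^ 2 := by rw [hf]; exact_mod_cast h1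
    nlinarith
  have hstar : ‖f (star x)‖ = M := by
    have := hf (star x)
    rw [Zsqrtd.norm_conj, ← hf] at this
    exact (pow_left_inj₀ (norm_nonneg _) hM0 two_ne_zero).1 this
  have hy : ‖f (x + star x)‖ ≤ M := by
    refine (pow_le_pow_iff_left₀ (norm_nonneg _) hM0 two_ne_zero).1 ?_
    rw [hf, hf]
    have : (x + star x).norm = (2 * x.re) ^ 2 := by
      simp [Zsqrtd.norm]
      ring
    exact_mod_cast this.trans_le hre
  have hbM : ‖f b‖ = M ^ l := by
    rcases hb with rfl | rfl <;> simp [hM]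
  have hb4 : b ^ 4 = x ^ (4 * l) := by
    rcases hb with rfl | rfl
    · rw [← pow_mul, mul_comm]
    · rw [neg_pow, ← pow_mul, mul_comm l]; norm_num
  have gap {k : ℕ} (hk : 2 * l ≤ k + 1) (hk' : k ≤ 2 * l)
      (hne : padeForm k x (x + star x) - padeForm k (x + star x) x * b ≠ 0) :
      x.norm ≤ 2 ^ 24 := by
    obtain ⟨q, hq⟩ := pow_dvd_padeForm_sub (k := k) (x := x) (y := x + star x) hdvd (by
      rw [hb4, ← pow_succ', ← hx]
      exact ⟨-star x ^ (4 * l - 2 * k), by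
        rw [mul_neg, ← pow_add, show 2 * k + 1 + (4 * l - 2 * k) = 4 * l + 1 by omega]; ring⟩)
    have hq1 : 1 ≤ ‖f q‖ := by
      have hq0 : q.norm ≠ 0 := by
        rw [Ne, Zsqrtd.norm_eq_zero_iff hd]
        rintro rfl
        exact hne (by rw [hq, mul_zero])
      have : (1 : ℝ) ≤ ‖f q‖ ^ 2 := by
        rw [hf]
        exact_mod_cast lt_of_le_of_ne (Zsqrtd.norm_nonneg hd.le q) hq0.symm
      have := norm_nonneg (f q)
      nlinarith
    have h2 := congrArg (fun z ↦ ‖f z‖) hq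
    simp only [map_sub, map_mul, map_pow, norm_mul, norm_pow, hstar, map_padeForm] at h2
    have h3 : M ^ (2 * k + 1) ≤ 4 * 32 ^ k * M ^ (k + l) := calc
      M ^ (2 * k + 1) ≤ M ^ (2 * k + 1) * ‖f q‖ := le_mul_of_one_le_right (by positivity) hq1
      _ ≤ 2 * 32 ^ k * M ^ k + 2 * 32 ^ k * M ^ k * M ^ l := by
        rw [← h2]
        refine (norm_sub_le _ _).trans ?_
        rw [norm_mul, hbM]
        gcongr
        · exact norm_padeForm_le hM.ge hy
        · exact norm_padeForm_le hy hM.ge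
      _ ≤ 2 * 32 ^ k * M ^ k * M ^ l + 2 * 32 ^ k * M ^ k * M ^ l := by
        exact add_le_add_left (le_mul_of_one_le_right (by positivity) (one_le_pow₀ hM1.le)) _
      _ = _ := by ring
    have h4 : M ^ l ≤ 4096 ^ l := by
      have : M ^ (k + l) * M ^ l ≤ M ^ (k + l) * 4096 ^ l := calc
        M ^ (k + l) * M ^ l ≤ M ^ (2 * k + 1) := by
          rw [← pow_add]
          exact pow_le_pow_right₀ hM1.le (by omega)
        _ ≤ _ := h3
        _ ≤ 4 ^ l * 32 ^ (2 * l) * M ^ (k + l) := by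
          gcongr
          · exact le_self_pow₀ (by norm_num) (by omega)
          · norm_num
        _ = _ := by
          rw [pow_mul, ← mul_pow]
          norm_num [mul_comm]
      exact le_of_mul_le_mul_left this (by positivity)
    have h5 := (pow_le_pow_iff_left₀ hM0 (by norm_num) (by omega)).1 h4
    have h6 : M ^ 2 ≤ 4096 ^ 2 := by gcongr
    rw [hf] at h6
    norm_num at h6 ⊢
    exact_mod_cast h6
  obtain ⟨k, hk⟩ : ∃ k, k + 1 = 2 * l := ⟨2 * l - 1, by omega⟩
  by_cases h0 : padeForm k x (x + star x) - padeForm k (x + star x) x * b = 0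
  · refine gap (k := k + 1) (by omega) (by omega) fun h0' ↦ ?_
    have hfx : f x ≠ 0 := norm_pos_iff.1 (zero_lt_one.trans hM1)
    have hfy : f x ≠ f (x + star x) := by
      rw [map_add, Ne, left_eq_add, ← norm_eq_zero, hstar]
      exact (zero_lt_one.trans hM1).ne'
    refine padeForm_mul_sub_ne_zero k hfx hfy ?_
    rw [← map_padeForm, ← map_padeForm, ← map_padeForm, ← map_padeForm, ← map_mul, ← map_mul,
      ← map_sub, ← map_zero f]
    congr 1
    linear_combination padeForm (k + 1) (x + star x) x * h0 - padeForm k (x + star x) x * h0'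
  · exact gap (by omega) (by omega) h0

theorem mul_dvd_add_pow_sub_add_pow {R : Type*} [CommRing R] (x y : R) {n : ℕ} (hn : n ≠ 0) :
    x * y ∣ (x + y) ^ n - (x ^ n + y ^ n) := by
  induction n with
  | zero => contradiction
  | succ n ih =>
    rcases eq_or_ne n 0 with rfl | hn'
    · simp
    · obtain ⟨k, rfl⟩ : ∃ k, n = k + 1 := Nat.exists_eq_succ_of_ne_zero hn'
      obtain ⟨q, hq⟩ := ih hn'
      exact ⟨(x + y) * q + y ^ k + x ^ k, by
        rw [pow_succ (x + y), sub_eq_iff_eq_add.1 hq]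
        ring⟩

theorem Nat.Prime.not_dvd_sq_add_one {p : ℕ} (hp : p.Prime) (hmod : p % 4 = 3) (a : ℤ) :
    ¬ (p : ℤ) ∣ a ^ 2 + 1 := by
  have := Fact.mk hp
  intro h
  rw [← ZMod.intCast_zmod_eq_zero_iff_dvd] at h
  push_cast at h
  exact ZMod.mod_four_ne_three_of_sq_eq_neg_one (eq_neg_of_add_eq_zero_left h) hmod

theorem le_of_two_pow_modEq_one {p : ℕ} (hmod : p % 4 = 3)
    (hw : 2 ^ (p - 1) ≡ 1 [MOD p ^ 2]) : 257 ≤ p := by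
  have h : ∀ p < 257, p % 4 = 3 → 2 ^ (p - 1) % p ^ 2 ≠ 1 % p ^ 2 := by decide +kernel
  by_contra! hlt
  exact h p hlt hmod hw

theorem Int.prime_pow_dvd_sub_one_or_add_one {p : ℕ} (hp : p.Prime) (hmod : p % 4 = 3) {m : ℕ}
    {g : ℤ} (h : (p : ℤ) ^ m ∣ g ^ 4 - 1) : (p : ℤ) ^ m ∣ g - 1 ∨ (p : ℤ) ^ m ∣ g + 1 := by
  have hp' := Nat.prime_iff_prime_int.1 hp
  have hcop {a b : ℤ} (hb : ¬ (p : ℤ) ∣ b) (hab : (p : ℤ) ^ m ∣ a * b) : (p : ℤ) ^ m ∣ a :=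
    (((hp'.coprime_iff_not_dvd).2 hb).pow_left).dvd_of_dvd_mul_right hab
  have h1 : (p : ℤ) ^ m ∣ (g - 1) * (g + 1) :=
    hcop (hp.not_dvd_sq_add_one hmod g) (by convert h using 1; ring)
  by_cases h2 : (p : ℤ) ∣ g + 1
  · refine Or.inr (hcop (b := g - 1) (fun h3 ↦ ?_) (by rwa [mul_comm]))
    have h4 := dvd_sub h2 h3
    rw [show g + 1 - (g - 1) = (2 : ℕ) by push_cast; ring, Int.natCast_dvd_natCast] at h4
    have := Nat.le_of_dvd two_pos h4
    omega
  · exact Or.inl (hcop h2 h1)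

theorem zsqrtd_add_star {d : ℤ} (x : ℤ√d) : x + star x = ((2 * x.re : ℤ) : ℤ√d) := by
  ext
  · simp
    ring
  · simp

/-- An odd exponent `r` with `x ^ r` and `x` of the same trace is `1` modulo `4`, provided that the
norm of `x` is `3` modulo `4` and its real part is odd. -/
theorem zsqrtd_mod_four_eq_one {d : ℤ} {x : ℤ√d} {r : ℕ} (hr : Odd r) (hre : Odd x.re)
    (hnorm : 4 ∣ x.norm + 1) (hx : x ^ r + star x ^ r = x + star x) : r % 4 = 1 := by
  by_contra hne
  obtain ⟨t, rfl⟩ : ∃ t, r = 4 * t + 3 := ⟨r / 4, by have := Nat.odd_iff.1 hr; omega⟩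
  have hsq : x ^ 2 = ((2 * x.re : ℤ) : ℤ√d) * x - (x.norm : ℤ√d) := by
    rw [Zsqrtd.norm_eq_mul_conj, ← zsqrtd_add_star]
    ring
  obtain ⟨w, hw⟩ := hnorm
  have hw' : x.norm = 4 * w - 1 := by linarith
  have h4 : ((4 : ℤ) : ℤ√d) ∣ x ^ 4 - 1 := by
    refine ⟨(x.re : ℤ√d) ^ 2 * x ^ 2 - (x.re : ℤ√d) * x * (x.norm : ℤ√d) + 4 * w ^ 2 - 2 * w, ?_⟩
    have hsq' := hsq
    rw [hw'] at hsq' ⊢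
    push_cast at hsq' ⊢
    linear_combination (x ^ 2 + 2 * (x.re : ℤ√d) * x - (4 * w - 1)) * hsq'
  have h5 : ((4 : ℤ) : ℤ√d) ∣ x ^ (4 * t + 3) - x ^ 3 := by
    have := (h4.trans (by simpa using sub_dvd_pow_sub_pow (x ^ 4) 1 t)).mul_right (x ^ 3)
    convert this using 1
    rw [pow_add, pow_mul]
    ring
  have h6 := ((Zsqrtd.intCast_dvd _ _).1 h5).1
  have hcube : x ^ 3 = ((4 * x.re ^ 2 - x.norm : ℤ) : ℤ√d) * x -
      ((2 * x.re * x.norm : ℤ) : ℤ√d) := by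
    rw [show x ^ 3 = x * x ^ 2 by ring, hsq, mul_sub, mul_left_comm, ← sq, hsq]
    push_cast
    ring
  have h7 : (x ^ (4 * t + 3)).re = x.re := by
    rw [← star_pow, zsqrtd_add_star, zsqrtd_add_star] at hx
    have := congrArg Zsqrtd.re hx
    simp only [Zsqrtd.re_intCast] at this
    linarith
  rw [Zsqrtd.re_sub, h7, hcube, Zsqrtd.re_sub, Zsqrtd.re_intCast, Zsqrtd.re_smul, hw'] at h6
  obtain ⟨a, ha⟩ := hre
  obtain ⟨b, hb⟩ := h6
  have h8 : 2 * x.re = 4 * (-x.re ^ 3 + 3 * w * x.re - b) := by linear_combination -hb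
  generalize -x.re ^ 3 + 3 * w * x.re - b = e at h8
  omega

/-- An imaginary quadratic integer whose norm is an odd power `p ^ m` of a large prime
`p ≡ 3 (mod 4)`, and whose real part is odd, small and prime to `p`, has no `r`-th power of the same
trace up to sign, for odd `r > 1`. -/
theorem zsqrtd_pow_add_star_pow_ne {d : ℤ} (hd : d < 0) {p m r : ℕ} (hp : p.Prime)
    (hmod : p % 4 = 3) (hm : Odd m) (hpm : 2 ^ 24 < (p : ℤ) ^ m) (hr : Odd r) (hr1 : r ≠ 1)
    {x : ℤ√d} (hnorm : x.norm = (p : ℤ) ^ m) (hodd : Odd x.re) (hcop : ¬ (p : ℤ) ∣ x.re)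
    (hre : (2 * x.re) ^ 2 ≤ x.norm) {e : ℤ} (he : e = 1 ∨ e = -1) :
    x ^ r + star x ^ r ≠ e * (x + star x) := by
  intro hx
  have hp' := Nat.prime_iff_prime_int.1 hp
  have hm0 : m ≠ 0 := hm.pos.ne'
  have hcop2 : ¬ (p : ℤ) ∣ 2 * x.re := fun h ↦ by
    rcases hp'.dvd_or_dvd h with h | h
    · have := Nat.le_of_dvd two_pos (Int.natCast_dvd_natCast.1 h)
      omega
    · exact hcop h
  have htrace : (p : ℤ) ^ m ∣ (2 * x.re) ^ (r - 1) - e := by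
    have h := mul_dvd_add_pow_sub_add_pow x (star x) hr.pos.ne'
    rw [hx, ← Zsqrtd.norm_eq_mul_conj, hnorm, zsqrtd_add_star] at h
    norm_cast at h
    push_cast at h
    refine ((hp'.coprime_iff_not_dvd).2 hcop2).pow_left.dvd_of_dvd_mul_right (z := 2 * x.re) ?_
    rwa [sub_mul, ← pow_succ, Nat.sub_add_cancel hr.pos]
  obtain rfl : e = 1 := by
    refine he.resolve_right ?_
    rintro rfl
    obtain ⟨h, rfl⟩ := hr
    refine hp.not_dvd_sq_add_one hmod ((2 * x.re) ^ h) ?_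
    have := (dvd_pow_self (p : ℤ) hm0).trans htrace
    rw [Nat.add_sub_cancel, sub_neg_eq_add, mul_comm 2 h, pow_mul] at this
    exact this
  rw [Int.cast_one, one_mul] at hx
  have hnorm4 : 4 ∣ x.norm + 1 := by
    have h1 := hm.add_dvd_pow_add_pow (p : ℤ) 1
    rw [one_pow, ← hnorm] at h1
    exact Dvd.dvd.trans (by omega) h1
  have hr4 := zsqrtd_mod_four_eq_one hr hodd hnorm4 hx
  obtain ⟨l, rfl⟩ : ∃ l, r = 4 * l + 1 := ⟨r / 4, by omega⟩
  have hl : 1 ≤ l := by omega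
  have hxl : star x ∣ x ^ l - (((2 * x.re) ^ l : ℤ) : ℤ√d) := by
    rw [Int.cast_pow, ← zsqrtd_add_star]
    exact Dvd.dvd.trans ⟨-1, by ring⟩ (sub_dvd_pow_sub_pow x (x + star x) l)
  have hcast {z : ℤ} (h : (p : ℤ) ^ m ∣ z) : star x ∣ (z : ℤ√d) := by
    rw [← hnorm, ← Zsqrtd.intCast_dvd_intCast (d := d), Zsqrtd.norm_eq_mul_conj] at h
    exact (Dvd.intro_left _ rfl).trans h
  rw [Nat.add_sub_cancel, mul_comm 4 l, pow_mul] at htrace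
  have hle : x.norm ≤ 2 ^ 24 := by
    rcases Int.prime_pow_dvd_sub_one_or_add_one hp hmod htrace with h | h
    · refine zsqrtd_norm_le_of_pow_add_star_pow_eq hd hl hx (Or.inl rfl) ?_ hre
      have := dvd_add hxl (hcast h)
      push_cast at this
      simpa using this
    · refine zsqrtd_norm_le_of_pow_add_star_pow_eq hd hl hx (Or.inr rfl) ?_ hre
      have := dvd_neg.2 (dvd_add hxl (hcast h))
      push_cast at this
      convert this using 1
      ring
  exact absurd hnorm (hle.trans_lt hpm).ne

theorem pow_sub_one_modEq_one_of_two_pow {p q r : ℕ} (hp : Odd p)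
    (hw : 2 ^ (p - 1) ≡ 1 [MOD p ^ 2]) {a e : ℤ} (ha : a = 1 ∨ a = -1) (he : e = 1 ∨ e = -1)
    (h : (p : ℤ) ^ 2 ∣ (2 * a) ^ r - 2 * (e * q)) : q ^ (p - 1) ≡ 1 [MOD p ^ 2] := by
  have heven : Even (p - 1) := hp.tsub_odd odd_one
  have hone {b : ℤ} (hb : b = 1 ∨ b = -1) : b ^ (p - 1) = 1 := by
    rcases hb with rfl | rfl
    · exact one_pow _
    · exact heven.neg_one_pow
  have h1 := (Int.modEq_iff_dvd.2 h).pow (p - 1)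
  rw [mul_pow, mul_pow, hone he, one_mul, ← pow_mul, mul_comm r, pow_mul, mul_pow, hone ha,
    mul_one] at h1
  have hw' : (2 : ℤ) ^ (p - 1) ≡ 1 [ZMOD (p : ℤ) ^ 2] := by
    exact_mod_cast (Int.natCast_modEq_iff.2 hw)
  have h2 := (hw'.symm.mul_right (q ^ (p - 1) : ℤ)).trans (h1.trans (hw'.pow r))
  rw [one_mul, one_pow] at h2
  exact Int.natCast_modEq_iff.1 (by exact_mod_cast h2)

/-- Let `p` be a prime with `p ≡ 3 (mod 4)` and `2^(p−1) ≡ 1 (mod p^2)`, let `q1` be a prime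
factor of `p − 2` such that `q1^(p−1) ≢ 1 (mod p^2)`, let `n` be an odd composite number,
let `d0` be the squarefree part of `q1^2 − p^n` and `c` the positive integer with
`q1^2 − p^n = c^2·d0`. Then for any prime `p4` dividing `n`, there are no integers `u`, `v`
and sign `ε ∈ {1, −1}` such that `(u + v·√d0)^p4 = ε·(q1 + c·√d0)` in `ℤ[√d0]`. -/
theorem stmt_15 (p : ℕ) (hp : p.Prime) (hmod : p % 4 = 3)
    (hw : 2 ^ (p - 1) ≡ 1 [MOD p ^ 2])
    (q1 : ℕ) (hq1 : q1.Prime) (hq1dvd : q1 ∣ p - 2)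
    (hq1nw : ¬ (q1 ^ (p - 1) ≡ 1 [MOD p ^ 2]))
    (n : ℕ) (hodd : Odd n) (hcomp : 1 < n ∧ ¬ n.Prime)
    (d0 : ℤ) (hd0 : Squarefree d0) (c : ℤ) (hc : 0 < c)
    (hfac : (q1 : ℤ) ^ 2 - (p : ℤ) ^ n = c ^ 2 * d0)
    (p4 : ℕ) (hp4 : p4.Prime) (hdvd : p4 ∣ n) :
    ¬ ∃ (u v ε : ℤ), (ε = 1 ∨ ε = -1) ∧
      (⟨u, v⟩ : ℤ√d0) ^ p4 = (ε : ℤ√d0) * ⟨(q1 : ℤ), c⟩ := by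
  rintro ⟨u, v, ε, hε, hx⟩
  have hp257 := le_of_two_pow_modEq_one hmod hw
  have hqp : q1 < p := (Nat.le_of_dvd (by omega) hq1dvd).trans_lt (by omega)
  have hpodd : Odd p := Nat.odd_iff.2 (by omega)
  have hqodd : Odd q1 := (Nat.Odd.sub_even (by omega) hpodd even_two).of_dvd_nat hq1dvd
  obtain ⟨m, rfl⟩ := hdvd
  obtain ⟨hr, hm⟩ := Nat.odd_mul.1 hodd
  have hm3 : 3 ≤ m := by
    have : m ≠ 1 := by
      rintro rfl
      exact hcomp.2 (by rwa [mul_one])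
    have := Nat.odd_iff.1 hm
    omega
  have hpq : 4 * (q1 : ℤ) ^ 2 ≤ (p : ℤ) ^ m ∧ (2 : ℤ) ^ 24 < (p : ℤ) ^ m := by
    have h1 : (p : ℤ) ^ 3 ≤ (p : ℤ) ^ m := pow_le_pow_right₀ (by omega) hm3
    have h2 : (q1 : ℤ) ^ 2 ≤ (p : ℤ) ^ 2 := by gcongr
    have h3 : (257 : ℤ) ^ 3 ≤ (p : ℤ) ^ 3 := by gcongr; exact_mod_cast hp257
    have h4 : (257 : ℤ) ≤ p := by exact_mod_cast hp257
    exact ⟨by nlinarith, by linarith⟩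
  have hd : d0 < 0 := by
    have h1 : (p : ℤ) ^ m ≤ (p : ℤ) ^ (p4 * m) :=
      pow_le_pow_right₀ (by omega) (Nat.le_mul_of_pos_left m hr.pos)
    by_contra! h
    have : 0 ≤ c ^ 2 * d0 := by positivity
    nlinarith [hq1.pos]
  have hnorm : (⟨u, v⟩ : ℤ√d0).norm = (p : ℤ) ^ m := by
    refine hr.strictMono_pow.injective ?_
    have h : (⟨u, v⟩ : ℤ√d0).norm ^ p4 = ε * ε * (⟨q1, c⟩ : ℤ√d0).norm := by
      rw [← Zsqrtd.norm_intCast (d := d0), ← Zsqrtd.norm_mul, ← hx]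
      exact (map_pow Zsqrtd.normMonoidHom _ _).symm
    have hεε : ε * ε = 1 := by rcases hε with rfl | rfl <;> norm_num
    rw [h, hεε, ← pow_mul, mul_comm m, Zsqrtd.norm_def]
    linear_combination hfac
  set x : ℤ√d0 := ⟨u, v⟩ with hxdef
  have hsum : x ^ p4 + star x ^ p4 = ((2 * (ε * q1) : ℤ) : ℤ√d0) := by
    rw [← star_pow, zsqrtd_add_star, hx, Zsqrtd.re_smul]
  have hu : u ∣ q1 := by
    have h := hr.add_dvd_pow_add_pow x (star x)
    rw [hsum, zsqrtd_add_star, Zsqrtd.intCast_dvd_intCast] at h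
    have h1 := (mul_dvd_mul_iff_left two_ne_zero).1 h
    rcases hε with rfl | rfl
    · simpa using h1
    · simpa using h1
  have hcases : (u = 1 ∨ u = -1) ∨ (u = q1 ∨ u = -q1) := by
    rcases (Nat.dvd_prime hq1).1 (Int.natAbs_dvd_natAbs.2 hu) with h | h
    · exact Or.inl (Int.natAbs_eq_iff.1 h)
    · exact Or.inr (Int.natAbs_eq_iff.1 h)
  rcases hcases with hu1 | huq
  · refine hq1nw (pow_sub_one_modEq_one_of_two_pow hpodd hw hu1 hε (r := p4) ?_)
    have h := mul_dvd_add_pow_sub_add_pow x (star x) hr.pos.ne'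
    rw [hsum, zsqrtd_add_star, ← Zsqrtd.norm_eq_mul_conj, hnorm, ← Int.cast_pow, ← Int.cast_sub,
      Zsqrtd.intCast_dvd_intCast] at h
    exact (pow_dvd_pow _ (by omega)).trans h
  · have hndvd : ¬ (p : ℤ) ∣ q1 := fun h ↦
      (Nat.le_of_dvd hq1.pos (Int.natCast_dvd_natCast.1 h)).not_gt hqp
    have hqodd' : Odd (q1 : ℤ) := by exact_mod_cast hqodd
    obtain ⟨e, he, hue⟩ : ∃ e : ℤ, (e = 1 ∨ e = -1) ∧ ε * q1 = e * u := by
      rcases huq with rfl | rfl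
      · exact ⟨ε, hε, rfl⟩
      · exact ⟨-ε, by rcases hε with rfl | rfl <;> simp, by ring⟩
    refine zsqrtd_pow_add_star_pow_ne hd hp hmod hm hpq.2 hr hp4.one_lt.ne' hnorm ?_ ?_ ?_ he
      (x := x) ?_
    · rcases huq with h | h <;> simpa [hxdef, h] using hqodd'
    · rcases huq with h | h <;> simpa [hxdef, h] using hndvd
    · rw [hnorm]
      refine le_trans (le_of_eq ?_) hpq.1
      rcases huq with h | h <;> simp only [hxdef, h] <;> ring
    · rw [hsum, zsqrtd_add_star, hue]
      push_cast
      ring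
end
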